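/- arXiv:1708.00832 — 3 statements merged into one kernel-verified Lean document; each statement's English description precedes it below -/
import Mathlib

section
/- Let T = {1342, 2143, 2314} (patterns of length 4). Then the generating function for T-avoiders satisfies, as formal power series over ℚ, (1 - 6x + 11x^2 - 7x^3)·F_T(x) = (1-2x)·(1-3x+x^2); that is, F_T(x) = (1-2x)(1-3x+x^2)/(1-6x+11x^2-7x^3). -/
open PowerSeries

/-- A permutation `π` of `{0,…,n-1}` contains the pattern `σ` (of length `k`) if there is an
order-embedding of positions on which the values of `π` appear in the same relative order as
the values of `σ`. -/
def ContainsPattern {n k : ℕ} (π : Equiv.Perm (Fin n)) (σ : Fin k → Fin k) : Prop :=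
  ∃ f : Fin k ↪o Fin n, ∀ a b : Fin k, σ a < σ b ↔ π (f a) < π (f b)

/-- The number of permutations of length `n` avoiding every pattern in `T`. -/
noncomputable def avoiderCount (T : Set (Fin 4 → Fin 4)) (n : ℕ) : ℕ :=
  Nat.card {π : Equiv.Perm (Fin n) // ∀ σ ∈ T, ¬ ContainsPattern π σ}

/-- The generating function `F_T(x) = ∑_n |S_n(T)| xⁿ` over `ℚ`. -/
noncomputable def avoiderGF (T : Set (Fin 4 → Fin 4)) : PowerSeries ℚ :=
  PowerSeries.mk fun n => (avoiderCount T n : ℚ)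

/-- The generating function of the Catalan numbers over `ℚ`. -/
noncomputable def catalanGF : PowerSeries ℚ :=
  PowerSeries.mk fun n => (catalan n : ℚ)


section Helpers

open List
set_option linter.unusedSimpArgs false
theorem sub2 {a b : ℕ} {l m : List ℕ} : [a,b] <+ l ++ m ↔ [a,b] <+ m ∨ (a ∈ l ∧ b ∈ m) ∨ [a,b] <+ l := by
  induction l with
  | nil => simp
  | cons x l ih => simp only [List.cons_append, List.sublist_cons_iff, ih]; simp; grind
theorem sub3 {a b c : ℕ} {l m : List ℕ} : [a,b,c] <+ l ++ m ↔ [a,b,c] <+ m ∨ (a ∈ l ∧ [b,c] <+ m) ∨ ([a,b] <+ l ∧ c ∈ m) ∨ [a,b,c] <+ l := by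
  induction l with
  | nil => simp
  | cons x l ih => 
    simp only [List.cons_append, List.sublist_cons_iff, ih]; simp [sub2]; grind
theorem sub4 {a b c d : ℕ} {l m : List ℕ} : [a,b,c,d] <+ l ++ m ↔ [a,b,c,d] <+ m ∨ (a ∈ l ∧ [b,c,d] <+ m) ∨ ([a,b] <+ l ∧ [c,d] <+ m) ∨ ([a,b,c] <+ l ∧ d ∈ m) ∨ [a,b,c,d] <+ l := by
  induction l with
  | nil => simp
  | cons x l ih => 
    simp only [List.cons_append, List.sublist_cons_iff, ih]; simp [sub3]; grind
theorem cub2 {a b x : ℕ} {l : List ℕ} : [a,b] <+ x :: l ↔ [a,b] <+ l ∨ (a = x ∧ b ∈ l) := by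
  simp [List.sublist_cons_iff]
theorem cub3 {a b c x : ℕ} {l : List ℕ} : [a,b,c] <+ x :: l ↔ [a,b,c] <+ l ∨ (a = x ∧ [b,c] <+ l) := by
  simp [List.sublist_cons_iff]
theorem cub4 {a b c d x : ℕ} {l : List ℕ} : [a,b,c,d] <+ x :: l ↔ [a,b,c,d] <+ l ∨ (a = x ∧ [b,c,d] <+ l) := by
  simp [List.sublist_cons_iff]

theorem mem2 {a b : ℕ} {l : List ℕ} (h : [a,b] <+ l) : a ∈ l ∧ b ∈ l := by
  have := h.subset; simp at this; exact this
theorem mem3 {a b c : ℕ} {l : List ℕ} (h : [a,b,c] <+ l) : [a,b] <+ l ∧ [a,c] <+ l ∧ [b,c] <+ l := by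
  refine ⟨Sublist.trans ?_ h, Sublist.trans ?_ h, Sublist.trans ?_ h⟩ <;> simp [List.sublist_cons_iff]
theorem mem4 {a b c d : ℕ} {l : List ℕ} (h : [a,b,c,d] <+ l) : [a,b,c] <+ l ∧ [b,c,d] <+ l ∧ [a,b,d] <+ l ∧ [a,c,d] <+ l := by
  refine ⟨Sublist.trans ?_ h, Sublist.trans ?_ h, Sublist.trans ?_ h, Sublist.trans ?_ h⟩ <;> simp [List.sublist_cons_iff]
theorem pw2 {R : ℕ → ℕ → Prop} {a b : ℕ} {l : List ℕ} (hp : l.Pairwise R) (h : [a,b] <+ l) : R a b := by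
  have := hp.sublist h; simpa using this

def avB (l : List ℕ) : Prop :=
  (∀ a b c, [a,b,c] <+ l → ¬ (c < a ∧ a < b)) ∧
  (∀ a b c d, [a,b,c,d] <+ l → ¬ (b < a ∧ a < d ∧ d < c))
def av (l : List ℕ) : Prop :=
  ∀ a b c d, [a,b,c,d] <+ l →
    ¬ (a < d ∧ d < b ∧ b < c) ∧ ¬ (b < a ∧ a < d ∧ d < c) ∧ ¬ (c < a ∧ a < b ∧ b < d)

theorem av.sub {l m : List ℕ} (h : av m) (s : l <+ m) : av l :=
  fun a b c d k => h a b c d (k.trans s)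
theorem avB.sub {l m : List ℕ} (h : avB m) (s : l <+ m) : avB l :=
  ⟨fun a b c k => h.1 a b c (k.trans s), fun a b c d k => h.2 a b c d (k.trans s)⟩
theorem avB.av {l : List ℕ} (h : avB l) : av l := by
  intro a b c d k
  obtain ⟨h1, h2⟩ := h
  have := mem4 k
  grind
theorem av_skew {l m : List ℕ} (hl : av l) (hm : av m) (h : ∀ x ∈ l, ∀ y ∈ m, y < x) : av (l ++ m) := by
  intro a b c d k
  rw [sub4] at k
  rcases k with k | ⟨k1, k2⟩ | ⟨k1, k2⟩ | ⟨k1, k2⟩ | k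
  · exact hm a b c d k
  · have := mem3 k2; have h2 := mem2 this.1; have h3 := mem2 this.2.1; grind
  · have := mem2 k1; have h2 := mem2 k2; grind
  · have := mem3 k1; have h2 := mem2 this.1; have h3 := mem2 this.2.1; grind
  · exact hl a b c d k

theorem caseA_back {v : ℕ} {u w : List ℕ} (hu : ∀ x ∈ u, v < x) (hw : ∀ x ∈ w, x < v)
    (h1 : avB u) (h2 : av w) : av (v :: (u ++ w)) := by
  have h0 : av (u ++ w) := av_skew h1.av h2 (by grind)
  intro a b c d k
  rw [cub4] at k
  rcases k with k | ⟨rfl, k⟩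
  · exact h0 a b c d k
  rw [sub3] at k
  rcases k with k | ⟨k1, k2⟩ | ⟨k1, k2⟩ | k
  · have := mem3 k; have h2 := mem2 this.1; have h3 := mem2 this.2.1; grind
  · have h2 := mem2 k2; grind
  · have h2 := mem2 k1; grind
  · have := mem3 k; have h2 := mem2 this.1; have h3 := mem2 this.2.1; have := h1.1 b c d k; grind

theorem caseB_back {v : ℕ} {e x c y : List ℕ} (he : e.Pairwise (· > ·)) (hc : c.Pairwise (· < ·))
    (hx : ∀ z ∈ x, z < v) (hy : ∀ z ∈ y, z < v) (hcv : ∀ z ∈ c, v < z) (hev : ∀ z ∈ e, v < z)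
    (hec : ∀ z ∈ e, ∀ t ∈ c, t < z) (h : av (x ++ (c ++ y))) : av (v :: (e ++ (x ++ (c ++ y)))) := by
  have ha : av e := by
    intro a b c d k
    have := mem4 k; have h1 := mem3 this.1; have h2 := mem3 this.2.1
    have := pw2 he h1.1; have := pw2 he h1.2.2;  have := pw2 he h2.2.2
    grind
  have h0 : av (e ++ (x ++ (c ++ y))) := av_skew ha h (by grind)
  intro a b p q k
  rw [cub4] at k
  rcases k with k | ⟨rfl, k⟩
  · exact h0 a b p q k
  have m2 : ∀ {a b : ℕ} {l : List ℕ}, [a,b] <+ l → a ∈ l ∧ b ∈ l := mem2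
  have m3 : ∀ {a b c : ℕ} {l : List ℕ}, [a,b,c] <+ l → [a,b] <+ l ∧ [a,c] <+ l ∧ [b,c] <+ l := mem3
  have pe : ∀ {a b : ℕ} , [a,b] <+ e → b < a := pw2 he
  have pc : ∀ {a b : ℕ} , [a,b] <+ c → a < b := pw2 hc
  simp only [sub3, sub2, List.mem_append] at k
  grind

theorem avB_back1 {v : ℕ} {u : List ℕ} (hu : ∀ x ∈ u, v < x) (h1 : avB u) : avB (v :: u) := by
  have m2 : ∀ {a b : ℕ} {l : List ℕ}, [a,b] <+ l → a ∈ l ∧ b ∈ l := mem2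
  have m3 : ∀ {a b c : ℕ} {l : List ℕ}, [a,b,c] <+ l → [a,b] <+ l ∧ [a,c] <+ l ∧ [b,c] <+ l := mem3
  obtain ⟨h1, h2⟩ := h1
  constructor
  · intro a b c k; rw [cub3] at k; grind
  · intro a b c d k; rw [cub4] at k; grind
theorem avB_back2 {v : ℕ} {x c : List ℕ} (hx : ∀ z ∈ x, z < v) (hcv : ∀ z ∈ c, v < z)
   (hc : c.Pairwise (· < ·)) (h1 : avB x) : avB (v :: (x ++ c)) := by
  have m2 : ∀ {a b : ℕ} {l : List ℕ}, [a,b] <+ l → a ∈ l ∧ b ∈ l := mem2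
  have m3 : ∀ {a b c : ℕ} {l : List ℕ}, [a,b,c] <+ l → [a,b] <+ l ∧ [a,c] <+ l ∧ [b,c] <+ l := mem3
  have m4 : ∀ {a b c d: ℕ} {l : List ℕ}, [a,b,c,d] <+ l → [a,b,c] <+ l ∧ [b,c,d] <+ l ∧ [a,b,d] <+ l ∧ [a,c,d] <+ l  := mem4
  have pc : ∀ {a b : ℕ} , [a,b] <+ c → a < b := pw2 hc
  obtain ⟨h1, h2⟩ := h1
  constructor
  · intro a b c k; simp only [cub3, sub2, sub3, List.mem_append] at k; grind
  · intro a b c d k; simp only [cub4, sub4, sub2, sub3, List.mem_append] at k; grind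
theorem span_ex (p : ℕ → Prop) (l : List ℕ) : ∃ a b, l = a ++ b ∧ (∀ x ∈ a, p x) ∧
    (b = [] ∨ ∃ z b', b = z :: b' ∧ ¬ p z) := by
  induction l with
  | nil => exact ⟨[], [], by simp⟩
  | cons x l ih =>
    obtain ⟨a, b, rfl, h1, h2⟩ := ih
    by_cases hx : p x
    · exact ⟨x :: a, b, by simp, by grind, h2⟩
    · exact ⟨[], x :: (a ++ b), by simp, by simp, Or.inr ⟨_, _, rfl, hx⟩⟩

theorem av_struct {v : ℕ} {r : List ℕ} (hn : (v :: r).Nodup) (h : av (v :: r)) :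
    (∃ u w, r = u ++ w ∧ (∀ x ∈ u, v < x) ∧ (∀ x ∈ w, x < v) ∧ avB u ∧ av w) ∨
    (∃ e x c y, r = e ++ (x ++ (c ++ y)) ∧ x ≠ [] ∧ c ≠ [] ∧ e.Pairwise (· > ·) ∧ c.Pairwise (· < ·) ∧ 
    (∀ z ∈ x, z < v) ∧ (∀ z ∈ y, z < v) ∧ (∀ z ∈ c, v < z) ∧ (∀ z ∈ e, v < z) ∧ 
    (∀ z ∈ e, ∀ t ∈ c, t < z) ∧ av (x ++ (c ++ y))) := by
  obtain ⟨e, r', rfl, he, hr'⟩ := span_ex (fun x => v < x) r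
  have hB : avB e := by
    have he' : av e := h.sub ((List.sublist_append_left _ _).trans (List.sublist_cons_self _ _))
    constructor
    · intro a b c k hh
      have := mem3 k
      have := mem2 this.2.1
      have := h v a b c (by simp [cub4, sub3, k])
      grind
    · intro a b c d k
      exact (he' a b c d k).2.1
  rcases hr' with rfl | ⟨l0, r1, rfl, hl0⟩
  · left
    exact ⟨e, [], rfl, he, by simp, hB, by intro a b c d k; simp at k⟩
  obtain ⟨x, r2, hx0, hx, hr2⟩ := span_ex (fun x => x < v) (l0 :: r1)
  have hl0v : l0 < v := by
    have : v ≠ l0 := by grind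
    omega
  rw [hx0] at h hn ⊢
  rcases hr2 with rfl | ⟨u1, r3, rfl, hu1⟩
  · left
    refine ⟨e, x, by simp, he, hx, hB, h.sub ?_⟩
    simp
  right
  have hx1 : ∃ x', x = l0 :: x' := by
    cases x with
    | nil => simp at hx0; grind
    | cons z x' => simp at hx0; exact ⟨x', by rw [hx0.1]⟩
  obtain ⟨x', rfl⟩ := hx1
  have hu1v : v < u1 := by
    have : v ≠ u1 := by grind
    omega
  obtain ⟨c, y, hc0, hc, hy⟩ := span_ex (fun x => v < x) (u1 :: r3)
  have hc1 : ∃ c', c = u1 :: c' := by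
    cases c with
    | nil => simp at hc0; grind
    | cons z x' => simp at hc0; exact ⟨x', by rw [hc0.1]⟩
  obtain ⟨c', rfl⟩ := hc1
  rw [hc0] at h hn ⊢
  have hne : ∀ {a b}, [a,b] <+ (v :: (e ++ (l0 :: x' ++ (u1 :: c' ++ y)))) → a ≠ b := fun k => pw2 hn k
  have hcp : (u1 :: c').Pairwise (· < ·) := by
    rw [List.pairwise_iff_forall_sublist]
    intro a b k
    have h1 := h v l0 a b (by
      rw [cub4, sub3, List.cons_append, cub3]
      exact Or.inr ⟨rfl, Or.inl (Or.inr ⟨rfl, sub2.2 (Or.inl (sub2.2 (Or.inr (Or.inr k))))⟩)⟩)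
    have h2 := @hne a b (by
      rw [cub2, sub2, sub2, sub2]
      exact Or.inl (Or.inl (Or.inl (Or.inr (Or.inr k)))))
    have hk := mem2 k
    have := hc a hk.1
    have := hc b hk.2
    omega
  refine ⟨e, l0 :: x', u1 :: c', y, rfl, by simp, by simp, ?_, hcp, hx, ?_, hc, he, ?_, h.sub ?_⟩
  · rw [List.pairwise_iff_forall_sublist]
    intro a b k
    have h1 := h v a b u1 (by rw [cub4, sub3]; simp [k])
    have h2 := @hne a b (by rw [cub2, sub2]; tauto)
    have h3 := h v a l0 u1 (by rw [cub4, sub3]; have := mem2 k; simp [this])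
    have h4 := @hne a u1 (by rw [cub2, sub2]; have := mem2 k; simp [this])
    have hk := mem2 k
    have := he a hk.1
    have := he b hk.2
    omega
  · rcases hy with rfl | ⟨z, y', rfl, hz⟩
    · simp
    have hzv : z < v := by
      have : v ≠ z := by grind
      omega
    intro t ht
    simp only [List.mem_cons] at ht
    rcases ht with rfl | ht
    · exact hzv
    have h1 := h v u1 z t (by simp [cub4, cub3, cub2, sub2, sub3, ht])
    have h2 := h v l0 u1 t (by simp [cub4, cub3, cub2, sub2, sub3, ht])
    have h3 := @hne v t (by simp [cub2, ht])
    have h4 := @hne u1 t (by simp [cub2, sub2, ht])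
    omega
  · intro z hz t ht
    have h1 := h v z l0 t (cub4.2 (Or.inr ⟨rfl, sub3.2 (Or.inr (Or.inl
      ⟨hz, cub2.2 (Or.inr ⟨rfl, List.mem_append_right _ (List.mem_append_left _ ht)⟩)⟩))⟩))
    have h4 := @hne z t (cub2.2 (Or.inl (sub2.2 (Or.inr (Or.inl
      ⟨hz, List.mem_append_right _ (List.mem_append_left _ ht)⟩)))))
    have := he z hz
    have := hc t ht
    omega
  · exact (List.sublist_append_right _ _).trans (List.sublist_cons_self _ _)

theorem avB_struct {v : ℕ} {r : List ℕ} (hn : (v :: r).Nodup) (h : avB (v :: r)) :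
    (∀ x ∈ r, v < x) ∨ (∃ x c, r = x ++ c ∧ x ≠ [] ∧ c.Pairwise (· < ·) ∧ (∀ z ∈ x, z < v) ∧ (∀ z ∈ c, v < z)) := by
  obtain ⟨x, c, rfl, hx, hc⟩ := span_ex (fun x => x < v) r
  have hne : ∀ {a b}, [a,b] <+ (v :: (x ++ c)) → a ≠ b := fun k => pw2 hn k
  have hc2 : ∀ z ∈ c, v < z := by
    rcases hc with rfl | ⟨z, b, rfl, hz⟩
    · simp
    have hzv : v < z := by
      have : v ≠ z := by grind
      omega
    intro t ht
    simp only [List.mem_cons] at ht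
    rcases ht with rfl | ht
    · exact hzv
    have h1 := h.1 v z t (by simp [cub3, cub2, sub2, ht])
    have h3 := @hne v t (by simp [cub2, ht])
    grind
  cases x with
  | nil => left; simpa using hc2
  | cons l0 x =>
    right
    refine ⟨l0 :: x, c, rfl, by simp, ?_, hx, hc2⟩
    rw [List.pairwise_iff_forall_sublist]
    intro a b k
    have h1 := h.2 v l0 a b (by simp [cub4, cub3, sub2, k])
    have h2 := @hne a b (by simp [cub2, sub2, k])
    have hk := mem2 k
    have := hc2 a hk.1
    have := hc2 b hk.2
    have := hx l0 (by simp)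
    omega

/-- k ≥ 2 -/
theorem mid_struct {x c y : List ℕ} (hn : (x ++ (c ++ y)).Nodup) (hc : c.Pairwise (· < ·)) (hl : 2 ≤ c.length)
   (hx : ∀ z ∈ x, ∀ t ∈ c, z < t) (hy : ∀ z ∈ y, ∀ t ∈ c, z < t) :
   av (x ++ (c ++ y)) ↔ ((∀ z ∈ x, ∀ t ∈ y, t < z) ∧ avB x ∧ av y) := by
  constructor
  · intro h
    obtain ⟨p, q, c', rfl⟩ : ∃ p q c', c = p :: q :: c' := by
      match c, hl with
      | p :: q :: c', _ => exact ⟨p, q, c', rfl⟩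
    refine ⟨?_, ⟨?_, ?_⟩, h.sub ?_⟩
    · intro z hz t ht
      have h1 := h z p q t (by rw [sub4]; simp [cub3, cub2, hz, ht])
      have h2 := pw2 hn (a := z) (b := t) (by rw [sub2]; simp [hz, ht])
      grind
    · intro a b d k hh
      have h1 := h a b d p (by rw [sub4]; simp [k])
      have := mem2 (mem3 k).1
      grind
    · intro a b d e k hh
      have h1 := h a b d e (by rw [sub4]; simp [k])
      grind
    · exact (List.sublist_append_right _ _).trans (List.sublist_append_right _ _)
  · rintro ⟨h1, h2, h3⟩
    rw [← List.append_assoc]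
    refine av_skew ?_ h3 (by grind)
    have m2 : ∀ {a b : ℕ} {l : List ℕ}, [a,b] <+ l → a ∈ l ∧ b ∈ l := mem2
    have m3 : ∀ {a b c : ℕ} {l : List ℕ}, [a,b,c] <+ l → [a,b] <+ l ∧ [a,c] <+ l ∧ [b,c] <+ l := mem3
    have m4 : ∀ {a b c d: ℕ} {l : List ℕ}, [a,b,c,d] <+ l → [a,b,c] <+ l ∧ [b,c,d] <+ l ∧ [a,b,d] <+ l ∧ [a,c,d] <+ l  := mem4
    have pc : ∀ {a b : ℕ} , [a,b] <+ c → a < b := pw2 hc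
    have h2' := h2.av
    obtain ⟨h4, h5⟩ := h2
    intro a b p q k
    have := h2' a b p q
    rw [sub4] at k
    grind

def IsP (S : Finset ℕ) (l : List ℕ) : Prop := l.Nodup ∧ ∀ x, x ∈ l ↔ x ∈ S

open Classical in
noncomputable def PS (S : Finset ℕ) (P : List ℕ → Prop) : Finset (List ℕ) := S.val.lists.toFinset.filter P

noncomputable def N (S : Finset ℕ) (P : List ℕ → Prop) : ℕ := (PS S P).card

theorem mem_PS {S : Finset ℕ} {P : List ℕ → Prop} {l : List ℕ} : l ∈ PS S P ↔ IsP S l ∧ P l := by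
  classical
  unfold PS IsP
  rw [Finset.mem_filter, Multiset.mem_toFinset, Multiset.mem_lists_iff]
  apply and_congr_left
  intro _
  constructor
  · intro h
    have h1 := S.nodup
    rw [h] at h1
    refine ⟨by simpa using h1, fun x => ?_⟩
    rw [← Finset.mem_val, h]; simp
  · rintro ⟨h1, h2⟩
    refine (Multiset.Nodup.ext S.nodup (by simpa using h1)).2 ?_
    intro a
    simp [h2]

theorem N_congr {S : Finset ℕ} {P Q : List ℕ → Prop} (h : ∀ l, IsP S l → (P l ↔ Q l)) : N S P = N S Q := by
  unfold N
  congr 1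
  ext l
  simp only [mem_PS]
  have := h l
  tauto

theorem N_or {S : Finset ℕ} {P Q : List ℕ → Prop} (h : ∀ l, IsP S l → P l → Q l → False) :
    N S (fun l => P l ∨ Q l) = N S P + N S Q := by
  classical
  unfold N
  rw [← Finset.card_union_of_disjoint]
  · congr 1
    ext l
    simp only [mem_PS, Finset.mem_union]
    tauto
  · rw [Finset.disjoint_left]
    intro l
    simp only [mem_PS]
    have := h l
    tauto

theorem N_sum {S : Finset ℕ} {I : Finset ℕ} {P : ℕ → List ℕ → Prop}
    (h : ∀ l, IsP S l → ∀ i ∈ I, ∀ j ∈ I, P i l → P j l → i = j) :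
    N S (fun l => ∃ i ∈ I, P i l) = ∑ i ∈ I, N S (P i) := by
  classical
  unfold N
  rw [← Finset.card_biUnion]
  · congr 1
    ext l
    simp only [mem_PS, Finset.mem_biUnion]
    constructor
    · rintro ⟨h1, i, hi, h2⟩; exact ⟨i, hi, h1, h2⟩
    · rintro ⟨i, hi, h1, h2⟩; exact ⟨h1, i, hi, h2⟩
  · intro i hi j hj hij
    rw [Function.onFun, Finset.disjoint_left]
    intro l
    simp only [mem_PS]
    rintro ⟨h1, h2⟩ ⟨_, h3⟩
    exact hij (h l h1 i hi j hj h2 h3)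

theorem N_empty {P : List ℕ → Prop} (h : P []) : N ∅ P = 1 := by
  unfold N
  rw [Finset.card_eq_one]
  refine ⟨[], ?_⟩
  ext l
  simp only [mem_PS, IsP, Finset.mem_singleton]
  constructor
  · rintro ⟨⟨_, h2⟩, _⟩
    simp at h2
    exact List.eq_nil_iff_forall_not_mem.2 h2
  · rintro rfl; simp [h]

theorem N_cons {S : Finset ℕ} {P : List ℕ → Prop} {v : ℕ} (hv : v ∈ S) :
    N S (fun l => ∃ r, l = v :: r ∧ P l) = N (S.erase v) (fun r => P (v :: r)) := by
  unfold N
  symm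
  refine Finset.card_bij (fun r _ => v :: r) ?_ ?_ ?_
  · intro r hr
    simp only [mem_PS, IsP] at hr ⊢
    obtain ⟨⟨h1, h2⟩, h3⟩ := hr
    refine ⟨⟨?_, ?_⟩, r, rfl, h3⟩
    · simp [h1, h2]
    · intro x; simp [h2]; grind
  · intro a _ b _ h; simpa using h
  · intro l hl
    simp only [mem_PS, IsP] at hl
    obtain ⟨⟨h1, h2⟩, r, rfl, h3⟩ := hl
    refine ⟨r, ?_, rfl⟩
    simp only [mem_PS, IsP]
    refine ⟨⟨(List.nodup_cons.1 h1).2, ?_⟩, h3⟩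
    intro x
    rw [Finset.mem_erase, ← h2]
    have := (List.nodup_cons.1 h1).1
    grind

theorem N_head {S : Finset ℕ} {P : List ℕ → Prop} (hS : S.Nonempty) :
    N S P = ∑ v ∈ S, N (S.erase v) (fun r => P (v :: r)) := by
  rw [← Finset.sum_congr rfl (fun v hv => N_cons (P := P) hv), ← N_sum]
  · apply N_congr
    intro l hl
    constructor
    · intro h
      cases l with
      | nil => obtain ⟨x, hx⟩ := hS; simpa using (hl.2 x).2 hx
      | cons v r => exact ⟨v, (hl.2 v).1 (by simp), r, rfl, h⟩
    · rintro ⟨_, _, _, _, h⟩; exact h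
  · rintro l hl i hi j hj ⟨r, rfl, _⟩ ⟨r', h, _⟩
    simp at h; exact h.1

theorem IsP.split {S U W : Finset ℕ} {u w : List ℕ} (h : IsP S (u ++ w)) (hS : ∀ x, x ∈ S ↔ x ∈ U ∨ x ∈ W)
    (hd : ∀ x ∈ U, x ∉ W) (hu : ∀ x ∈ u, x ∈ U) (hw : ∀ x ∈ w, x ∈ W) : IsP U u ∧ IsP W w := by
  obtain ⟨h1, h2⟩ := h
  rw [List.nodup_append] at h1
  refine ⟨⟨h1.1, fun x => ⟨hu x, fun hx => ?_⟩⟩, ⟨h1.2.1, fun x => ⟨hw x, fun hx => ?_⟩⟩⟩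
  · have := (h2 x).2 ((hS x).2 (Or.inl hx))
    rw [List.mem_append] at this
    rcases this with h | h
    · exact h
    · exact absurd (hw x h) (hd x hx)
  · have := (h2 x).2 ((hS x).2 (Or.inr hx))
    rw [List.mem_append] at this
    rcases this with h | h
    · exact absurd hx (hd x (hu x h))
    · exact h

theorem IsP.join {S U W : Finset ℕ} {u w : List ℕ} (hS : ∀ x, x ∈ S ↔ x ∈ U ∨ x ∈ W)
    (hd : ∀ x ∈ U, x ∉ W) (hu : IsP U u) (hw : IsP W w) : IsP S (u ++ w) := by
  refine ⟨?_, fun x => by rw [List.mem_append, hu.2, hw.2, hS]⟩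
  rw [List.nodup_append]
  refine ⟨hu.1, hw.1, ?_⟩
  rintro a ha b hb rfl
  exact hd a ((hu.2 a).1 ha) ((hw.2 a).1 hb)

theorem IsP.length {S : Finset ℕ} {l : List ℕ} (h : IsP S l) : l.length = S.card := by
  have : l.toFinset = S := by ext x; simp [h.2]
  rw [← this, List.toFinset_card_of_nodup h.1]

theorem N_split {S U W : Finset ℕ} {P Q : List ℕ → Prop} (hS : ∀ x, x ∈ S ↔ x ∈ U ∨ x ∈ W)
    (hd : ∀ x ∈ U, x ∉ W) :
    N S (fun r => ∃ u w, r = u ++ w ∧ (∀ x ∈ u, x ∈ U) ∧ (∀ x ∈ w, x ∈ W) ∧ P u ∧ Q w) = N U P * N W Q := by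
  unfold N
  rw [← Finset.card_product]
  symm
  refine Finset.card_bij (fun p _ => p.1 ++ p.2) ?_ ?_ ?_
  · rintro ⟨u, w⟩ h
    simp only [Finset.mem_product, mem_PS] at h
    obtain ⟨⟨h1, h2⟩, h3, h4⟩ := h
    rw [mem_PS]
    exact ⟨IsP.join hS hd h1 h3, u, w, rfl, fun x => (h1.2 x).1, fun x => (h3.2 x).1, h2, h4⟩
  · rintro ⟨u, w⟩ h ⟨u', w'⟩ h' he
    simp only [Finset.mem_product, mem_PS] at h h'
    have := List.append_inj he (by rw [h.1.1.length, h'.1.1.length])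
    exact Prod.ext this.1 this.2
  · intro l hl
    rw [mem_PS] at hl
    obtain ⟨h1, u, w, rfl, h2, h3, h4, h5⟩ := hl
    have := h1.split hS hd h2 h3
    exact ⟨(u, w), by simp [mem_PS, this, h4, h5], rfl⟩

theorem N_mono1 (S : Finset ℕ) : N S (fun l => l.Pairwise (· < ·)) = 1 := by
  unfold N
  rw [Finset.card_eq_one]
  refine ⟨S.sort (· ≤ ·), ?_⟩
  ext l
  simp only [mem_PS, Finset.mem_singleton]
  constructor
  · rintro ⟨h1, h2⟩
    have : l.toFinset = S := by ext x; simp [h1.2]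
    refine List.Perm.eq_of_pairwise (le := (· ≤ ·)) (fun a b _ _ h1 h2 => le_antisymm h1 h2) ?_ ?_ ?_
    · exact h2.imp le_of_lt
    · exact Finset.pairwise_sort _ _
    · rw [List.perm_ext_iff_of_nodup h1.1 (Finset.sort_nodup _ _)]
      intro a; simp [h1.2]
  · rintro rfl
    refine ⟨⟨Finset.sort_nodup _ _, by simp⟩, ?_⟩
    exact (Finset.sortedLT_sort S).pairwise

theorem N_mono2 (S : Finset ℕ) : N S (fun l => l.Pairwise (· > ·)) = 1 := by
  rw [← N_mono1 S]
  unfold N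
  refine Finset.card_bij (fun l _ => l.reverse) ?_ ?_ ?_
  · intro l; simp [mem_PS, IsP, List.pairwise_reverse]
  · intro a _ b _ h; simpa using h
  · intro l hl
    refine ⟨l.reverse, ?_, by simp⟩
    simpa [mem_PS, IsP, List.pairwise_reverse] using hl

theorem span_unique {p : ℕ → Prop} {e t e' t' : List ℕ} {z z' : ℕ} (h : e ++ z :: t = e' ++ z' :: t')
    (he : ∀ x ∈ e, p x) (he' : ∀ x ∈ e', p x) (hz : ¬ p z) (hz' : ¬ p z') : e = e' := by
  induction e generalizing e' with
  | nil => cases e' with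
    | nil => rfl
    | cons a e' => simp at h; simp at he'; grind
  | cons b e ih => cases e' with
    | nil => simp at h; simp at he; grind
    | cons a e' => 
      simp at h
      rw [h.1, ih h.2 (fun x hx => he x (by simp [hx])) (fun x hx => he' x (by simp [hx]))]

theorem sum_lemma (S : Finset ℕ) : ∀ (g : ℕ → ℕ → ℕ) (n : ℕ), S.card = n + 1 →
    ∑ v ∈ S, g (S.filter (· < v)).card (S.filter (v < ·)).card = ∑ p ∈ Finset.HasAntidiagonal.antidiagonal n, g p.1 p.2 := by
  induction S using Finset.induction_on_max with
  | empty => intro g n h; simp at h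
  | insert a s ha ih =>
    intro g n h
    have hna : a ∉ s := fun h => lt_irrefl _ (ha a h)
    rw [Finset.card_insert_of_notMem hna] at h
    have hn : s.card = n := by omega
    rw [Finset.sum_insert hna]
    have e1 : (insert a s).filter (· < a) = s := by
      ext x; simp; grind
    have e2 : (insert a s).filter (a < ·) = ∅ := by
      ext x; simp; grind
    rw [e1, e2]
    have e3 : ∀ v ∈ s, g ((insert a s).filter (· < v)).card ((insert a s).filter (v < ·)).card = g (s.filter (· < v)).card ((s.filter (v < ·)).card + 1) := by
      intro v hv
      have := ha v hv
      congr 1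
      · congr 1; ext x; simp; grind
      · rw [Finset.filter_insert, if_pos this, Finset.card_insert_of_notMem (by simp [hna])]
    rw [Finset.sum_congr rfl e3]
    cases n with
    | zero => rw [Finset.card_eq_zero] at hn; subst hn; simp
    | succ n =>
      rw [ih (fun a b => g a (b+1)) n hn, Finset.Nat.antidiagonal_succ', hn]
      simp

theorem av_nil : av [] := by intro a b c d k; simp at k
theorem avB_nil : avB [] := ⟨by intro a b c k; simp at k, by intro a b c d k; simp at k⟩

theorem b_rec {S : Finset ℕ} (hS : S.Nonempty) : N S avB =
    ∑ v ∈ S, (if (S.filter (· < v)).card = 0 then N (S.filter (v < ·)) avB else N (S.filter (· < v)) avB) := by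
  rw [N_head hS]
  apply Finset.sum_congr rfl
  intro v hv
  split_ifs with h
  · rw [Finset.card_eq_zero, Finset.filter_eq_empty_iff] at h
    have : S.erase v = S.filter (v < ·) := by
      ext x; simp only [Finset.mem_erase, Finset.mem_filter]
      constructor
      · rintro ⟨h1, h2⟩; have := h h2; exact ⟨h2, by omega⟩
      · rintro ⟨h1, h2⟩; exact ⟨by omega, h1⟩
    rw [this]
    apply N_congr
    intro l hl
    constructor
    · intro k; exact k.sub (List.sublist_cons_self _ _)
    · intro k
      refine avB_back1 ?_ k
      intro x hx
      have := (hl.2 x).1 hx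
      simp at this; exact this.2
  · have h2 : N (S.filter (· < v)) avB = N (S.filter (· < v)) avB * N (S.filter (v < ·)) (fun l => l.Pairwise (· < ·)) := by
      rw [N_mono1, mul_one]
    rw [h2, ← N_split (S := S.erase v)]
    · apply N_congr
      intro l hl
      have hm : ∀ x, x ∈ l ↔ x ≠ v ∧ x ∈ S := fun x => by rw [hl.2, Finset.mem_erase]
      have hn : (v :: l).Nodup := List.nodup_cons.2 ⟨by rw [hm]; simp, hl.1⟩
      constructor
      · intro k
        rcases avB_struct hn k with h3 | ⟨x, c, rfl, h3, h4, h5, h6⟩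
        · exfalso
          apply h
          rw [Finset.card_eq_zero, Finset.filter_eq_empty_iff]
          intro x hx hxv
          have := h3 x ((hm x).2 ⟨by omega, hx⟩)
          omega
        · refine ⟨x, c, rfl, ?_, ?_, ?_, h4⟩
          · intro z hz; rw [Finset.mem_filter]; exact ⟨((hm z).1 (by simp [hz])).2, h5 z hz⟩
          · intro z hz; rw [Finset.mem_filter]; exact ⟨((hm z).1 (by simp [hz])).2, h6 z hz⟩
          · exact k.sub ((List.sublist_append_left _ _).trans (List.sublist_cons_self _ _))
      · rintro ⟨u, w, rfl, h3, h4, h5, h6⟩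
        exact avB_back2 (fun z hz => (Finset.mem_filter.1 (h3 z hz)).2)
          (fun z hz => (Finset.mem_filter.1 (h4 z hz)).2) h6 h5
    · intro x; simp only [Finset.mem_erase, Finset.mem_filter]
      constructor
      · rintro ⟨h1, h2⟩
        rcases lt_or_gt_of_ne h1 with h | h
        · exact Or.inl ⟨h2, h⟩
        · exact Or.inr ⟨h2, h⟩
      · rintro (h | h)
        · exact ⟨by omega, h.1⟩
        · exact ⟨by omega, h.1⟩
    · intro x; simp only [Finset.mem_filter]; omega

def Mid (C : Finset ℕ) (l : List ℕ) : Prop :=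
  av l ∧ ∃ x c y, l = x ++ (c ++ y) ∧ x ≠ [] ∧ c.Pairwise (· < ·) ∧ (∀ z, z ∈ c ↔ z ∈ C)

theorem Mid_one {L : Finset ℕ} {u : ℕ} (hu : ∀ x ∈ L, x < u) :
    N (L ∪ {u}) (Mid {u}) + N L av = N (L ∪ {u}) av := by
  have h2 : N L av = N {u} (fun l => l.Pairwise (· < ·)) * N L av := by
    rw [N_mono1, one_mul]
  rw [h2, ← N_split (S := L ∪ {u}), ← N_or]
  · apply N_congr
    intro l hl
    constructor
    · rintro (h | ⟨a, w, rfl, h3, h4, h5, h6⟩)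
      · exact h.1
      · have := hl.split (U := {u}) (W := L) (by intro x; simp) (by intro x; simp; rintro rfl h; exact lt_irrefl _ (hu x h)) h3 h4
        have ha : a.length = 1 := this.1.length
        obtain ⟨z, rfl⟩ := List.length_eq_one_iff.1 ha
        refine av_skew ?_ h6 ?_
        · intro a b c d k
          have := k.length_le
          simp at this
        · intro p hp q hq
          have h7 := h3 p hp
          simp at h7
          subst h7
          exact hu q (h4 q hq)
    · intro h
      have : u ∈ l := by rw [hl.2]; simp
      obtain ⟨x, y, rfl⟩ := List.append_of_mem this
      by_cases hx : x = []
      · right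
        subst hx
        refine ⟨[u], y, rfl, by simp, ?_, by simp, h.sub (List.sublist_append_right [u] y)⟩
        intro z hz
        have h3 := (hl.2 z).1 (by simp [hz])
        have h4 := hl.1
        simp at h3 h4
        grind
      · left
        exact ⟨h, x, [u], y, rfl, hx, by simp, by simp⟩
  · rintro l hl ⟨_, x, c, y, rfl, h1, h2, h3⟩ ⟨a, w, he, h4, h5, h6, h7⟩
    rw [he] at hl
    have := hl.split (U := {u}) (W := L) (by intro x; simp) (by intro x; simp; rintro rfl h; exact lt_irrefl _ (hu x h)) h4 h5
    have ha : a.length = 1 := this.1.length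
    obtain ⟨z, rfl⟩ := List.length_eq_one_iff.1 ha
    have hz : z = u := by simpa using h4
    subst hz
    obtain ⟨p, x, rfl⟩ := List.exists_cons_of_ne_nil h1
    simp at he
    have hc := (h3 z).2 (by simp)
    have h9 := h5 z (by rw [← he.2]; simp [hc])
    exact lt_irrefl _ (hu z h9)
  · intro x; simp
  · intro x; simp; rintro rfl h; exact lt_irrefl _ (hu x h)

theorem Mid_two {L C : Finset ℕ} (hC : 2 ≤ C.card) (hLC : ∀ x ∈ L, ∀ y ∈ C, x < y) :
    N (L ∪ C) (Mid C) = ∑ m ∈ L, N (L.filter (m ≤ ·)) avB * N (L.filter (· < m)) av := by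
  have hdisj : ∀ x ∈ L, x ∉ C := fun x h1 h2 => lt_irrefl _ (hLC x h1 x h2)
  have e : ∀ m ∈ L, N (L.filter (m ≤ ·)) avB * N (L.filter (· < m)) av = 
    N (L ∪ C) (fun r => ∃ u w, r = u ++ w ∧ (∀ x ∈ u, x ∈ L.filter (m ≤ ·)) ∧ (∀ x ∈ w, x ∈ C ∪ L.filter (· < m)) ∧ avB u ∧
      (∃ c y, w = c ++ y ∧ (∀ x ∈ c, x ∈ C) ∧ (∀ x ∈ y, x ∈ L.filter (· < m)) ∧ c.Pairwise (· < ·) ∧ av y)) := by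
    intro m hm
    rw [N_split, N_split, N_mono1, one_mul]
    · intro x; simp
    · intro x h1 h2; exact hdisj x (Finset.mem_filter.1 h2).1 h1
    · intro x; simp only [Finset.mem_union, Finset.mem_filter]
      have := le_or_gt m x
      tauto
    · intro x; simp only [Finset.mem_union, Finset.mem_filter]
      rintro ⟨h1, h2⟩ (h3 | h3)
      · exact hdisj x h1 h3
      · omega
  rw [Finset.sum_congr rfl e, ← N_sum]
  · apply N_congr
    intro l hl
    constructor
    · rintro ⟨h, x, c, y, rfl, h1, h2, h3⟩
      have hcl : 2 ≤ c.length := by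
        have : IsP C c := ⟨h2.imp (fun h => ne_of_lt h), h3⟩
        rw [this.length]; exact hC
      have hn := hl.1
      rw [List.nodup_append, List.nodup_append] at hn
      have hxL : ∀ z ∈ x, z ∈ L := by
        intro z hz
        have := (hl.2 z).1 (by simp [hz])
        rw [Finset.mem_union] at this
        rcases this with h | h
        · exact h
        · exact absurd rfl (hn.2.2 z hz z (by simp [(h3 z).2 h]))
      have hyL : ∀ z ∈ y, z ∈ L := by
        intro z hz
        have := (hl.2 z).1 (by simp [hz])
        rw [Finset.mem_union] at this
        rcases this with h | h
        · exact h
        · exact absurd rfl (hn.2.1.2.2 z ((h3 z).2 h) z hz)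
      rw [mid_struct hl.1 h2 hcl (fun z hz t ht => hLC z (hxL z hz) t ((h3 t).1 ht))
        (fun z hz t ht => hLC z (hyL z hz) t ((h3 t).1 ht))] at h
      obtain ⟨k1, k2, k3⟩ := h
      have hne : x.toFinset.Nonempty := by
        obtain ⟨p, x, rfl⟩ := List.exists_cons_of_ne_nil h1
        exact ⟨p, by simp⟩
      obtain ⟨m, hm, hmin⟩ := Finset.exists_min_image x.toFinset id hne
      simp only [List.mem_toFinset, id] at hm hmin
      have hyf : ∀ z ∈ y, z ∈ L.filter (· < m) := fun z hz => 
        Finset.mem_filter.2 ⟨hyL z hz, k1 m hm z hz⟩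
      refine ⟨m, hxL m hm, x, c ++ y, rfl, ?_, ?_, k2, c, y, rfl, fun z => (h3 z).1, hyf, h2, k3⟩
      · intro z hz; exact Finset.mem_filter.2 ⟨hxL z hz, hmin z hz⟩
      · intro z hz; 
        rw [List.mem_append] at hz
        rw [Finset.mem_union]
        exact hz.imp (h3 z).1 (hyf z)
    · rintro ⟨m, hm, x, w, rfl, h1, _, h3, c, y, rfl, h4, h5, h6, h7⟩
      simp only [Finset.mem_filter] at h1 h5
      have hcC : ∀ z, z ∈ c ↔ z ∈ C := by
        intro z
        refine ⟨h4 z, fun hz => ?_⟩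
        have := (hl.2 z).2 (by simp [hz])
        simp only [List.mem_append] at this
        rcases this with h | h | h
        · exact absurd hz (hdisj z (h1 z h).1)
        · exact h
        · exact absurd hz (hdisj z (h5 z h).1)
      have hcl : 2 ≤ c.length := by
        have : IsP C c := ⟨h6.imp (fun h => ne_of_lt h), hcC⟩
        rw [this.length]; exact hC
      refine ⟨?_, x, c, y, rfl, ?_, h6, hcC⟩
      · rw [mid_struct hl.1 h6 hcl (fun z hz t ht => hLC z (h1 z hz).1 t (h4 t ht))
          (fun z hz t ht => hLC z (h5 z hz).1 t (h4 t ht))]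
        exact ⟨fun z hz t ht => lt_of_lt_of_le (h5 t ht).2 (h1 z hz).2, h3, h7⟩
      · rintro rfl
        have := (hl.2 m).2 (by simp [hm])
        simp only [List.mem_append] at this
        rcases this with h | h | h
        · simp at h
        · exact hdisj m hm (h4 m h)
        · exact lt_irrefl _ (h5 m h).2
  · have key : ∀ l, IsP (L ∪ C) l → ∀ i ∈ L, ∀ x w, l = x ++ w → (∀ z ∈ x, z ∈ L.filter (i ≤ ·)) → 
        (∃ c y, w = c ++ y ∧ (∀ x ∈ c, x ∈ C) ∧ (∀ x ∈ y, x ∈ L.filter (· < i)) ∧ c.Pairwise (· < ·) ∧ av y) → 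
        (∃ z t, w = z :: t ∧ ¬ z ∈ L) ∧ (∀ z, z ∈ x ↔ z ∈ L ∧ i ≤ z) := by
      rintro l hl i hi x w rfl h1 ⟨c, y, rfl, h4, h5, h6, h7⟩
      simp only [Finset.mem_filter] at h1 h5
      constructor
      · cases c with
        | nil =>
          exfalso
          obtain ⟨z, hz⟩ := Finset.card_pos.1 (by omega : 0 < C.card)
          have := (hl.2 z).2 (by simp [hz])
          simp only [List.mem_append] at this
          rcases this with h | h | h
          · exact hdisj z (h1 z h).1 hz
          · simp at h
          · exact hdisj z (h5 z h).1 hz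
        | cons z c => exact ⟨z, c ++ y, rfl, fun h => hdisj z h (h4 z (by simp))⟩
      · intro z
        refine ⟨h1 z, fun hz => ?_⟩
        have := (hl.2 z).2 (by simp [hz])
        simp only [List.mem_append] at this
        rcases this with h | h | h
        · exact h
        · exact absurd (h4 z h) (hdisj z hz.1)
        · have := (h5 z h).2; omega
    rintro l hl i hi j hj ⟨x, w, e1, h1, _, _, h4⟩ ⟨x', w', e1', h1', _, _, h4'⟩
    obtain ⟨⟨z, t, rfl, hz⟩, k2⟩ := key l hl i hi x w e1 h1 h4
    obtain ⟨⟨z', t', rfl, hz'⟩, k2'⟩ := key l hl j hj x' w' e1' h1' h4'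
    have : x = x' := span_unique (p := fun z => z ∈ L) (e1.symm.trans e1') (fun z hz => ((k2 z).1 hz).1)
      (fun z hz => ((k2' z).1 hz).1) hz hz'
    subst this
    have a1 := (k2 j).1 ((k2' j).2 ⟨hj, le_refl _⟩)
    have a2 := (k2' i).1 ((k2 i).2 ⟨hi, le_refl _⟩)
    omega

theorem f_rec_aux {S : Finset ℕ} {v : ℕ} (hv : v ∈ S) : N (S.erase v) (fun r => av (v :: r)) =
    N (S.filter (v < ·)) avB * N (S.filter (· < v)) av +
      ∑ u ∈ S.filter (v < ·), N (S.filter (· < v) ∪ (S.filter (v < ·)).filter (· ≤ u))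
        (Mid ((S.filter (v < ·)).filter (· ≤ u))) := by
  have e : ∀ u ∈ S.filter (v < ·), N (S.filter (· < v) ∪ (S.filter (v < ·)).filter (· ≤ u))
        (Mid ((S.filter (v < ·)).filter (· ≤ u))) = N (S.erase v) (fun r => ∃ e t, r = e ++ t ∧
          (∀ x ∈ e, x ∈ (S.filter (v < ·)).filter (u < ·)) ∧
          (∀ x ∈ t, x ∈ S.filter (· < v) ∪ (S.filter (v < ·)).filter (· ≤ u)) ∧
          e.Pairwise (· > ·) ∧ Mid ((S.filter (v < ·)).filter (· ≤ u)) t) := by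
    intro u hu
    rw [N_split, N_mono2, one_mul]
    · intro x; simp only [Finset.mem_erase, Finset.mem_union, Finset.mem_filter]
      have := lt_trichotomy x v
      have := le_or_gt x u
      constructor
      · rintro ⟨h1, h2⟩
        simp only [h2, true_and]
        omega
      · rintro (h | h | h)
        · exact ⟨by omega, h.1.1⟩
        · exact ⟨by omega, h.1⟩
        · exact ⟨by omega, h.1.1⟩
    · intro x; simp only [Finset.mem_union, Finset.mem_filter]; omega
  rw [Finset.sum_congr rfl e, ← N_sum, ← N_split (S := S.erase v), ← N_or]
  · apply N_congr
    intro l hl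
    have hm : ∀ x, x ∈ l ↔ x ≠ v ∧ x ∈ S := fun x => by rw [hl.2, Finset.mem_erase]
    have hn : (v :: l).Nodup := List.nodup_cons.2 ⟨by rw [hm]; simp, hl.1⟩
    constructor
    · intro k
      rcases av_struct hn k with ⟨u, w, rfl, h1, h2, h3, h4⟩ | 
        ⟨e, x, c, y, rfl, h1, h2, h3, h4, h5, h6, h7, h8, h9, h10⟩
      · left
        refine ⟨u, w, rfl, ?_, ?_, h3, h4⟩
        · intro z hz; exact Finset.mem_filter.2 ⟨((hm z).1 (by simp [hz])).2, h1 z hz⟩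
        · intro z hz; exact Finset.mem_filter.2 ⟨((hm z).1 (by simp [hz])).2, h2 z hz⟩
      · right
        have hne : c.toFinset.Nonempty := by
          obtain ⟨p, x, rfl⟩ := List.exists_cons_of_ne_nil h2
          exact ⟨p, by simp⟩
        obtain ⟨u, hu, hmax⟩ := Finset.exists_max_image c.toFinset id hne
        simp only [List.mem_toFinset, id] at hu hmax
        have hcC : ∀ z, z ∈ c ↔ z ∈ (S.filter (v < ·)).filter (· ≤ u) := by
          intro z
          simp only [Finset.mem_filter]
          constructor
          · intro hz; exact ⟨⟨((hm z).1 (by simp [hz])).2, h7 z hz⟩, hmax z hz⟩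
          · rintro ⟨⟨a1, a2⟩, a3⟩
            have := (hm z).2 ⟨by omega, a1⟩
            simp only [List.mem_append] at this
            rcases this with h | h | h | h
            · have := h9 z h u hu; omega
            · have := h5 z h; omega
            · exact h
            · have := h6 z h; omega
        refine ⟨u, ?_, e, x ++ (c ++ y), rfl, ?_, ?_, h3, h10, x, c, y, rfl, h1, h4, hcC⟩
        · exact Finset.mem_filter.2 ⟨((hm u).1 (by simp [hu])).2, h7 u hu⟩
        · intro z hz
          simp only [Finset.mem_filter]
          exact ⟨⟨((hm z).1 (by simp [hz])).2, h8 z hz⟩, h9 z hz u hu⟩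
        · intro z hz
          have hzS := ((hm z).1 (List.mem_append_right _ hz)).2
          simp only [List.mem_append] at hz
          rw [Finset.mem_union]
          rcases hz with h | h | h
          · exact Or.inl (Finset.mem_filter.2 ⟨hzS, h5 z h⟩)
          · exact Or.inr ((hcC z).1 h)
          · exact Or.inl (Finset.mem_filter.2 ⟨hzS, h6 z h⟩)
    · rintro (⟨u, w, rfl, h1, h2, h3, h4⟩ | ⟨u, hu, e, t, rfl, h1, h2, h3, h4, x, c, y, rfl, h5, h6, h7⟩)
      · exact caseA_back (fun z hz => (Finset.mem_filter.1 (h1 z hz)).2)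
          (fun z hz => (Finset.mem_filter.1 (h2 z hz)).2) h3 h4
      · simp only [Finset.mem_filter, Finset.mem_union] at h1 h2 h7
        have hn1 := hl.1
        rw [List.nodup_append, List.nodup_append, List.nodup_append] at hn1
        refine caseB_back h3 h6 ?_ ?_ ?_ ?_ ?_ h4
        · intro z hz
          rcases h2 z (by simp [hz]) with h | h
          · exact h.2
          · exact absurd rfl (hn1.2.1.2.2 z hz z (List.mem_append_left _ ((h7 z).2 h)))
        · intro z hz
          rcases h2 z (by simp [hz]) with h | h
          · exact h.2
          · exact absurd rfl (hn1.2.1.2.1.2.2 z ((h7 z).2 h) z hz)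
        · intro z hz; exact ((h7 z).1 hz).1.2
        · intro z hz; exact (h1 z hz).1.2
        · intro z hz t ht
          have := (h1 z hz).2
          have := ((h7 t).1 ht).2
          omega
  · rintro l hl ⟨u, w, rfl, h1, h2, h3, h4⟩ ⟨q, hq, e, t, he, h5, h6, h7, h8, x, c, y, rfl, h9, h10, h11⟩
    rw [he] at hl
    have hn1 := hl.1
    rw [List.nodup_append, List.nodup_append, List.nodup_append] at hn1
    simp only [Finset.mem_filter, Finset.mem_union] at h1 h2 h5 h6 h11 hq
    obtain ⟨p, x, rfl⟩ := List.exists_cons_of_ne_nil h9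
    have hqc : q ∈ c := (h11 q).2 ⟨hq, le_refl _⟩
    have hp : p < v := by
      rcases h6 p (by simp) with h | h
      · exact h.2
      · exact absurd rfl (hn1.2.1.2.2 p (by simp) p (List.mem_append_left _ ((h11 p).2 h)))
    have hs : [p, q] <+ u ++ w := by
      rw [he]
      refine sub2.2 (Or.inl (cub2.2 (Or.inr ⟨rfl, ?_⟩)))
      exact List.mem_append_right _ (List.mem_append_left _ hqc)
    rw [sub2] at hs
    rcases hs with h | h | h
    · have := (h2 q (mem2 h).2).2; omega
    · have := (h2 q h.2).2; omega
    · have := (h1 p (mem2 h).1).2; omega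
  · intro x; simp only [Finset.mem_erase, Finset.mem_filter]
    constructor
    · rintro ⟨h1, h2⟩
      rcases lt_or_gt_of_ne h1 with h | h
      · exact Or.inr ⟨h2, h⟩
      · exact Or.inl ⟨h2, h⟩
    · rintro (h | h)
      · exact ⟨by omega, h.1⟩
      · exact ⟨by omega, h.1⟩
  · intro x; simp only [Finset.mem_filter]; omega
  · have key : ∀ l, IsP (S.erase v) l → ∀ i ∈ S.filter (v < ·), ∀ e t, l = e ++ t →
          (∀ x ∈ e, x ∈ (S.filter (v < ·)).filter (i < ·)) →
          (∀ x ∈ t, x ∈ S.filter (· < v) ∪ (S.filter (v < ·)).filter (· ≤ i)) →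
          Mid ((S.filter (v < ·)).filter (· ≤ i)) t → 
          (∃ z t', t = z :: t' ∧ ¬ v < z) ∧ (∀ z, z ∈ e ↔ (z ∈ S ∧ v < z) ∧ i < z) := by
      rintro l hl i hi e t rfl h5 h6 ⟨h8, x, c, y, rfl, h9, h10, h11⟩
      have hn1 := hl.1
      rw [List.nodup_append, List.nodup_append, List.nodup_append] at hn1
      simp only [Finset.mem_filter, Finset.mem_union] at h5 h6 h11
      constructor
      · obtain ⟨p, x, rfl⟩ := List.exists_cons_of_ne_nil h9
        refine ⟨p, _, rfl, ?_⟩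
        rcases h6 p (by simp) with h | h
        · omega
        · exact absurd rfl (hn1.2.1.2.2 p (by simp) p (List.mem_append_left _ ((h11 p).2 h)))
      · intro z
        refine ⟨h5 z, fun hz => ?_⟩
        have := (hl.2 z).2 (Finset.mem_erase.2 ⟨by omega, hz.1.1⟩)
        rw [List.mem_append] at this
        rcases this with h | h
        · exact h
        · have := h6 z h; omega
    rintro l hl i hi j hj ⟨e, t, e1, h1, h2, h3, h4⟩ ⟨e', t', e1', h1', h2', h3', h4'⟩
    obtain ⟨⟨z, t, rfl, hz⟩, k2⟩ := key l hl i hi e t e1 h1 h2 h4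
    obtain ⟨⟨z', t', rfl, hz'⟩, k2'⟩ := key l hl j hj e' t' e1' h1' h2' h4'
    have : e = e' := span_unique (p := fun z => v < z) (e1.symm.trans e1') (fun z hz => ((k2 z).1 hz).1.2)
      (fun z hz => ((k2' z).1 hz).1.2) hz hz'
    subst this
    simp only [Finset.mem_filter] at hi hj
    by_contra hij
    rcases lt_or_gt_of_ne hij with h | h
    · have := (k2' j).1 ((k2 j).2 ⟨hj, h⟩); omega
    · have := (k2 i).1 ((k2' i).2 ⟨hi, h⟩); omega

noncomputable def fq (n : ℕ) : ℕ := N (Finset.range n) av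
noncomputable def bq (n : ℕ) : ℕ := N (Finset.range n) avB

theorem b_rec' (b : ℕ → ℕ) (n : ℕ) (hb : ∀ S : Finset ℕ, S.card ≤ n → N S avB = b S.card)
    (S : Finset ℕ) (hS : S.card = n + 1) :
    N S avB = ∑ p ∈ Finset.HasAntidiagonal.antidiagonal n, if p.1 = 0 then b p.2 else b p.1 := by
  rw [b_rec (Finset.card_pos.1 (by omega)), ← sum_lemma S (fun i j => if i = 0 then b j else b i) n hS]
  apply Finset.sum_congr rfl
  intro v hv
  have h1 : (S.filter (v < ·)).card < S.card := Finset.card_lt_card (Finset.filter_ssubset.2 ⟨v, hv, by simp⟩)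
  have h2 : (S.filter (· < v)).card < S.card := Finset.card_lt_card (Finset.filter_ssubset.2 ⟨v, hv, by simp⟩)
  rw [hb _ (by omega), hb _ (by omega)]

theorem bq_eq : ∀ (n : ℕ) (S : Finset ℕ), S.card ≤ n → N S avB = bq S.card := by
  intro n
  induction n with
  | zero =>
    intro S hS
    have : S = ∅ := Finset.card_eq_zero.1 (by omega)
    subst this
    simp [bq]
  | succ n ih =>
    intro S hS
    rcases Nat.lt_or_ge S.card (n+1) with h | h
    · exact ih S (by omega)
    · have hc : S.card = n + 1 := by omega
      rw [b_rec' bq n ih S hc, hc]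
      unfold bq
      rw [b_rec' bq n ih (Finset.range (n+1)) (by simp)]
      rfl

theorem bq_rec (n : ℕ) : bq (n+1) = ∑ p ∈ Finset.HasAntidiagonal.antidiagonal n, if p.1 = 0 then bq p.2 else bq p.1 :=
  b_rec' bq n (bq_eq n) (Finset.range (n+1)) (by simp)

noncomputable def qq (f : ℕ → ℕ) : ℕ → ℕ 
  | 0 => 0
  | n + 1 => ∑ p ∈ Finset.HasAntidiagonal.antidiagonal n, bq (p.2 + 1) * f p.1

theorem f_rec' (f : ℕ → ℕ) (n : ℕ) (hf : ∀ S : Finset ℕ, S.card ≤ n → N S av = f S.card)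
    (S : Finset ℕ) (hS : S.card = n + 1) :
    N S av = ∑ p ∈ Finset.HasAntidiagonal.antidiagonal n, (bq p.2 * f p.1 +
      ∑ k ∈ Finset.range p.2, if k = 0 then f (p.1+1) - f p.1 else qq f p.1) := by
  rw [N_head (Finset.card_pos.1 (by omega)), ← sum_lemma S (fun i j => bq j * f i + 
    ∑ k ∈ Finset.range j, if k = 0 then f (i+1) - f i else qq f i) n hS]
  apply Finset.sum_congr rfl
  intro v hv
  have h2 : (S.filter (· < v)).card < S.card := Finset.card_lt_card (Finset.filter_ssubset.2 ⟨v, hv, by simp⟩)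
  rw [f_rec_aux hv, hf _ (by omega), bq_eq _ _ le_rfl]
  congr 1
  set L := S.filter (· < v) with hL
  set U := S.filter (v < ·) with hU
  have hLU : ∀ x ∈ L, ∀ y ∈ U, x < y := by
    intro x hx y hy
    simp only [hL, hU, Finset.mem_filter] at hx hy
    omega
  have hcard : L.card + U.card ≤ n := by
    rw [← Finset.card_union_of_disjoint]
    · have : L ∪ U ⊆ S.erase v := by
        intro x hx
        simp only [hL, hU, Finset.mem_union, Finset.mem_filter] at hx
        rw [Finset.mem_erase]
        rcases hx with h | h <;> exact ⟨by omega, h.1⟩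
      have := Finset.card_le_card this
      rw [Finset.card_erase_of_mem hv] at this
      omega
    · rw [Finset.disjoint_left]
      intro x h1 h2
      exact lt_irrefl _ (hLU x h1 x h2)
  have hterm : ∀ u ∈ U, N (L ∪ U.filter (· ≤ u)) (Mid (U.filter (· ≤ u))) =
      if (U.filter (· < u)).card = 0 then f (L.card+1) - f L.card else qq f L.card := by
    intro u hu
    have hins : U.filter (· ≤ u) = insert u (U.filter (· < u)) := by
      ext x; simp only [Finset.mem_filter, Finset.mem_insert]
      constructor
      · rintro ⟨h1, h2⟩; rcases h2.lt_or_eq with h | h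
        · exact Or.inr ⟨h1, h⟩
        · exact Or.inl h
      · rintro (rfl | h)
        · exact ⟨hu, le_rfl⟩
        · exact ⟨h.1, h.2.le⟩
    split_ifs with h
    · rw [Finset.card_eq_zero] at h
      rw [hins, h]
      have := Mid_one (L := L) (u := u) (fun x hx => hLU x hx u hu)
      have hU1 : 0 < U.card := Finset.card_pos.2 ⟨u, hu⟩
      have hc : (L ∪ {u}).card = L.card + 1 := by
        rw [Finset.card_union_of_disjoint, Finset.card_singleton]
        rw [Finset.disjoint_singleton_right]
        intro h; exact lt_irrefl _ (hLU u h u hu)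
      rw [hf L (by omega), hf (L ∪ {u}) (by omega), hc] at this
      simp only [insert_empty_eq]
      omega
    · rw [Mid_two]
      · rcases hLc : L.card with _ | k
        · rw [Finset.card_eq_zero] at hLc
          simp [hLc, qq]
        · simp only [qq]
          rw [← sum_lemma L (fun i j => bq (j+1) * f i) k hLc]
          apply Finset.sum_congr rfl
          intro m hm
          have : L.filter (m ≤ ·) = insert m (L.filter (m < ·)) := by
            ext x; simp only [Finset.mem_filter, Finset.mem_insert]
            constructor
            · rintro ⟨h1, h2⟩; rcases h2.lt_or_eq with h | h
              · exact Or.inr ⟨h1, h⟩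
              · exact Or.inl h.symm
            · rintro (rfl | h)
              · exact ⟨hm, le_rfl⟩
              · exact ⟨h.1, h.2.le⟩
          have h3 := Finset.card_filter_le L (· < m)
          rw [bq_eq _ _ le_rfl, this, Finset.card_insert_of_notMem (by simp), hf _ (by omega)]
      · rw [hins, Finset.card_insert_of_notMem (by simp)]; omega
      · intro x hx y hy
        exact hLU x hx y (Finset.mem_filter.1 hy).1
  rw [Finset.sum_congr rfl hterm]
  rcases hUc : U.card with _ | k
  · rw [Finset.card_eq_zero] at hUc
    simp [hUc]
  · rw [sum_lemma U (fun i j => if i = 0 then f (L.card+1) - f L.card else qq f L.card) k hUc,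
      Finset.Nat.sum_antidiagonal_eq_sum_range_succ_mk]

theorem fq_eq : ∀ (n : ℕ) (S : Finset ℕ), S.card ≤ n → N S av = fq S.card := by
  intro n
  induction n with
  | zero =>
    intro S hS
    have : S = ∅ := Finset.card_eq_zero.1 (by omega)
    subst this
    simp [fq]
  | succ n ih =>
    intro S hS
    rcases Nat.lt_or_ge S.card (n+1) with h | h
    · exact ih S (by omega)
    · have hc : S.card = n + 1 := by omega
      rw [f_rec' fq n ih S hc, hc, fq, ← f_rec' fq n ih (Finset.range (n+1)) (by simp)]

theorem fq_rec (n : ℕ) : fq (n+1) = ∑ p ∈ Finset.HasAntidiagonal.antidiagonal n, (bq p.2 * fq p.1 +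
      ∑ k ∈ Finset.range p.2, if k = 0 then fq (p.1+1) - fq p.1 else qq fq p.1) :=
  f_rec' fq n (fq_eq n) (Finset.range (n+1)) (by simp)

theorem fq_mono (n : ℕ) : fq n ≤ fq (n+1) := by
  have := Mid_one (L := Finset.range n) (u := n) (by simp)
  rw [fq_eq _ _ le_rfl, fq_eq _ (Finset.range n ∪ {n}) le_rfl, Finset.card_union_of_disjoint (by simp)] at this
  simp at this
  omega
theorem fq_zero : fq 0 = 1 := by simp [fq, N_empty av_nil]
theorem bq_zero : bq 0 = 1 := by simp [bq, N_empty avB_nil]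

end Helpers

theorem mk_shift (g : ℕ → ℚ) : PowerSeries.mk g = PowerSeries.C (g 0) + PowerSeries.X * PowerSeries.mk (fun n => g (n+1)) := by
  ext n
  cases n with
  | zero => simp
  | succ n => simp [PowerSeries.coeff_succ_X_mul]

theorem gf_final : ((1 : PowerSeries ℚ) - 6*PowerSeries.X + 11*PowerSeries.X^2 - 7*PowerSeries.X^3) * PowerSeries.mk (fun n => (fq n : ℚ)) =
      (1 - 2*PowerSeries.X) * (1 - 3*PowerSeries.X + PowerSeries.X^2) := by
  have hB := mk_shift (fun n => (bq n : ℚ))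
  have hF := mk_shift (fun n => (fq n : ℚ))
  have hQ := mk_shift (fun n => (qq fq n : ℚ))
  have hI := mk_shift (fun n => (1 : ℚ))
  have hI1 := mk_shift (fun n => if n = 0 then (0 : ℚ) else 1)
  have hJ := mk_shift (fun n => ((n - 1 : ℕ) : ℚ))
  have hJ1 := mk_shift (fun n => (n : ℚ))
  have hJ2 : PowerSeries.mk (fun n : ℕ => ((n + 1 : ℕ) : ℚ)) = PowerSeries.mk (fun n : ℕ => (n : ℚ)) + PowerSeries.mk (fun n : ℕ => (1 : ℚ)) := by
    ext n; simp
  have hQ2 : PowerSeries.mk (fun n => (qq fq (n+1) : ℚ)) =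
      PowerSeries.mk (fun n => (fq n : ℚ)) * PowerSeries.mk (fun n => (bq (n+1) : ℚ)) := by
    ext n
    rw [PowerSeries.coeff_mul, PowerSeries.coeff_mk, qq]
    push_cast
    apply Finset.sum_congr rfl
    intro p hp
    simp [mul_comm]
  have hB2 : PowerSeries.mk (fun n => (bq (n+1) : ℚ)) =
      1 * PowerSeries.mk (fun n => (bq n : ℚ)) + (PowerSeries.mk (fun n => (bq n : ℚ)) - 1) * PowerSeries.mk (fun n => (1 : ℚ)) := by
    ext n
    rw [map_add, PowerSeries.coeff_mul, PowerSeries.coeff_mul, PowerSeries.coeff_mk, bq_rec, ← Finset.sum_add_distrib]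
    push_cast
    apply Finset.sum_congr rfl
    rintro ⟨i, j⟩ hp
    by_cases h : i = 0 <;> simp [h, PowerSeries.coeff_one, bq_zero]
  have hF2 : PowerSeries.mk (fun n => (fq (n+1) : ℚ)) =
      PowerSeries.mk (fun n => (fq n : ℚ)) * PowerSeries.mk (fun n => (bq n : ℚ)) +
      (PowerSeries.mk (fun n => (fq (n+1) : ℚ)) - PowerSeries.mk (fun n => (fq n : ℚ))) * PowerSeries.mk (fun n => if n = 0 then (0 : ℚ) else 1)
      + PowerSeries.mk (fun n => (qq fq n : ℚ)) * PowerSeries.mk (fun n => ((n - 1 : ℕ) : ℚ)) := by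
    ext n
    rw [map_add, map_add, PowerSeries.coeff_mul, PowerSeries.coeff_mul, PowerSeries.coeff_mul, PowerSeries.coeff_mk, fq_rec,
      ← Finset.sum_add_distrib, ← Finset.sum_add_distrib]
    push_cast
    apply Finset.sum_congr rfl
    rintro ⟨i, j⟩ hp
    cases j with
    | zero => simp [mul_comm]
    | succ j =>
      rw [Finset.sum_range_succ']
      simp [Nat.cast_sub (fq_mono i)]
      ring
  have qz : qq fq 0 = 0 := rfl
  simp only [fq_zero, bq_zero, hQ2, hJ2, Nat.cast_one, map_one, qz, Nat.cast_zero, map_zero, zero_add, if_true, Nat.add_eq_zero_iff, one_ne_zero, and_false, if_false, Nat.zero_sub, Nat.add_sub_cancel] at hB hF hQ hI hI1 hJ hJ1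
  rw [hI1, hJ, hQ] at hF2
  generalize PowerSeries.mk (fun n => (fq n : ℚ)) = F at *
  generalize PowerSeries.mk (fun n => (bq n : ℚ)) = B at *
  generalize PowerSeries.mk (fun n => (fq (n+1) : ℚ)) = F1 at *
  generalize PowerSeries.mk (fun n => (bq (n+1) : ℚ)) = B1 at *
  generalize PowerSeries.mk (fun n => (1 : ℚ)) = I at *
  generalize PowerSeries.mk (fun n => (n : ℚ)) = J at *
  clear hQ hI1 hJ hJ2 hQ2
  have hx : (1 - PowerSeries.X : PowerSeries ℚ) ≠ 0 := by
    intro h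
    have := congrArg (PowerSeries.coeff 0) h
    simp at this
  have hD : (1 - 3 * PowerSeries.X + PowerSeries.X^2 : PowerSeries ℚ) ≠ 0 := by
    intro h
    have := congrArg (PowerSeries.constantCoeff) h
    simp at this
  generalize (PowerSeries.X : PowerSeries ℚ) = x at *
  have hI' : I * (1 - x) = 1 := by linear_combination hI
  have hJ' : J * (1-x)^2 = x := by linear_combination (1-x) * hJ1 + x * hI'
  have hB3 : B1 * (1-x) = B * (1-x) + (B-1) := by linear_combination (1-x) * hB2 + (B-1)*hI'
  have hB4 : B * (1 - 3*x+x^2) = 1 - 2*x := by linear_combination (1-x)*hB + x * hB3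
  have hF3 : F1 * (1-x)^2 = F * B * (1-x)^2 + (F1 - F) * x * (1-x) + x^3 * F * B1 := by
    linear_combination (1-x)^2 * hF2 + (F1-F)*x*(1-x) * hI' + x^2 * F * B1 * hJ'
  have hF4 : (F-1) * (1-x)^2 = x * F * B * (1-x)^2 + (F - 1 - x * F) * x * (1-x) + x^3 * F * (B-1) := by
    linear_combination x * hF3 + ((1-x)^2 - x*(1-x)) * hF - x^3*F*hB
  apply mul_left_cancel₀ hx
  linear_combination (1-3*x+x^2) * hF4 + (x*F*(1-x)^2+x^3*F) * hB4

theorem sub_ofFn {n : ℕ} (g : Fin n → ℕ) (a b c d : ℕ) : List.Sublist [a,b,c,d] (List.ofFn g) ↔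
    ∃ f : Fin 4 ↪o Fin n, a = g (f 0) ∧ b = g (f 1) ∧ c = g (f 2) ∧ d = g (f 3) := by
  rw [List.sublist_iff_exists_fin_orderEmbedding_get_eq]
  constructor
  · rintro ⟨f, hf⟩
    refine ⟨f.trans (Fin.castOrderIso (by simp)).toOrderEmbedding, ?_, ?_, ?_, ?_⟩
    · have := hf (0 : Fin 4); simp at this; exact this
    · have := hf (1 : Fin 4); simp at this; exact this
    · have := hf (2 : Fin 4); simp at this; exact this
    · have := hf (3 : Fin 4); simp at this; exact this
  · rintro ⟨f, h0, h1, h2, h3⟩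
    refine ⟨(show Fin 4 ↪o Fin (List.ofFn g).length from f.trans (Fin.castOrderIso (by simp)).toOrderEmbedding), ?_⟩
    intro ix
    change Fin 4 at ix
    fin_cases ix
    · simpa using h0
    · simpa using h1
    · simpa using h2
    · simpa using h3

theorem av_ofFn {n : ℕ} (π : Equiv.Perm (Fin n)) : av (List.ofFn (fun i => (π i : ℕ))) ↔
    ∀ σ ∈ ({![0,2,3,1], ![1,0,3,2], ![1,2,0,3]} : Set (Fin 4 → Fin 4)), ¬ ContainsPattern π σ := by
  constructor
  · intro h σ hσ
    rintro ⟨f, hf⟩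
    have := h _ _ _ _ ((sub_ofFn _ _ _ _ _).2 ⟨f, rfl, rfl, rfl, rfl⟩)
    simp only [Set.mem_insert_iff, Set.mem_singleton_iff] at hσ
    simp only [← Fin.lt_def, ← hf] at this
    revert this
    rcases hσ with rfl | rfl | rfl <;> decide
  · intro h a b c d hs
    obtain ⟨f, rfl, rfl, rfl, rfl⟩ := (sub_ofFn _ _ _ _ _).1 hs
    refine ⟨fun hc => h ![0,2,3,1] (by simp) ⟨f, ?_⟩, fun hc => h ![1,0,3,2] (by simp) ⟨f, ?_⟩,
      fun hc => h ![1,2,0,3] (by simp) ⟨f, ?_⟩⟩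
    all_goals
      intro a b
      simp only [Fin.val_fin_lt] at hc
      fin_cases a <;> fin_cases b <;> simp <;> order

theorem bridge (n : ℕ) : avoiderCount ({![0,2,3,1], ![1,0,3,2], ![1,2,0,3]} : Set (Fin 4 → Fin 4)) n = fq n := by
  have hP : ∀ π : Equiv.Perm (Fin n), IsP (Finset.range n) (List.ofFn (fun i => (π i : ℕ))) := by
    intro π
    refine ⟨List.nodup_ofFn.2 (Fin.val_injective.comp π.injective), ?_⟩
    intro x
    rw [List.mem_ofFn, Finset.mem_range]
    constructor
    · rintro ⟨i, rfl⟩; exact (π i).2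
    · intro h; exact ⟨π.symm ⟨x, h⟩, by simp⟩
  unfold avoiderCount fq N
  rw [← Fintype.card_coe, ← Nat.card_eq_fintype_card]
  refine Nat.card_eq_of_bijective (fun π => ⟨List.ofFn (fun i => (π.1 i : ℕ)),
    mem_PS.2 ⟨hP π.1, (av_ofFn π.1).2 π.2⟩⟩) ⟨?_, ?_⟩
  · intro π ρ h
    have h1 := congrArg Subtype.val h
    have h2 := List.ofFn_injective h1
    apply Subtype.ext
    ext i
    exact congrFun h2 i
  · rintro ⟨l, hl⟩
    obtain ⟨hI, ha⟩ := mem_PS.1 hl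
    have hlen : l.length = n := by rw [hI.length]; simp
    have hlt : ∀ i : Fin n, l[i.1]'(by omega) < n := fun i =>
      Finset.mem_range.1 ((hI.2 _).1 (List.getElem_mem _))
    have hinj : Function.Injective (fun i : Fin n => (⟨l[i.1]'(by omega), hlt i⟩ : Fin n)) := by
      intro i j h
      have h' := congrArg Fin.val h
      exact Fin.ext ((List.Nodup.getElem_inj_iff hI.1).1 h')
    have hl2 : List.ofFn (fun i => ((Equiv.ofBijective _ (Finite.injective_iff_bijective.1 hinj) i : Fin n) : ℕ)) = l := by
      apply List.ext_getElem
      · simp [hlen]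
      · intro i h1 h2; simp
    refine ⟨⟨Equiv.ofBijective _ (Finite.injective_iff_bijective.1 hinj), (av_ofFn _).1 (by rw [hl2]; exact ha)⟩, Subtype.ext hl2⟩

theorem statement_6 :
    ((1 : PowerSeries ℚ) - 6*X + 11*X^2 - 7*X^3) * avoiderGF ({![0,2,3,1], ![1,0,3,2], ![1,2,0,3]} : Set (Fin 4 → Fin 4)) =
      (1 - 2*X) * (1 - 3*X + X^2) := by
  have : avoiderGF ({![0,2,3,1], ![1,0,3,2], ![1,2,0,3]} : Set (Fin 4 → Fin 4)) = PowerSeries.mk (fun n => (fq n : ℚ)) := by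
    unfold avoiderGF
    simp only [bridge]
  rw [this]
  exact gf_final
end

section
/- Let T = {1243, 1342, 3412} (patterns of length 4). Then the generating function for T-avoiders satisfies, as formal power series over ℚ, (1-x)·(1-2x)·(1-3x)·(1-3x+x^2)^2·F_T(x) = 1 - 11x + 48x^2 - 104x^3 + 115x^4 - 61x^5 + 13x^6; that is, F_T(x) = (1-11x+48x^2-104x^3+115x^4-61x^5+13x^6)/((1-x)(1-2x)(1-3x)(1-3x+x^2)^2). -/
open PowerSeries

set_option linter.unusedSimpArgs false
namespace Av7

inductive Ty | I | E | N

abbrev Ltr := Ty × Bool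

def upt : Ty → Ty
  | Ty.I => Ty.I
  | Ty.E => Ty.I
  | Ty.N => Ty.N

def low : Ltr → List Ltr
  | (Ty.I, true) => [(Ty.E, true)]
  | (Ty.E, true) => [(Ty.E, true)]
  | _ => []

def rest : Ty → List Ltr → List Ltr
  | Ty.I, D => (D.filter (fun a => a.2)).map (fun _ => (Ty.N, true))
  | _, _ => []

def upd (U : List Ltr) (c : Ltr) (D : List Ltr) : List Ltr :=
  U.map (fun a => (a.1, false)) ++ (upt c.1, c.2) :: (low c ++ rest c.1 D)

def children : List Ltr → List Ltr → List (List Ltr)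
  | _, [] => []
  | U, c :: D => upd U c D :: children (U ++ [c]) D

def wcnt : List Ltr → ℕ → ℕ
  | _, 0 => 1
  | W, m + 1 => ((children [] W).map (fun W' => wcnt W' m)).sum

inductive St
  | A (p s : ℕ) | B (p s : ℕ) | CC (p s : ℕ) | D (p s : ℕ) | F (p s : ℕ) | H (p s : ℕ)

open St

def word : St → List Ltr
  | A p s => List.replicate p (Ty.I, false) ++ (Ty.I, true) :: (Ty.E, true) :: List.replicate s (Ty.N, true)
  | B p s => List.replicate p (Ty.I, false) ++ List.replicate s (Ty.N, true)
  | D p s => List.replicate p (Ty.I, false) ++ (List.replicate s (Ty.N, false) ++ [(Ty.N, true)])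
  | F p s => List.replicate p (Ty.I, false) ++ List.replicate s (Ty.N, false)
  | CC p s => List.replicate p (Ty.I, false) ++ (Ty.E, false) :: (List.replicate s (Ty.N, false) ++ [(Ty.N, true)])
  | H p s => List.replicate p (Ty.I, false) ++ (Ty.E, false) :: List.replicate s (Ty.N, false)

def kids : St → List St
  | A p s => (List.range p).map (fun i => B (i+1) (s+2)) ++ A p (s+1) :: A (p+1) 0 ::
      (List.range s).map (fun j => CC (p+1) j)
  | B p s => (List.range p).map (fun i => B (i+1) s) ++ (List.range s).map (fun j => D p j)
  | D p s => (List.range p).map (fun i => B (i+1) 1) ++ ((List.range s).map (fun j => F p (j+1)) ++ [D p s])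
  | F p s => (List.range p).map (fun i => F (i+1) 0) ++ (List.range s).map (fun j => F p (j+1))
  | CC p s => (List.range p).map (fun i => B (i+1) 1) ++ F (p+1) 0 :: ((List.range s).map (fun j => H p (j+1)) ++ [CC p s])
  | H p s => (List.range p).map (fun i => F (i+1) 0) ++ F (p+1) 0 :: (List.range s).map (fun j => H p (j+1))

lemma children_rep (U : List Ltr) (c : Ltr) (p : ℕ) (D : List Ltr) :
    children U (List.replicate p c ++ D) =
      (List.range p).map (fun i => upd (U ++ List.replicate i c) c (List.replicate (p-1-i) c ++ D))
        ++ children (U ++ List.replicate p c) D := by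
  induction p generalizing U with
  | zero => simp
  | succ p ih =>
    rw [List.replicate_succ, List.cons_append, children, ih, List.range_succ_eq_map]
    simp only [List.map_cons, List.map_map, List.cons_append]
    congr 1
    · simp
    · congr 1
      · apply List.map_congr_left
        intro i hi
        simp only [Function.comp, List.append_assoc, List.singleton_append]
        rw [← List.replicate_succ]
        congr 3
        omega
      · simp [List.replicate_succ]

lemma children_rep' (U : List Ltr) (c : Ltr) (p : ℕ) :
    children U (List.replicate p c) =
      (List.range p).map (fun i => upd (U ++ List.replicate i c) c (List.replicate (p-1-i) c)) := by
  have := children_rep U c p []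
  simpa [children] using this

lemma rep_cons {α : Type} (n : ℕ) (a : α) (l : List α) :
    List.replicate n a ++ a :: l = List.replicate (n+1) a ++ l := by
  rw [List.replicate_succ']; simp

lemma rep_cons2 {α : Type} (n : ℕ) (a : α) :
    List.replicate n a ++ [a] = List.replicate (n+1) a := by
  rw [List.replicate_succ']

lemma children_word (s : St) : children [] (word s) = (kids s).map word := by
  cases s <;> simp [word, kids, children_rep, children_rep', children, upd, upt, low, rest, rep_cons, rep_cons2,
    List.replicate_succ, Function.comp_def]


section ser
noncomputable section

abbrev R := PowerSeries ℚ

def y : R := (1 - X)⁻¹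
def t : R := (1 - 2*X)⁻¹
def u : R := (1 - 3*X)⁻¹
def k : R := (1 - 3*X + X^2)⁻¹

lemma hy : y * (1 - X) = 1 := PowerSeries.inv_mul_cancel _ (by simp)
lemma ht : t * (1 - 2*X) = 1 := PowerSeries.inv_mul_cancel _ (by simp)
lemma hu : u * (1 - 3*X) = 1 := PowerSeries.inv_mul_cancel _ (by simp)
lemma hk : k * (1 - 3*X + X^2) = 1 := PowerSeries.inv_mul_cancel _ (by simp)

def z : R := (1 - X) * t
def a1 : R := t
def a0 : R := (2 + X * t) * (1 - 2*X) * y * u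
def c1 : R := - X^2 * y^3
def c2 : R := X * y^2 * t
def c0 : R := (1 - X) * k * (-X*y - 2*X^2*y^2 + X*c1 + X*y*c2)
def b1 : R := -y - X*y^3
def b2 : R := y * t
def b0 : R := (1 - X) * k * (-1 - y^2 + X*b1 + X*y*(b2+c0+c2))

lemma hz : z * (1 - 2*X) = 1 - X := by unfold z; linear_combination (1-X) * ht
lemma ha0 : a0 * (1 - X - X*z) = 2 + X * a1 := by
  unfold a0 a1 z
  have h1 := hy; have h2 := ht; have h3 := hu
  grind
lemma hc0 : c0 * (1 - X - X*y) = -X*y - 2*X^2*y^2 + X*c1 + X*y*c2 := by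
  have h1 := hy; have h2 := hk
  have : (1 - X) * k * (1 - X - X*y) = 1 := by grind
  unfold c0
  linear_combination (-X*y - 2*X^2*y^2 + X*c1 + X*y*c2) * this
lemma hb0 : b0 * (1 - X - X*y) = -1 - y^2 + X*b1 + X*y*(b2+c0+c2) := by
  have h1 := hy; have h2 := hk
  have : (1 - X) * k * (1 - X - X*y) = 1 := by grind
  unfold b0
  linear_combination (-1 - y^2 + X*b1 + X*y*(b2+c0+c2)) * this

lemma hc1 : c1 * (1 - X) = - X^2*y^2 := by unfold c1; linear_combination (-X^2*y^2)*hy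
lemma hb1 : b1 * (1 - X) = - 1 - X*y^2 := by unfold b1; linear_combination (-1-X*y^2)*hy
lemma hc2 : c2 * (1 - X*y) = X*y^3 := by
  have h1 := hy; have h2 := ht
  unfold c2; grind
lemma hb2 : b2 * (1 - X*y) = y^2 := by
  have h1 := hy; have h2 := ht
  unfold b2; grind

open St

def G : St → R
  | A p s => z^p * (a0 + a1 * (s:R)) + y^p * (b0 + b1 * (s:R) + b2 * y^s + (p:R) * (c0 + c1 * (s:R) + c2 * y^s))
  | B p s => y * (s:R) * z^p + (y^s - y*(s:R) + (p:R)*(X*y*(y^s-1-X*y*(s:R)))) * y^p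
  | D p s => y * (z^p + y^(p+s) - y^p)
  | CC p s => y * (z^p + y^(p+1+s) - y^p)
  | F p s => y^(p+s)
  | H p s => y^(p+1+s)

lemma sF (p s : ℕ) : X * ((List.range s).map (fun j => G (F p (j+1)))).sum = y^p * (y^s - 1) := by
  induction s with
  | zero => simp
  | succ s ih =>
    rw [List.sum_range_succ, mul_add, ih]
    simp only [G]
    linear_combination (-y^p*y^s) * hy
lemma sH (p s : ℕ) : X * ((List.range s).map (fun j => G (H p (j+1)))).sum = y^(p+1) * (y^s - 1) := by
  induction s with
  | zero => simp
  | succ s ih =>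
    rw [List.sum_range_succ, mul_add, ih]
    simp only [G]
    linear_combination (-y^(p+1)*y^s) * hy
lemma sF0 (p : ℕ) : X * ((List.range p).map (fun j => G (F (j+1) 0))).sum = y^p - 1 := by
  induction p with
  | zero => simp
  | succ s ih =>
    rw [List.sum_range_succ, mul_add, ih]
    simp only [G]
    linear_combination (-y^s) * hy
lemma sD (p s : ℕ) : X * ((List.range s).map (fun j => G (D p j))).sum
    = X*y*(s:R)*(z^p - y^p) + y^p * (y^s - 1) := by
  induction s with
  | zero => simp
  | succ s ih =>
    rw [List.sum_range_succ, mul_add, ih]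
    simp only [G]
    push_cast
    linear_combination (-y^p*y^s) * hy
lemma sC (p s : ℕ) : X * ((List.range s).map (fun j => G (CC p j))).sum
    = X*y*(s:R)*(z^p - y^p) + y^(p+1) * (y^s - 1) := by
  induction s with
  | zero => simp
  | succ s ih =>
    rw [List.sum_range_succ, mul_add, ih]
    simp only [G]
    push_cast
    linear_combination (-y^(p+1)*y^s) * hy
lemma sB (p s : ℕ) : 1 + X * ((List.range p).map (fun i => G (B (i+1) s))).sum
    = z^p * (s:R) + y^p * (1 - (s:R) + (p:R)*(X*y*(y^s - 1 - X*y*(s:R)))) := by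
  induction p with
  | zero => simp
  | succ p ih =>
    rw [List.sum_range_succ, mul_add, ← add_assoc, ih]
    simp only [G]
    push_cast
    have h1 := hy; have h2 := hz
    have hz' : z * (1 - X * y) = 1 := by unfold z; have := ht; grind
    have e1 : z^p * (s:R) + X * (y * (s:R) * z^(p+1)) = z^(p+1) * (s:R) := by
      linear_combination (-(s:R)*z^p)*hz'
    rw [pow_succ y p]
    generalize y^s = Y at *
    generalize y^p = Q at *
    generalize (s:R) = S at *
    generalize (p:R) = P at *
    linear_combination e1 + (-Q * (1 - S + P*(X*y*(Y - 1 - X*y*S))) - Q*X*y*(Y-1-X*y*S+S)) * h1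

lemma G_eq (s : St) : G s = 1 + X * ((kids s).map G).sum := by
  have h1 := hy
  cases s with
  | A p s =>
    simp only [kids, List.map_append, List.map_map, List.map_cons, List.sum_append, List.sum_cons, Function.comp_def]
    simp only [mul_add, sC]
    rw [← add_assoc, sB]
    simp only [G]
    push_cast
    have hza : a1 * (1 - X) = 1 + X * y * z := by
      have := ht
      unfold a1 z; grind
    linear_combination z^p * ha0 + z^p * (s:R) * hza + y^p * hb0 + y^p*(s:R) * hb1 + y^p*y^s*hb2 + y^p*(p:R)*hc0 + y^p*(p:R)*(s:R)*hc1 + y^p*(p:R)*y^s*hc2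
  | B p s =>
    simp only [kids, List.map_append, List.map_map, List.sum_append, Function.comp_def]
    rw [mul_add, ← add_assoc, sB, sD]
    simp only [G]
    linear_combination (s:R) * (z^p - y^p)*h1
  | D p s =>
    simp only [kids, List.map_append, List.map_map, List.map_cons, List.map_nil, List.sum_append, List.sum_cons, List.sum_nil, Function.comp_def]
    simp only [mul_add, sF]
    rw [← add_assoc, sB]
    simp only [G]
    push_cast
    linear_combination (z^p - y^p + y^(p+s) + (-X*y*(p:R)*y^p))*h1
  | F p s =>
    simp only [kids, List.map_append, List.map_map, List.sum_append, Function.comp_def]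
    rw [mul_add, ← add_assoc, sF, sF0]
    simp only [G]
    ring
  | CC p s =>
    simp only [kids, List.map_append, List.map_map, List.map_cons, List.map_nil, List.sum_append, List.sum_cons, List.sum_nil, Function.comp_def]
    simp only [mul_add, sH]
    rw [← add_assoc, sB]
    simp only [G]
    push_cast
    linear_combination (z^p - y^p + y^(p+1+s) + y^p + (-X*y*(p:R)*y^p))*h1
  | H p s =>
    simp only [kids, List.map_append, List.map_map, List.map_cons, List.sum_append, List.sum_cons, Function.comp_def]
    simp only [mul_add, sH]
    rw [← add_assoc, sF0]
    simp only [G]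
    linear_combination (y^p)*h1

lemma coeff_sum (n : ℕ) (l : List St) :
    PowerSeries.coeff n ((l.map G).sum) = (l.map (fun s => PowerSeries.coeff n (G s))).sum := by
  induction l with
  | nil => simp
  | cons a l ih => simp [ih]

lemma wcnt_eq (n : ℕ) : ∀ s : St, ((wcnt (word s) n : ℕ) : ℚ) = PowerSeries.coeff n (G s) := by
  induction n with
  | zero => intro s; rw [G_eq]; simp [wcnt]
  | succ n ih =>
    intro s
    rw [G_eq, map_add, PowerSeries.coeff_succ_X_mul, coeff_sum, wcnt, children_word]
    simp only [← ih, List.map_map]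
    simp [Function.comp_def, PowerSeries.coeff_one]

lemma final : ((1 : PowerSeries ℚ) - X) * (1 - 2*X) * (1 - 3*X) * (1 - 3*X + X^2)^2 * (1 + X * G (A 0 0)) =
      1 - 11*X + 48*X^2 - 104*X^3 + 115*X^4 - 61*X^5 + 13*X^6 := by
  simp only [G]
  simp
  have h1 := hy; have h2 := ht; have h3 := hu; have h4 := hk
  have hw : (1 - X : R) ≠ 0 := by
    intro h; rw [h, mul_zero] at h1; exact zero_ne_one h1
  have f2 : y^2 * (1-X)^2 = 1 := by rw [← mul_pow, h1, one_pow]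
  have f3 : y^3 * (1-X)^3 = 1 := by rw [← mul_pow, h1, one_pow]
  have e1 : (1-X)^2 * (1-2*X) * ((1 - 3*X + X^2) * c0) =
      (1-2*X)*(-X*(1-X)^2 - 2*X^2*(1-X) - X^3) + X^2 := by
    unfold c0 c1 c2
    linear_combination (1-X)^3*(1-2*X)*(-X*y - 2*X^2*y^2 + X*(-X^2*y^3) + X*y*(X*y^2*t)) * h4
      + (1-2*X)*(-X*(1-X)^2)*h1 + (1-2*X)*(1-X)*(-2*X^2)*f2 + (1-2*X)*(-X^3)*f3
      + X^2*t*(1-2*X)*f3 + X^2*h2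
  have e2 : (1-X)^2 * (1-2*X) * ((1 - 3*X + X^2)^2 * b0) =
      (1-2*X)*(1 - 3*X + X^2)*(-(1-X)^3 - (1-X) - X*(1-X)^2 - X^2) + X*(1 - 3*X + X^2)*(1-X)
       + X^2*(1 - 3*X + X^2) + X*((1-2*X)*(-X*(1-X)^2 - 2*X^2*(1-X) - X^3) + X^2) := by
    have g : (1 - 3*X + X^2) * b0 = (1 - X) * (-1 - y^2 + X*b1 + X*y*(b2+c0+c2)) := by
      unfold b0
      linear_combination (1 - X) * (-1 - y^2 + X*b1 + X*y*(b2+c0+c2)) * h4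
    have g2 : (1-X)^3 * (-1 - y^2 + X*b1) = -(1-X)^3 - (1-X) - X*(1-X)^2 - X^2 := by
      unfold b1
      linear_combination -(1-X)*f2 - X*(1-X)^2*h1 - X^2*f3
    have g3 : (1-X)^3 * (1-2*X) * (y*(b2+c2)) = (1-X) + X := by
      unfold b2 c2
      linear_combination (1-X)*(1-2*X)*t*f2 + (1-X)*h2 + X*t*(1-2*X)*f3 + X*h2
    linear_combination (1-X)^2*(1-2*X)*(1 - 3*X + X^2)*g + (1-2*X)*(1 - 3*X + X^2)*g2
      + X*(1 - 3*X + X^2)*g3 + X*e1 + X*(1-X)^2*(1-2*X)*(1 - 3*X + X^2)*c0*h1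
  have e3 : (1-X)*(1-3*X)*a0 = 2 - 3*X := by
    unfold a0
    linear_combination (1-3*X)*u*(2+X*t)*(1-2*X)*h1 + (2+X*t)*(1-2*X)*h3 + X*h2
  have e4 : (1-X)*(1-2*X)*b2 = 1 := by
    unfold b2
    linear_combination (1-2*X)*t*h1 + h2
  apply mul_left_cancel₀ hw
  linear_combination X*(1-3*X)*e2 + X*(1-X)*(1-2*X)*(1 - 3*X + X^2)^2*e3
    + X*(1-X)*(1-3*X)*(1 - 3*X + X^2)^2*e4
end
end ser


section comb

def sh (v a : ℕ) : ℕ := if a < v then a else a + 1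

lemma sh_lt (v a b : ℕ) : sh v a < sh v b ↔ a < b := by unfold sh; split_ifs <;> omega
lemma lt_sh (v a : ℕ) : v < sh v a ↔ v ≤ a := by unfold sh; split_ifs <;> omega
lemma sh_lt' (v a : ℕ) : sh v a < v ↔ a < v := by unfold sh; split_ifs <;> omega
lemma le_sh (v w a : ℕ) (h : w ≤ v) : w ≤ sh v a ↔ w ≤ a := by unfold sh; split_ifs <;> omega
lemma lt_sh2 (v w a : ℕ) (h : w ≤ v) : sh v a < w ↔ a < w := by unfold sh; split_ifs <;> omega
lemma succ_le_sh (v w a : ℕ) (h : v ≤ w) : w + 1 ≤ sh v a ↔ w ≤ a := by unfold sh; split_ifs <;> omega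
lemma sh_lt_succ (v w a : ℕ) (h : v ≤ w) : sh v a < w + 1 ↔ a < w := by unfold sh; split_ifs <;> omega

def insf {n : ℕ} (v : ℕ) (f : Fin n → ℕ) : Fin (n+1) → ℕ := Fin.cons v (fun i => sh v (f i))

@[simp] lemma insf_zero {n : ℕ} (v : ℕ) (f : Fin n → ℕ) : insf v f 0 = v := rfl
@[simp] lemma insf_succ {n : ℕ} (v : ℕ) (f : Fin n → ℕ) (i : Fin n) : insf v f i.succ = sh v (f i) := rfl

def Vv {n : ℕ} (f : Fin n → ℕ) (w : ℕ) : Prop :=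
  ∀ i j k, i < j → j < k → w ≤ f i → w ≤ f k → f i < f j → f k < f j → False
def Kk {n : ℕ} (f : Fin n → ℕ) (w : ℕ) : Prop :=
  ∃ i j k, i < j ∧ j < k ∧ w ≤ f i ∧ f k < w ∧ f j < f k
def Lo {n : ℕ} (f : Fin n → ℕ) (w : ℕ) : Prop :=
  ∀ i j, i < j → f i < f j → f j < w → False
def Pp {n : ℕ} (f : Fin n → ℕ) (v w : ℕ) : Prop :=
  ∃ j k, j < k ∧ v ≤ f j ∧ f k < f j ∧ w ≤ f k
def Avo {n : ℕ} (f : Fin n → ℕ) : Prop :=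
  (∀ i j k l, i < j → j < k → k < l → f i < f j → f i < f l → f j < f k → f l < f k → False) ∧
  (∀ i j k l, i < j → j < k → k < l → f k < f l → f l < f i → f i < f j → False)
def Al {n : ℕ} (f : Fin n → ℕ) (w : ℕ) : Prop := w ≤ n ∧ Vv f w ∧ ¬ Kk f w
def IsP {n : ℕ} (f : Fin n → ℕ) : Prop := (∀ i, f i < n) ∧ ∀ a < n, ∃ i, f i = a

lemma IsP.ins {n v : ℕ} {f : Fin n → ℕ} (h : IsP f) (hv : v ≤ n) : IsP (insf v f) := by
  refine ⟨fun i => ?_, fun a ha => ?_⟩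
  · refine Fin.cases ?_ (fun i => ?_) i
    · simp; omega
    · have := h.1 i
      simp [sh]; split_ifs <;> omega
  · rcases lt_trichotomy a v with h1 | h1 | h1
    · obtain ⟨i, hi⟩ := h.2 a (by omega)
      exact ⟨i.succ, by simp [sh, hi, h1]⟩
    · exact ⟨0, by simp [h1]⟩
    · obtain ⟨i, hi⟩ := h.2 (a-1) (by omega)
      exact ⟨i.succ, by simp only [insf_succ, sh, hi]; split_ifs <;> omega⟩

lemma avo_ins {n v : ℕ} (f : Fin n → ℕ) : Avo (insf v f) ↔ Avo f ∧ Vv f v ∧ ¬ Kk f v := by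
  simp only [Avo, Vv, Kk, Fin.forall_fin_succ, Fin.succ_lt_succ_iff, insf_zero, insf_succ, Fin.succ_pos,
    Fin.not_lt_zero, lt_irrefl, false_imp_iff, imp_true_iff, true_imp_iff, forall_const, sh_lt, lt_sh, sh_lt', true_and, and_true]
  constructor
  · rintro ⟨⟨h1, h2⟩, h3, h4⟩
    exact ⟨⟨h2, h4⟩, h1, fun ⟨i, j, k, a, b, c, d, e⟩ => h3 i j k a b e d c⟩
  · rintro ⟨⟨h2, h4⟩, h1, h3⟩
    exact ⟨⟨h1, h2⟩, fun i j k a b c d e => h3 ⟨i, j, k, a, b, e, d, c⟩, h4⟩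

lemma V_hi {n v w : ℕ} (f : Fin n → ℕ) (h : v ≤ w) : Vv (insf v f) (w+1) ↔ Vv f w := by
  have : ¬ (w + 1 ≤ v) := by omega
  simp only [Vv, Fin.forall_fin_succ, Fin.succ_lt_succ_iff, insf_zero, insf_succ, Fin.succ_pos,
    Fin.not_lt_zero, lt_irrefl, false_imp_iff, imp_true_iff, true_imp_iff, forall_const, sh_lt, succ_le_sh _ _ _ h, this, true_and]

lemma V_lo {n v w : ℕ} (f : Fin n → ℕ) (h : w ≤ v) : Vv (insf v f) w ↔ Vv f w ∧ ¬ Pp f v w := by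
  simp only [Vv, Pp, Fin.forall_fin_succ, Fin.succ_lt_succ_iff, insf_zero, insf_succ, Fin.succ_pos,
    Fin.not_lt_zero, lt_irrefl, false_imp_iff, imp_true_iff, true_imp_iff, forall_const, sh_lt, le_sh _ _ _ h, lt_sh, h, true_and,
    not_exists, not_and]
  constructor
  · rintro ⟨h1, h2⟩
    exact ⟨h2, fun i j a b c d => h1 i j a d b c⟩
  · rintro ⟨h2, h1⟩
    exact ⟨fun i j a b c d => h1 i j a c d b, h2⟩

lemma K_hi {n v w : ℕ} (f : Fin n → ℕ) (h : v ≤ w) : Kk (insf v f) (w+1) ↔ Kk f w := by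
  have : ¬ (w + 1 ≤ v) := by omega
  simp only [Kk, Fin.exists_fin_succ, Fin.succ_lt_succ_iff, insf_zero, insf_succ, Fin.succ_pos,
    Fin.not_lt_zero, lt_irrefl, false_and, and_false, exists_false, false_or, or_false, sh_lt, succ_le_sh _ _ _ h, sh_lt_succ _ _ _ h, this, true_and]

lemma K_lo {n v w : ℕ} (f : Fin n → ℕ) (h : w ≤ v) : Kk (insf v f) w ↔ ¬ Lo f w := by
  simp only [Kk, Lo, Fin.exists_fin_succ, Fin.succ_lt_succ_iff, insf_zero, insf_succ, Fin.succ_pos,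
    Fin.not_lt_zero, lt_irrefl, false_and, and_false, exists_false, false_or, or_false, sh_lt, le_sh _ _ _ h, lt_sh2 _ _ _ h, h, true_and]
  constructor
  · rintro (⟨i, j, a, b, c⟩ | ⟨i, j, k, a, b, c, d, e⟩) h
    · exact h i j a c b
    · exact h j k b e d
  · intro h
    left
    by_contra h'
    exact h fun i j a b c => h' ⟨i, j, a, c, b⟩

lemma Lo.notK {n w : ℕ} {f : Fin n → ℕ} (h : Lo f w) : ¬ Kk f w := by
  rintro ⟨i, j, k, a, b, c, d, e⟩
  exact h j k b e d

lemma Al_hi {n v w : ℕ} (f : Fin n → ℕ) (h : v ≤ w) : Al (insf v f) (w+1) ↔ Al f w := by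
  simp [Al, V_hi f h, K_hi f h]

lemma Al_lo {n v w : ℕ} (f : Fin n → ℕ) (hv : v ≤ n) (h : w ≤ v) :
    Al (insf v f) w ↔ Al f w ∧ Lo f w ∧ ¬ Pp f v w := by
  simp only [Al, V_lo f h, K_lo f h, not_not]
  constructor
  · rintro ⟨a, ⟨b, c⟩, d⟩
    exact ⟨⟨by omega, b, d.notK⟩, d, c⟩
  · rintro ⟨⟨a, b, _⟩, d, c⟩
    exact ⟨by omega, ⟨b, c⟩, d⟩

lemma Lo_hi {n v w : ℕ} (f : Fin n → ℕ) (hf : IsP f) (h : v ≤ w) (hw : w ≤ n) :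
    Lo (insf v f) (w+1) ↔ w = v ∧ Lo f v := by
  simp only [Lo, Fin.forall_fin_succ, Fin.succ_lt_succ_iff, insf_zero, insf_succ, Fin.succ_pos,
    Fin.not_lt_zero, lt_irrefl, false_imp_iff, imp_true_iff, true_imp_iff, forall_const, sh_lt, lt_sh, sh_lt_succ _ _ _ h, true_and]
  constructor
  · rintro ⟨h1, h2⟩
    have : w = v := by
      by_contra hne
      obtain ⟨i, hi⟩ := hf.2 v (by omega)
      exact h1 i (by omega) (by omega)
    subst this
    exact ⟨rfl, h2⟩
  · rintro ⟨rfl, h2⟩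
    exact ⟨fun i a b => by omega, h2⟩

lemma Lo_lo {n v w : ℕ} (f : Fin n → ℕ) (h : w ≤ v) : Lo (insf v f) w ↔ Lo f w := by
  simp only [Lo, Fin.forall_fin_succ, Fin.succ_lt_succ_iff, insf_zero, insf_succ, Fin.succ_pos,
    Fin.not_lt_zero, lt_irrefl, false_imp_iff, imp_true_iff, true_imp_iff, forall_const, sh_lt, lt_sh, lt_sh2 _ _ _ h, true_and]
  constructor
  · exact fun h => h.2
  · exact fun h2 => ⟨fun i a b => by omega, h2⟩

lemma Pp_hh {n v a b : ℕ} (f : Fin n → ℕ) (h : v ≤ a) (h' : v ≤ b) :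
    Pp (insf v f) (a+1) (b+1) ↔ Pp f a b := by
  have : ¬ (a + 1 ≤ v) := by omega
  simp only [Pp, Fin.exists_fin_succ, Fin.succ_lt_succ_iff, insf_zero, insf_succ, Fin.succ_pos,
    Fin.not_lt_zero, lt_irrefl, false_and, and_false, exists_false, false_or, or_false, sh_lt, succ_le_sh _ _ _ h, succ_le_sh _ _ _ h', this, true_and]

lemma Pp_hl {n v a b : ℕ} (f : Fin n → ℕ) (h : v ≤ a) (h' : b ≤ v) :
    Pp (insf v f) (a+1) b ↔ Pp f a b := by
  have : ¬ (a + 1 ≤ v) := by omega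
  simp only [Pp, Fin.exists_fin_succ, Fin.succ_lt_succ_iff, insf_zero, insf_succ, Fin.succ_pos,
    Fin.not_lt_zero, lt_irrefl, false_and, and_false, exists_false, false_or, or_false, sh_lt, succ_le_sh _ _ _ h, le_sh _ _ _ h', this, true_and]

lemma Pp_ll {n v a b : ℕ} (f : Fin n → ℕ) (hf : IsP f) (hv : v ≤ n) (h : a ≤ v) (h' : b ≤ v) :
    Pp (insf v f) a b ↔ Pp f a b ∨ b < v := by
  simp only [Pp, Fin.exists_fin_succ, Fin.succ_lt_succ_iff, insf_zero, insf_succ, Fin.succ_pos,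
    Fin.not_lt_zero, lt_irrefl, false_and, and_false, exists_false, false_or, or_false, sh_lt, sh_lt', le_sh _ _ _ h, le_sh _ _ _ h', h, true_and]
  constructor
  · rintro (⟨i, c, d⟩ | h)
    · right; omega
    · left; exact h
  · rintro (h | h1)
    · right; exact h
    · left
      obtain ⟨i, hi⟩ := hf.2 b (by omega)
      exact ⟨i, by omega, by omega⟩


def Q : Ty → Prop → Prop
  | Ty.I, _ => False
  | Ty.E, b => ¬ b
  | Ty.N, _ => True

structure HW {n : ℕ} (f : Fin n → ℕ) (l : List (ℕ × Ltr)) : Prop where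
  srt : l.Pairwise (fun a b => b.1 < a.1)
  al : ∀ w, Al f w ↔ ∃ e ∈ l, e.1 = w
  lo : ∀ e ∈ l, (e.2.2 = true ↔ Lo f e.1)
  pp : ∀ e ∈ l, ∀ e' ∈ l, e'.1 ≤ e.1 → (Pp f e.1 e'.1 ↔ Q e.2.1 (e'.1 = e.1))

def lowS (c : ℕ × Ltr) : List (ℕ × Ltr) := (low c.2).map (fun b => (c.1, b))

def restS : Ty → List (ℕ × Ltr) → List (ℕ × Ltr)
  | Ty.I, T => (T.filter (fun a => a.2.2)).map (fun a => (a.1, Ty.N, true))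
  | _, _ => []

def updS (U : List (ℕ × Ltr)) (c : ℕ × Ltr) (D : List (ℕ × Ltr)) : List (ℕ × Ltr) :=
  U.map (fun a => (a.1 + 1, a.2.1, false)) ++ (c.1 + 1, upt c.2.1, c.2.2) :: (lowS c ++ restS c.2.1 D)

lemma updS_snd (U : List (ℕ × Ltr)) (c : ℕ × Ltr) (D : List (ℕ × Ltr)) :
    (updS U c D).map Prod.snd = upd (U.map Prod.snd) c.2 (D.map Prod.snd) := by
  obtain ⟨v, ty, b⟩ := c
  have : ∀ D : List (ℕ × Ltr), (restS ty D).map Prod.snd = rest ty (D.map Prod.snd) := by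
    intro D
    cases ty <;> simp [restS, rest, List.filter_map, Function.comp_def]
  simp [updS, upd, lowS, Function.comp_def, this]

lemma mem_updS (U : List (ℕ × Ltr)) (v : ℕ) (ty : Ty) (b : Bool) (D : List (ℕ × Ltr)) (e : ℕ × Ltr) :
    e ∈ updS U (v, ty, b) D ↔ (∃ a ∈ U, e = (a.1 + 1, a.2.1, false)) ∨ e = (v + 1, upt ty, b) ∨
      (b = true ∧ ty ≠ Ty.N ∧ e = (v, Ty.E, true)) ∨
      (ty = Ty.I ∧ ∃ a ∈ D, a.2.2 = true ∧ e = (a.1, Ty.N, true)) := by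
  cases ty <;> cases b <;>
    simp only [updS, lowS, low, restS, List.mem_append, List.mem_cons, List.mem_map, List.mem_filter,
      List.not_mem_nil, List.map_nil, List.map_cons, false_or, or_false, true_and, reduceCtorEq, false_and,
      and_false, ne_eq, not_true_eq_false, not_false_eq_true, and_assoc, @eq_comm _ _ e]

set_option maxHeartbeats 1000000 in
lemma HW.step {n : ℕ} {f : Fin n → ℕ} (hf : IsP f) {U D : List (ℕ × Ltr)} {c : ℕ × Ltr}
    (h : HW f (U ++ c :: D)) : HW (insf c.1 f) (updS U c D) := by
  obtain ⟨v, ty, b⟩ := c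
  obtain ⟨srt, al, lo, pp⟩ := h
  have hmc : (v, ty, b) ∈ U ++ (v, ty, b) :: D := by simp
  have hmU : ∀ a ∈ U, a ∈ U ++ (v, ty, b) :: D := by intro a ha; simp [ha]
  have hmD : ∀ a ∈ D, a ∈ U ++ (v, ty, b) :: D := by intro a ha; simp [ha]
  have hn : ∀ a ∈ U ++ (v, ty, b) :: D, a.1 ≤ n := fun a ha => ((al a.1).2 ⟨a, ha, rfl⟩).1
  have hv : v ≤ n := hn _ hmc
  have hlo : b = true ↔ Lo f v := lo _ hmc
  rw [List.pairwise_append, List.pairwise_cons] at srt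
  obtain ⟨s1, ⟨s2, s3⟩, s4⟩ := srt
  have hU : ∀ a ∈ U, v < a.1 := fun a ha => s4 a ha (v, ty, b) (by simp)
  have hD : ∀ a ∈ D, a.1 < v := fun a ha => s2 a ha
  refine ⟨?_, ?_, ?_, ?_⟩
  · rw [updS, List.pairwise_append, List.pairwise_cons, List.pairwise_append]
    have hlow : ∀ a ∈ lowS (v, ty, b), a.1 = v := by
      intro a ha; simp only [lowS, List.mem_map] at ha; obtain ⟨_, _, rfl⟩ := ha; rfl
    have hres : ∀ a ∈ restS ty D, a.1 < v := by
      intro a ha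
      cases ty <;> simp [restS] at ha
      obtain ⟨s, ⟨_, hx⟩, rfl⟩ := ha
      have := hD _ hx
      exact this
    refine ⟨?_, ⟨?_, ?_, ?_, ?_⟩, ?_⟩
    · rw [List.pairwise_map]; exact s1.imp (by intros; simpa)
    · intro a ha
      rcases List.mem_append.1 ha with ha | ha
      · have := hlow a ha; simp; omega
      · have := hres a ha; simp; omega
    · cases ty <;> cases b <;> simp [lowS, low]
    · cases ty <;> simp only [restS, List.Pairwise.nil]
      rw [List.pairwise_map]; exact (s3.filter _).imp (by intros; simpa)
    · intro a ha a' ha'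
      have := hlow a ha; have := hres a' ha'; omega
    · intro a ha a' ha'
      obtain ⟨a, ham, rfl⟩ := List.mem_map.1 ha
      have h1 := hU a ham
      rcases List.mem_cons.1 ha' with rfl | ha'
      · simpa using h1
      · rcases List.mem_append.1 ha' with ha' | ha'
        · have := hlow _ ha'; simp; omega
        · have := hres _ ha'; simp; omega
  · intro w
    rcases Nat.lt_or_ge v w with hw | hw
    · obtain ⟨w, rfl⟩ : ∃ w', w = w' + 1 := ⟨w - 1, by omega⟩
      have hw : v ≤ w := by omega
      rw [Al_hi f hw, al]
      constructor
      · rintro ⟨a, ha, rfl⟩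
        simp only [List.mem_append, List.mem_cons] at ha
        rcases ha with ha | rfl | ha
        · exact ⟨(a.1+1, a.2.1, false), (mem_updS ..).2 (Or.inl ⟨a, ha, rfl⟩), rfl⟩
        · exact ⟨(v+1, upt ty, b), (mem_updS ..).2 (Or.inr (Or.inl rfl)), rfl⟩
        · have := hD a ha; omega
      · rintro ⟨a, ha, ha'⟩
        rcases (mem_updS ..).1 ha with ⟨a, h1, rfl⟩ | rfl | ⟨_, _, rfl⟩ | ⟨_, a, h1, _, rfl⟩
        · exact ⟨a, hmU a h1, by simpa using ha'⟩
        · exact ⟨_, hmc, by simpa using ha'⟩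
        · simp at ha'; omega
        · have := hD a h1; simp at ha'; omega
    · rw [Al_lo f hv hw, al]
      constructor
      · rintro ⟨⟨a, ha, rfl⟩, h1, h2⟩
        have h3 := pp _ hmc a ha hw
        have h4 := (lo a ha).2 h1
        simp only [List.mem_append, List.mem_cons] at ha
        rcases ha with ha | rfl | ha
        · have := hU a ha; omega
        · refine ⟨(v, Ty.E, true), (mem_updS ..).2 (Or.inr (Or.inr (Or.inl ⟨h4, ?_, rfl⟩))), rfl⟩
          rintro rfl
          exact h2 (h3.2 trivial)
        · refine ⟨(a.1, Ty.N, true), (mem_updS ..).2 (Or.inr (Or.inr (Or.inr ⟨?_, a, ha, h4, rfl⟩))), rfl⟩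
          have := hD a ha
          cases ty
          · rfl
          · exact absurd (h3.2 (by simp [Q]; omega)) h2
          · exact absurd (h3.2 trivial) h2
      · rintro ⟨a, ha, ha'⟩
        rcases (mem_updS ..).1 ha with ⟨a, h1, rfl⟩ | rfl | ⟨h1, h2, rfl⟩ | ⟨rfl, a, h1, h2, rfl⟩
        · have := hU a h1; simp at ha'; omega
        · simp at ha'; omega
        · simp only at ha'
          subst ha'
          refine ⟨⟨_, hmc, rfl⟩, hlo.1 h1, ?_⟩
          have h3 := pp _ hmc _ hmc le_rfl
          rw [h3]
          cases ty <;> simp_all [Q]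
        · simp only at ha'
          subst ha'
          refine ⟨⟨_, hmD _ h1, rfl⟩, (lo _ (hmD _ h1)).1 h2, ?_⟩
          rw [pp _ hmc _ (hmD _ h1) hw]
          simp [Q]
  · intro e he
    rcases (mem_updS ..).1 he with ⟨a, h1, rfl⟩ | rfl | ⟨h1, h2, rfl⟩ | ⟨rfl, a, h1, h2, rfl⟩
    · have := hU a h1
      simp only
      rw [Lo_hi f hf this.le (hn _ (hmU _ h1))]
      simp; intro; omega
    · simp only
      rw [Lo_hi f hf le_rfl hv]; simp [hlo]
    · simp only
      rw [Lo_lo f le_rfl]; simp [← hlo, h1]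
    · have := hD a h1
      simp only
      rw [Lo_lo f this.le, ← lo _ (hmD _ h1)]; simp [h2]
  · intro e he e' he' hle
    have pvv := pp _ hmc _ hmc le_rfl
    rcases (mem_updS ..).1 he with ⟨a, h1, rfl⟩ | rfl | ⟨h1, h2, rfl⟩ | ⟨rfl, a, h1, h2, rfl⟩
    · have g1 := hU a h1
      rcases (mem_updS ..).1 he' with ⟨a', h1', rfl⟩ | rfl | ⟨h1', h2', rfl⟩ | ⟨rfl, a', h1', h2', rfl⟩
      · have g2 := hU a' h1'
        simp only at hle ⊢
        rw [Pp_hh f g1.le g2.le, pp _ (hmU _ h1) _ (hmU _ h1') (by omega)]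
        simp
      · simp only at hle ⊢
        rw [Pp_hh f g1.le le_rfl, pp _ (hmU _ h1) _ hmc (by simp; omega)]
        simp
      · simp only at hle ⊢
        rw [Pp_hl f g1.le le_rfl, pp _ (hmU _ h1) _ hmc (by simp; omega)]
        have e1 : ¬ (v = a.1) := by omega
        have e2 : ¬ (v = a.1 + 1) := by omega
        simp [e1, e2]
      · have g2 := hD a' h1'
        simp only at hle ⊢
        rw [Pp_hl f g1.le g2.le, pp _ (hmU _ h1) _ (hmD _ h1') (by omega)]
        have e1 : ¬ (a'.1 = a.1) := by omega
        have e2 : ¬ (a'.1 = a.1 + 1) := by omega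
        simp [e1, e2]
    · rcases (mem_updS ..).1 he' with ⟨a', h1', rfl⟩ | rfl | ⟨h1', h2', rfl⟩ | ⟨rfl, a', h1', h2', rfl⟩
      · have g2 := hU a' h1'
        simp only at hle; omega
      · simp only at hle ⊢
        rw [Pp_hh f le_rfl le_rfl, pvv]
        cases ty <;> simp [Q, upt]
      · simp only at hle ⊢
        rw [Pp_hl f le_rfl le_rfl, pvv]
        cases ty <;> simp_all [Q, upt]
      · have g2 := hD a' h1'
        simp only at hle ⊢
        rw [Pp_hl f le_rfl g2.le, pp _ hmc _ (hmD _ h1') (by simp; omega)]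
        simp [Q, upt]
    · rcases (mem_updS ..).1 he' with ⟨a', h1', rfl⟩ | rfl | ⟨h1', h2', rfl⟩ | ⟨rfl, a', h1', h2', rfl⟩
      · have g2 := hU a' h1'
        simp only at hle; omega
      · simp only at hle; omega
      · simp only at hle ⊢
        rw [Pp_ll f hf hv le_rfl le_rfl, pvv]
        cases ty <;> simp_all [Q]
      · have g2 := hD a' h1'
        simp only at hle ⊢
        rw [Pp_ll f hf hv le_rfl g2.le]
        simp [Q, g2]; omega
    · have g1 := hD a h1
      rcases (mem_updS ..).1 he' with ⟨a', h1', rfl⟩ | rfl | ⟨h1', h2', rfl⟩ | ⟨_, a', h1', h2', rfl⟩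
      · have g2 := hU a' h1'
        simp only at hle; omega
      · simp only at hle; omega
      · simp only at hle; omega
      · have g2 := hD a' h1'
        simp only at hle ⊢
        rw [Pp_ll f hf hv g1.le g2.le]
        simp [Q, g2]


open Classical in
noncomputable def ext : {n : ℕ} → (Fin n → ℕ) → ℕ → ℕ
  | _, _, 0 => 1
  | n, f, m + 1 => ∑ v ∈ (Finset.range (n+1)).filter (fun v => Al f v), ext (insf v f) m

lemma ext_eq (m : ℕ) : ∀ {n : ℕ} {f : Fin n → ℕ} {l : List (ℕ × Ltr)}, IsP f → HW f l →
    ext f m = wcnt (l.map Prod.snd) m := by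
  induction m with
  | zero => intros; simp [ext, wcnt]
  | succ m ih =>
    intro n f l hf hl
    classical
    have key : ∀ D U : List (ℕ × Ltr), HW f (U ++ D) →
        (D.map (fun e => ext (insf e.1 f) m)).sum =
          ((children (U.map Prod.snd) (D.map Prod.snd)).map (fun W' => wcnt W' m)).sum := by
      intro D
      induction D with
      | nil => intros; simp [children]
      | cons c D ihD =>
        intro U h
        have hc : c.1 ≤ n := ((h.al c.1).2 ⟨c, by simp, rfl⟩).1
        simp only [List.map_cons, List.sum_cons, children]
        rw [ih (hf.ins hc) (h.step hf), updS_snd, ihD (U ++ [c]) (by simpa using h)]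
        simp
    have hk := key l [] (by simpa using hl)
    rw [wcnt]
    simp only [List.map_nil] at hk
    rw [← hk, ext]
    have hset : (Finset.range (n+1)).filter (fun v => Al f v) = (l.map Prod.fst).toFinset := by
      ext w
      simp only [Finset.mem_filter, Finset.mem_range, List.mem_toFinset, List.mem_map]
      constructor
      · rintro ⟨_, h⟩
        exact (hl.al w).1 h
      · intro h
        have := (hl.al w).2 h
        exact ⟨by have := this.1; omega, this⟩
    have hnd : (l.map Prod.fst).Nodup := by
      rw [List.Nodup, List.pairwise_map]
      exact hl.srt.imp (by intro a b h; omega)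
    have hs := List.sum_toFinset (fun v => ext (insf v f) m) hnd
    rw [hset]
    convert hs using 1
    simp [List.map_map, Function.comp_def]

def val {n : ℕ} (π : Equiv.Perm (Fin n)) : Fin n → ℕ := fun i => (π i : ℕ)

lemma val_isP {n : ℕ} (π : Equiv.Perm (Fin n)) : IsP (val π) :=
  ⟨fun i => (π i).2, fun a ha => ⟨π.symm ⟨a, ha⟩, by simp [val]⟩⟩

def insP {n : ℕ} (v : Fin (n+1)) (π : Equiv.Perm (Fin n)) : Equiv.Perm (Fin (n+1)) :=
  ((finSuccEquiv' 0).trans (Equiv.optionCongr π)).trans (finSuccEquiv' v).symm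

lemma insP_zero {n : ℕ} (v : Fin (n+1)) (π : Equiv.Perm (Fin n)) : insP v π 0 = v := by
  simp [insP]

lemma insP_succ {n : ℕ} (v : Fin (n+1)) (π : Equiv.Perm (Fin n)) (i : Fin n) :
    insP v π i.succ = v.succAbove (π i) := by
  have : (finSuccEquiv' (0 : Fin (n+1))) i.succ = some i := by
    rw [← Fin.succAbove_zero]; exact finSuccEquiv'_succAbove 0 i
  simp [insP, this]

lemma val_insP {n : ℕ} (v : Fin (n+1)) (π : Equiv.Perm (Fin n)) :
    val (insP v π) = insf (v : ℕ) (val π) := by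
  funext i
  refine Fin.cases ?_ (fun i => ?_) i
  · simp [val, insP_zero]
  · simp only [val, insP_succ, insf_succ, sh, Fin.succAbove, Fin.lt_def, Fin.val_castSucc]
    split_ifs with h <;> simp [val, h]

lemma insP_bij {n : ℕ} : Function.Bijective
    (fun x : Equiv.Perm (Fin n) × Fin (n+1) => insP x.2 x.1) := by
  rw [Fintype.bijective_iff_injective_and_card]
  constructor
  · rintro ⟨π, v⟩ ⟨π', v'⟩ h
    simp only at h
    have h0 : v = v' := by rw [← insP_zero v π, h, insP_zero]
    subst h0
    congr 1
    ext i
    have := congrArg (fun g : Equiv.Perm (Fin (n+1)) => g i.succ) h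
    simp only [insP_succ] at this
    rw [Fin.succAbove_right_injective this]
  · simp [Fintype.card_perm, Nat.factorial_succ, mul_comm]

open Classical in
lemma sum_step (n m : ℕ) :
    (∑ π : Equiv.Perm (Fin n), if Avo (val π) then ext (val π) (m+1) else 0) =
    ∑ π : Equiv.Perm (Fin (n+1)), if Avo (val π) then ext (val π) m else 0 := by
  rw [← (insP_bij (n := n)).sum_comp (fun π : Equiv.Perm (Fin (n+1)) => if Avo (val π) then ext (val π) m else 0),
    Fintype.sum_prod_type]
  apply Finset.sum_congr rfl
  intro π _
  simp only [val_insP, avo_ins]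
  split_ifs with h
  · rw [ext, Finset.sum_filter, Finset.sum_range]
    apply Finset.sum_congr rfl
    intro v _
    have := v.2
    have e : Al (val π) v ↔ (Avo (val π) ∧ Vv (val π) v ∧ ¬ Kk (val π) v) := by
      simp only [Al, h, true_and]
      constructor
      · exact fun h => h.2
      · exact fun h => ⟨by omega, h⟩
    simp only [e]
  · simp [h]

open Classical in
lemma sum_all (m : ℕ) : ∀ n N : ℕ, N = n + m →
    (∑ π : Equiv.Perm (Fin n), if Avo (val π) then ext (val π) m else 0) =
    ∑ π : Equiv.Perm (Fin N), if Avo (val π) then 1 else 0 := by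
  induction m with
  | zero => intro n N h; obtain rfl : N = n := h; simp [ext]
  | succ m ih => intro n N h; rw [sum_step]; exact ih (n+1) N (by omega)

lemma hw0 (f : Fin 0 → ℕ) : HW f [(0, Ty.I, true)] := by
  refine ⟨by simp, ?_, ?_, ?_⟩
  · intro w
    simp [Al, Vv, Kk]
    omega
  · simp [Lo]
  · simp [Pp, Q]

open Classical in
lemma count_eq (m : ℕ) : (∑ π : Equiv.Perm (Fin m), if Avo (val π) then 1 else 0) =
    wcnt [(Ty.I, true)] m := by
  rw [← sum_all m 0 m (by omega)]
  have : ∀ π : Equiv.Perm (Fin 0), Avo (val π) := by intro π; simp [Avo]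
  simp only [this, if_true]
  have : ∀ π : Equiv.Perm (Fin 0), ext (val π) m = wcnt [(Ty.I, true)] m := by
    intro π
    rw [ext_eq m (val_isP π) (hw0 _)]; rfl
  simp [this]

lemma contains_iff {n : ℕ} (π : Equiv.Perm (Fin n)) (σ : Fin 4 → Fin 4) :
    ContainsPattern π σ ↔ ∃ i j k l : Fin n, i < j ∧ j < k ∧ k < l ∧
      ∀ a b : Fin 4, σ a < σ b ↔ π (![i,j,k,l] a) < π (![i,j,k,l] b) := by
  constructor
  · rintro ⟨f, hf⟩
    refine ⟨f 0, f 1, f 2, f 3, f.strictMono (by decide), f.strictMono (by decide),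
      f.strictMono (by decide), ?_⟩
    have : ![f 0, f 1, f 2, f 3] = f := by
      funext a; fin_cases a <;> rfl
    rw [this]; exact hf
  · rintro ⟨i, j, k, l, h1, h2, h3, h⟩
    refine ⟨OrderEmbedding.ofStrictMono ![i,j,k,l] ?_, h⟩
    rw [Fin.strictMono_iff_lt_succ]
    intro a
    fin_cases a
    · exact h1
    · exact h2
    · exact h3

lemma avoid_iff {n : ℕ} (π : Equiv.Perm (Fin n)) :
    (∀ σ ∈ ({![0,1,3,2], ![0,2,3,1], ![2,3,0,1]} : Set (Fin 4 → Fin 4)), ¬ ContainsPattern π σ) ↔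
      Avo (val π) := by
  have c1 : ContainsPattern π ![0,1,3,2] ↔ ∃ i j k l : Fin n, i < j ∧ j < k ∧ k < l ∧
      π i < π j ∧ π j < π l ∧ π l < π k := by
    rw [contains_iff]
    refine exists_congr fun i => exists_congr fun j => exists_congr fun k => exists_congr fun l => ?_
    refine and_congr_right fun _ => and_congr_right fun _ => and_congr_right fun _ => ?_
    simp [Fin.forall_fin_succ]
    omega
  have c2 : ContainsPattern π ![0,2,3,1] ↔ ∃ i j k l : Fin n, i < j ∧ j < k ∧ k < l ∧
      π i < π l ∧ π l < π j ∧ π j < π k := by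
    rw [contains_iff]
    refine exists_congr fun i => exists_congr fun j => exists_congr fun k => exists_congr fun l => ?_
    refine and_congr_right fun _ => and_congr_right fun _ => and_congr_right fun _ => ?_
    simp [Fin.forall_fin_succ]
    omega
  have c3 : ContainsPattern π ![2,3,0,1] ↔ ∃ i j k l : Fin n, i < j ∧ j < k ∧ k < l ∧
      π k < π l ∧ π l < π i ∧ π i < π j := by
    rw [contains_iff]
    refine exists_congr fun i => exists_congr fun j => exists_congr fun k => exists_congr fun l => ?_
    refine and_congr_right fun _ => and_congr_right fun _ => and_congr_right fun _ => ?_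
    simp [Fin.forall_fin_succ]
    omega
  simp only [Set.mem_insert_iff, Set.mem_singleton_iff, forall_eq_or_imp, forall_eq, c1, c2, c3, Avo, val,
    Fin.val_fin_lt]
  constructor
  · rintro ⟨h1, h2, h3⟩
    refine ⟨fun i j k l a b c d e g o => ?_, fun i j k l a b c d e g => h3 ⟨i, j, k, l, a, b, c, d, e, g⟩⟩
    rcases lt_trichotomy (π j) (π l) with h | h | h
    · exact h1 ⟨i, j, k, l, a, b, c, d, h, o⟩
    · have := π.injective h
      omega
    · exact h2 ⟨i, j, k, l, a, b, c, e, h, g⟩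
  · rintro ⟨h1, h3⟩
    refine ⟨?_, ?_, ?_⟩
    · rintro ⟨i, j, k, l, a, b, c, d, e, g⟩
      exact h1 i j k l a b c d (d.trans e) (e.trans g) g
    · rintro ⟨i, j, k, l, a, b, c, d, e, g⟩
      exact h1 i j k l a b c (d.trans e) d g (e.trans g)
    · rintro ⟨i, j, k, l, a, b, c, d, e, g⟩
      exact h3 i j k l a b c d e g

lemma avoiderCount_eq (n : ℕ) :
    avoiderCount ({![0,1,3,2], ![0,2,3,1], ![2,3,0,1]} : Set (Fin 4 → Fin 4)) n = wcnt [(Ty.I, true)] n := by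
  classical
  rw [← count_eq, avoiderCount]
  simp only [avoid_iff]
  rw [Nat.card_eq_fintype_card, Fintype.card_subtype, Finset.card_filter]

end comb

lemma gf_eq : avoiderGF ({![0,1,3,2], ![0,2,3,1], ![2,3,0,1]} : Set (Fin 4 → Fin 4)) =
    1 + X * G (St.A 0 0) := by
  ext n
  rw [avoiderGF, PowerSeries.coeff_mk, avoiderCount_eq]
  cases n with
  | zero => simp [wcnt]
  | succ n =>
    rw [map_add, PowerSeries.coeff_succ_X_mul, ← wcnt_eq]
    simp [wcnt, children, upd, upt, low, rest, word, PowerSeries.coeff_one]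

end Av7

theorem statement_7 :
    ((1 : PowerSeries ℚ) - X) * (1 - 2*X) * (1 - 3*X) * (1 - 3*X + X^2)^2 * avoiderGF ({![0,1,3,2], ![0,2,3,1], ![2,3,0,1]} : Set (Fin 4 → Fin 4)) =
      1 - 11*X + 48*X^2 - 104*X^3 + 115*X^4 - 61*X^5 + 13*X^6 := by
  rw [Av7.gf_eq]; exact Av7.final
end

section
/- Let T = {3412, 1423, 2341} (patterns of length 4). Then the generating function for T-avoiders satisfies, as formal power series over ℚ, (1-2x)·(1 - 6x + 12x^2 - 11x^3 + 3x^4)·F_T(x) = 1 - 7x + 18x^2 - 21x^3 + 11x^4; that is, F_T(x) = (1-7x+18x^2-21x^3+11x^4)/((1-2x)(1-6x+12x^2-11x^3+3x^4)). -/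
open PowerSeries

structure SiteS where
  n : ℕ
  A : ℕ → Prop
  U : ℕ → ℕ → Prop
  D : ℕ → ℕ → Prop

def SiteS.child (S : SiteS) (t : ℕ) : SiteS where
  n := S.n + 1
  A := fun s => if s ≤ t then S.A s ∧ S.D t s else S.A (s-1) ∧ S.U t (s-1)
  U := fun u s => if u ≤ t then (if s < t then False else if s = t then S.U u s else S.U u (s-1))
    else S.n + 1 ≤ s
  D := fun u s => if u ≤ t then S.D u s else if t < s then S.D (u-1) (s-1) else s = 0

open Classical in
noncomputable def gcount : ℕ → SiteS → ℕ
  | 0, _ => 1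
  | m+1, S => ∑ t ∈ Finset.range (S.n+1), if S.A t then gcount m (S.child t) else 0

inductive Lab where
  | V (i l : ℕ)
  | E (j : ℕ)
  | H (k l : ℕ)
  | D (k : ℕ)

def cnt : ℕ → Lab → ℕ
  | 0, _ => 1
  | m+1, .V i l => ∑ i' ∈ Finset.range (i+1), cnt m (.V i' l) + l * cnt m (.V 0 1) + cnt m (.H 0 0)
  | m+1, .E j => cnt m (.V 0 1) + ∑ i ∈ Finset.range j, cnt m (.V (i+1) 0) + cnt m (.E j)
      + cnt m (.H 0 0)
  | m+1, .H k l => ∑ i ∈ Finset.range (k+1), cnt m (.V i (l+1)) + cnt m (.H k (l+1))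
      + l * cnt m (.V 0 1) + cnt m (.H 0 0)
  | m+1, .D k => cnt m (.D (k+1)) + ∑ j ∈ Finset.range k, cnt m (.E j) + cnt m (.H k 0)

structure Base (S : SiteS) : Prop where
  pos : 0 < S.n
  A0 : S.A 0
  An : S.A S.n
  Un : ∀ u ≤ S.n, S.U u S.n
  D0 : ∀ u ≤ S.n, S.D u 0
  Ds : ∀ u ≤ S.n, S.D u u

theorem Base.child {S : SiteS} (h : Base S) {t : ℕ} (ht : t ≤ S.n) :
    Base (S.child t) := by
  obtain ⟨pos, A0, An, Un, D0, Ds⟩ := h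
  constructor
  · simp [SiteS.child]
  · simp [SiteS.child, A0]; grind
  · simp [SiteS.child]; grind
  · simp [SiteS.child]; grind
  · simp [SiteS.child]; grind
  · simp [SiteS.child]; grind

open Classical in
def LInv : Lab → SiteS → Prop
  | .V i l, S => ∃ c d, S.n = c + d ∧ 0 < c ∧ Nat.count S.A c = i + 1 ∧
      Nat.count (fun k => S.A (c+k)) d = l ∧
      (∀ u s, S.A u → S.A s → u ≤ s → s < S.n → (S.U u s ↔ c ≤ s ∧ u < c)) ∧
      (∀ u s, S.A u → S.A s → 0 < s → s < u → u ≤ S.n → (S.D u s ↔ u < c))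
  | .E j, S => ∃ c d, S.n = c + 1 + d ∧ 0 < c ∧ Nat.count S.A c = j + 1 ∧ S.A c ∧
      (∀ s, c < s → s < S.n → ¬ S.A s) ∧
      (∀ u s, S.A u → S.A s → u ≤ s → s < S.n → (S.U u s ↔ s = c ∧ u = 0)) ∧
      (∀ u s, S.A u → S.A s → 0 < s → s < u → u ≤ S.n → (S.D u s ↔ u ≤ c))
  | .H k l, S => ∃ c d, S.n = c + 1 + d ∧ 0 < c ∧ Nat.count S.A c = k + 1 ∧ S.A c ∧
      Nat.count (fun k => S.A (c+1+k)) d = l ∧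
      (∀ u s, S.A u → S.A s → u ≤ s → s < S.n → (S.U u s ↔ c ≤ s ∧ u ≤ c)) ∧
      (∀ u s, S.A u → S.A s → 0 < s → s < u → u ≤ S.n → (S.D u s ↔ u ≤ c))
  | .D k, S => S.n = k + 1 ∧ (∀ s ≤ S.n, S.A s) ∧
      (∀ u s, u ≤ s → s < S.n → (S.U u s ↔ u = 0)) ∧
      (∀ u s, s < u → u ≤ S.n → S.D u s)

open Classical in
theorem sum_rank (A : ℕ → Prop) (f : ℕ → ℕ) (c : ℕ) :
    (∑ t ∈ Finset.range c, if A t then f (Nat.count A t) else 0) =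
      ∑ i ∈ Finset.range (Nat.count A c), f i := by
  induction c with
  | zero => simp
  | succ c ih =>
    rw [Finset.sum_range_succ, ih, Nat.count_succ]
    split_ifs <;> simp [Finset.sum_range_succ]

open Classical in
theorem sum_const (A : ℕ → Prop) (x : ℕ) (c : ℕ) :
    (∑ t ∈ Finset.range c, if A t then x else 0) = Nat.count A c * x := by
  rw [sum_rank A (fun _ => x) c]; simp

open Classical in
theorem count_cg (A B : ℕ → Prop) (c : ℕ) (h : ∀ t < c, (A t ↔ B t)) :
    Nat.count A c = Nat.count B c := by
  induction c with
  | zero => simp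
  | succ c ih =>
    rw [Nat.count_succ, Nat.count_succ, ih (fun t ht => h t (by omega))]
    simp [h c (by omega)]

open Classical in
theorem count_none (A : ℕ → Prop) (c : ℕ) (h : ∀ t < c, ¬ A t) :
    Nat.count A c = 0 := by
  rw [count_cg A (fun _ => False) c (by simpa using h)]
  clear h
  induction c with
  | zero => simp
  | succ c ih => rw [Nat.count_succ, ih]; simp

open Classical in
theorem count_zero_only (A : ℕ → Prop) (c : ℕ) (hc : 0 < c) (h0 : A 0)
    (h : ∀ t < c, 0 < t → ¬ A t) : Nat.count A c = 1 := by
  obtain ⟨d, rfl⟩ : ∃ d, c = 1 + d := ⟨c-1, by omega⟩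
  rw [Nat.count_add, count_none (fun k => A (1+k)) d (fun t ht => h _ (by omega) (by omega))]
  simp [Nat.count_succ, h0]

theorem top_child {S : SiteS} (h : Base S)
    (hD : ∀ s, S.A s → 0 < s → s < S.n → ¬ S.D S.n s) :
    LInv (.H 0 0) (S.child S.n) := by
  obtain ⟨pos, A0, An, Un, D0, Ds⟩ := h
  refine ⟨S.n, 0, rfl, pos, ?_, ?_, ?_, ?_, ?_⟩
  · apply count_zero_only _ _ pos
    · simp [SiteS.child]; grind
    · simp [SiteS.child]; grind
  · simp [SiteS.child]; grind
  · simp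
  · simp [SiteS.child]; grind
  · simp [SiteS.child]; grind

open Classical in
theorem V_lo {S : SiteS} (h : Base S) {c d : ℕ} {l : ℕ} (hn : S.n = c + d)
    (hl : Nat.count (fun k => S.A (c+k)) d = l)
    (hU : ∀ u s, S.A u → S.A s → u ≤ s → s < S.n → (S.U u s ↔ c ≤ s ∧ u < c))
    (hD : ∀ u s, S.A u → S.A s → 0 < s → s < u → u ≤ S.n → (S.D u s ↔ u < c))
    {t : ℕ} (hA : S.A t) (ht : t < c) :
    LInv (.V (Nat.count S.A t) l) (S.child t) := by
  obtain ⟨pos, A0, An, Un, D0, Ds⟩ := h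
  refine ⟨c+1, d, by simp only [SiteS.child]; omega, by omega, ?_, ?_, ?_, ?_⟩
  · obtain ⟨e, rfl⟩ : ∃ e, c = t + e := ⟨c-t, by omega⟩
    rw [show t + e + 1 = (t + 1) + e by omega, Nat.count_add, count_none _ e, 
      count_cg _ S.A (t+1), Nat.count_succ]
    · simp [hA]
    · simp only [SiteS.child]
      intro s
      intros
      have i1 := hU t s
      have i2 := hU t (s-1)
      have i3 := hD t s
      have i9 := Un t
      have i11 := D0 t
      have i12 := Ds t
      clear hU hD Un D0 Ds
      grind
    · simp only [SiteS.child]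
      intro s
      intros
      have i1 := hU t (t+1+s)
      have i2 := hU t (t+1+s-1)
      have i3 := hD t (t+1+s)
      have i9 := Un t
      have i11 := D0 t
      have i12 := Ds t
      clear hU hD Un D0 Ds
      grind
  · rw [← hl]; apply count_cg
    · simp only [SiteS.child]
      intro s
      intros
      have i1 := hU t (c+1+s)
      have i2 := hU t (c+1+s-1)
      have i3 := hD t (c+1+s)
      have i9 := Un t
      have i11 := D0 t
      have i12 := Ds t
      clear hU hD Un D0 Ds
      grind
  · simp only [SiteS.child]
    intro u s
    intros
    have i1 := hU u s
    have i2 := hU u (s-1)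
    have i3 := hU t (s-1)
    have i4 := hU t (u-1)
    have i5 := hD t u
    have i6 := hD t s
    have i7 := hD u s
    have i8 := hD (u-1) (s-1)
    have i9 := Un t
    have i10 := Un u
    have i11 := D0 t
    have i12 := Ds t
    clear hU hD Un D0 Ds
    grind
  · simp only [SiteS.child]
    intro u s
    intros
    have i1 := hU u s
    have i2 := hU u (s-1)
    have i3 := hU t (s-1)
    have i4 := hU t (u-1)
    have i5 := hD t u
    have i6 := hD t s
    have i7 := hD u s
    have i8 := hD (u-1) (s-1)
    have i9 := Un t
    have i10 := Un u
    have i11 := D0 t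
    have i12 := Ds t
    clear hU hD Un D0 Ds
    grind

open Classical in
theorem H_lo {S : SiteS} (h : Base S) {c d : ℕ} {l : ℕ} (hn : S.n = c + 1 + d) (hc : S.A c)
    (hl : Nat.count (fun k => S.A (c+1+k)) d = l)
    (hU : ∀ u s, S.A u → S.A s → u ≤ s → s < S.n → (S.U u s ↔ c ≤ s ∧ u ≤ c))
    (hD : ∀ u s, S.A u → S.A s → 0 < s → s < u → u ≤ S.n → (S.D u s ↔ u ≤ c))
    {t : ℕ} (hA : S.A t) (ht : t < c) :
    LInv (.V (Nat.count S.A t) (l+1)) (S.child t) := by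
  obtain ⟨pos, A0, An, Un, D0, Ds⟩ := h
  refine ⟨c+1, d+1, by simp only [SiteS.child]; omega, by omega, ?_, ?_, ?_, ?_⟩
  · obtain ⟨e, rfl⟩ : ∃ e, c = t + e := ⟨c-t, by omega⟩
    rw [show t + e + 1 = (t + 1) + e by omega, Nat.count_add, count_none _ e, 
      count_cg _ S.A (t+1), Nat.count_succ]
    · simp [hA]
    · simp only [SiteS.child]
      intro s
      intros
      have i1 := hU t s
      have i2 := hU t (s-1)
      have i3 := hD t s
      have i9 := Un t
      have i11 := D0 t
      have i12 := Ds t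
      clear hU hD Un D0 Ds
      grind
    · simp only [SiteS.child]
      intro s
      intros
      have i1 := hU t (t+1+s)
      have i2 := hU t (t+1+s-1)
      have i3 := hD t (t+1+s)
      have i9 := Un t
      have i11 := D0 t
      have i12 := Ds t
      clear hU hD Un D0 Ds
      grind
  · rw [← hl, Nat.count_succ', count_cg _ (fun k => S.A (c+1+k)) d, if_pos]
    · simp only [SiteS.child]
      have := hU t c
      grind
    · simp only [SiteS.child]
      intro s
      intros
      have i1 := hU t (c+1+(s+1))
      have i2 := hU t (c+1+(s+1)-1)
      have i3 := hD t (c+1+(s+1))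
      have i9 := Un t
      have i11 := D0 t
      have i12 := Ds t
      clear hU hD Un D0 Ds
      grind
  · simp only [SiteS.child]
    intro u s
    intros
    have i1 := hU u s
    have i2 := hU u (s-1)
    have i3 := hU t (s-1)
    have i4 := hU t (u-1)
    have i5 := hD t u
    have i6 := hD t s
    have i7 := hD u s
    have i8 := hD (u-1) (s-1)
    have i9 := Un t
    have i10 := Un u
    have i11 := D0 t
    have i12 := Ds t
    clear hU hD Un D0 Ds
    grind
  · simp only [SiteS.child]
    intro u s
    intros
    have i1 := hU u s
    have i2 := hU u (s-1)
    have i3 := hU t (s-1)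
    have i4 := hU t (u-1)
    have i5 := hD t u
    have i6 := hD t s
    have i7 := hD u s
    have i8 := hD (u-1) (s-1)
    have i9 := Un t
    have i10 := Un u
    have i11 := D0 t
    have i12 := Ds t
    clear hU hD Un D0 Ds
    grind

open Classical in
theorem V_hi {S : SiteS} (h : Base S) {c d : ℕ} (hn : S.n = c + d) (hc0 : 0 < c)
    (hU : ∀ u s, S.A u → S.A s → u ≤ s → s < S.n → (S.U u s ↔ c ≤ s ∧ u < c))
    (hD : ∀ u s, S.A u → S.A s → 0 < s → s < u → u ≤ S.n → (S.D u s ↔ u < c))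
    {t : ℕ} (hA : S.A t) (ht : c ≤ t) (htn : t < S.n) :
    LInv (.V 0 1) (S.child t) := by
  obtain ⟨pos, A0, An, Un, D0, Ds⟩ := h
  refine ⟨t, 1 + (S.n - t), by simp only [SiteS.child]; omega, by omega, ?_, ?_, ?_, ?_⟩
  · apply count_zero_only _ _ (by omega)
    · simp only [SiteS.child]
      have := D0 t
      clear hU hD Un D0 Ds
      grind
    · simp only [SiteS.child]
      intro s
      intros
      have i1 := hU t s
      have i2 := hU t (s-1)
      have i3 := hD t s
      have i9 := Un t
      have i11 := D0 t
      have i12 := Ds t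
      clear hU hD Un D0 Ds
      grind
  · rw [Nat.count_add, count_none _ (S.n - t), Nat.count_succ, Nat.count_zero, if_pos]
    · simp only [SiteS.child]
      have := Ds t
      clear hU hD Un D0 Ds
      grind
    · simp only [SiteS.child]
      intro s
      intros
      have i1 := hU t (t+(1+s))
      have i2 := hU t (t+(1+s)-1)
      have i3 := hD t (t+(1+s))
      have i9 := Un t
      have i11 := D0 t
      have i12 := Ds t
      clear hU hD Un D0 Ds
      grind
  · simp only [SiteS.child]
    intro u s
    intros
    have i1 := hU u s
    have i2 := hU u (s-1)
    have i3 := hU t (s-1)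
    have i4 := hU t (u-1)
    have i5 := hD t u
    have i6 := hD t s
    have i7 := hD u s
    have i8 := hD (u-1) (s-1)
    have i9 := Un t
    have i10 := Un u
    have i11 := D0 t
    have i12 := Ds t
    clear hU hD Un D0 Ds
    grind
  · simp only [SiteS.child]
    intro u s
    intros
    have i1 := hU u s
    have i2 := hU u (s-1)
    have i3 := hU t (s-1)
    have i4 := hU t (u-1)
    have i5 := hD t u
    have i6 := hD t s
    have i7 := hD u s
    have i8 := hD (u-1) (s-1)
    have i9 := Un t
    have i10 := Un u
    have i11 := D0 t
    have i12 := Ds t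
    clear hU hD Un D0 Ds
    grind

open Classical in
theorem H_hi {S : SiteS} (h : Base S) {c d : ℕ} (hn : S.n = c + 1 + d) (hc0 : 0 < c)
    (hU : ∀ u s, S.A u → S.A s → u ≤ s → s < S.n → (S.U u s ↔ c ≤ s ∧ u ≤ c))
    (hD : ∀ u s, S.A u → S.A s → 0 < s → s < u → u ≤ S.n → (S.D u s ↔ u ≤ c))
    {t : ℕ} (hA : S.A t) (ht : c < t) (htn : t < S.n) :
    LInv (.V 0 1) (S.child t) := by
  obtain ⟨pos, A0, An, Un, D0, Ds⟩ := h
  refine ⟨t, 1 + (S.n - t), by simp only [SiteS.child]; omega, by omega, ?_, ?_, ?_, ?_⟩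
  · apply count_zero_only _ _ (by omega)
    · simp only [SiteS.child]
      have := D0 t
      clear hU hD Un D0 Ds
      grind
    · simp only [SiteS.child]
      intro s
      intros
      have i1 := hU t s
      have i2 := hU t (s-1)
      have i3 := hD t s
      have i9 := Un t
      have i11 := D0 t
      have i12 := Ds t
      clear hU hD Un D0 Ds
      grind
  · rw [Nat.count_add, count_none _ (S.n - t), Nat.count_succ, Nat.count_zero, if_pos]
    · simp only [SiteS.child]
      have := Ds t
      clear hU hD Un D0 Ds
      grind
    · simp only [SiteS.child]
      intro s
      intros
      have i1 := hU t (t+(1+s))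
      have i2 := hU t (t+(1+s)-1)
      have i3 := hD t (t+(1+s))
      have i9 := Un t
      have i11 := D0 t
      have i12 := Ds t
      clear hU hD Un D0 Ds
      grind
  · simp only [SiteS.child]
    intro u s
    intros
    have i1 := hU u s
    have i2 := hU u (s-1)
    have i3 := hU t (s-1)
    have i4 := hU t (u-1)
    have i5 := hD t u
    have i6 := hD t s
    have i7 := hD u s
    have i8 := hD (u-1) (s-1)
    have i9 := Un t
    have i10 := Un u
    have i11 := D0 t
    have i12 := Ds t
    clear hU hD Un D0 Ds
    grind
  · simp only [SiteS.child]
    intro u s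
    intros
    have i1 := hU u s
    have i2 := hU u (s-1)
    have i3 := hU t (s-1)
    have i4 := hU t (u-1)
    have i5 := hD t u
    have i6 := hD t s
    have i7 := hD u s
    have i8 := hD (u-1) (s-1)
    have i9 := Un t
    have i10 := Un u
    have i11 := D0 t
    have i12 := Ds t
    clear hU hD Un D0 Ds
    grind

open Classical in
theorem H_mid {S : SiteS} (h : Base S) {c d : ℕ} {k l : ℕ} (hn : S.n = c + 1 + d) (hc0 : 0 < c) (hk : Nat.count S.A c = k + 1)
    (hl : Nat.count (fun k => S.A (c+1+k)) d = l)
    (hU : ∀ u s, S.A u → S.A s → u ≤ s → s < S.n → (S.U u s ↔ c ≤ s ∧ u ≤ c))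
    (hD : ∀ u s, S.A u → S.A s → 0 < s → s < u → u ≤ S.n → (S.D u s ↔ u ≤ c))
    {t : ℕ} (hA : S.A t) (ht : t = c) :
    LInv (.H k (l+1)) (S.child t) := by
  obtain ⟨pos, A0, An, Un, D0, Ds⟩ := h
  refine ⟨c, d+1, by simp only [SiteS.child]; omega, by omega, ?_, ?_, ?_, ?_, ?_⟩
  · rw [← hk]; apply count_cg
    · simp only [SiteS.child]
      intro s
      intros
      have i1 := hU t s
      have i2 := hU t (s-1)
      have i3 := hD t s
      have i9 := Un t
      have i11 := D0 t
      have i12 := Ds t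
      clear hU hD Un D0 Ds
      grind
  · simp only [SiteS.child]
    have := Ds t
    clear hU hD Un D0 Ds
    grind
  · rw [← hl, Nat.count_succ', count_cg _ (fun k => S.A (c+1+k)) d, if_pos]
    · simp only [SiteS.child]
      have := hU t c
      grind
    · simp only [SiteS.child]
      intro s
      intros
      have i1 := hU t (c+1+(s+1))
      have i2 := hU t (c+1+(s+1)-1)
      have i3 := hD t (c+1+(s+1))
      have i9 := Un t
      have i11 := D0 t
      have i12 := Ds t
      clear hU hD Un D0 Ds
      grind
  · simp only [SiteS.child]
    intro u s
    intros
    have i1 := hU u s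
    have i2 := hU u (s-1)
    have i3 := hU t (s-1)
    have i4 := hU t (u-1)
    have i5 := hD t u
    have i6 := hD t s
    have i7 := hD u s
    have i8 := hD (u-1) (s-1)
    have i9 := Un t
    have i10 := Un u
    have i11 := D0 t
    have i12 := Ds t
    clear hU hD Un D0 Ds
    grind
  · simp only [SiteS.child]
    intro u s
    intros
    have i1 := hU u s
    have i2 := hU u (s-1)
    have i3 := hU t (s-1)
    have i4 := hU t (u-1)
    have i5 := hD t u
    have i6 := hD t s
    have i7 := hD u s
    have i8 := hD (u-1) (s-1)
    have i9 := Un t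
    have i10 := Un u
    have i11 := D0 t
    have i12 := Ds t
    clear hU hD Un D0 Ds
    grind

open Classical in
theorem E_0 {S : SiteS} (h : Base S) {c d : ℕ} (hn : S.n = c + 1 + d) (hc0 : 0 < c) (hc : S.A c)
    (hs : ∀ s, c < s → s < S.n → ¬ S.A s)
    (hU : ∀ u s, S.A u → S.A s → u ≤ s → s < S.n → (S.U u s ↔ s = c ∧ u = 0))
    (hD : ∀ u s, S.A u → S.A s → 0 < s → s < u → u ≤ S.n → (S.D u s ↔ u ≤ c))
    {t : ℕ} (hA : S.A t) (ht : t = 0) :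
    LInv (.V 0 1) (S.child t) := by
  obtain ⟨pos, A0, An, Un, D0, Ds⟩ := h
  refine ⟨c+1, 1 + d, by simp only [SiteS.child]; omega, by omega, ?_, ?_, ?_, ?_⟩
  · apply count_zero_only _ _ (by omega)
    · simp only [SiteS.child]
      have := D0 t
      clear hU hD Un D0 Ds hs
      grind
    · simp only [SiteS.child]
      intro s
      intros
      have i1 := hU t s
      have i2 := hU t (s-1)
      have i3 := hD t s
      have i9 := Un t
      have i11 := D0 t
      have i12 := Ds t
      clear hU hD Un D0 Ds
      clear hs
      grind
  · rw [Nat.count_add, count_none _ d, Nat.count_succ, Nat.count_zero, if_pos]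
    · simp only [SiteS.child]
      have := hU t c
      clear hU hD Un D0 Ds hs
      grind
    · simp only [SiteS.child]
      intro s
      intros
      have i1 := hU t (c+1+(1+s))
      have i2 := hU t (c+1+(1+s)-1)
      have i3 := hD t (c+1+(1+s))
      have i9 := Un t
      have i11 := D0 t
      have i12 := Ds t
      clear hU hD Un D0 Ds
      clear hs
      grind
  · simp only [SiteS.child]
    intro u s
    intros
    have i1 := hU u s
    have i2 := hU u (s-1)
    have i3 := hU t (s-1)
    have i4 := hU t (u-1)
    have i5 := hD t u
    have i6 := hD t s
    have i7 := hD u s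
    have i8 := hD (u-1) (s-1)
    have i9 := Un t
    have i10 := Un u
    have i11 := D0 t
    have i12 := Ds t
    clear hU hD Un D0 Ds
    have i13 := hs u
    have i14 := hs s
    have i15 := hs (u-1)
    have i16 := hs (s-1)
    clear hs
    grind
  · simp only [SiteS.child]
    intro u s
    intros
    have i1 := hU u s
    have i2 := hU u (s-1)
    have i3 := hU t (s-1)
    have i4 := hU t (u-1)
    have i5 := hD t u
    have i6 := hD t s
    have i7 := hD u s
    have i8 := hD (u-1) (s-1)
    have i9 := Un t
    have i10 := Un u
    have i11 := D0 t
    have i12 := Ds t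
    clear hU hD Un D0 Ds
    have i13 := hs u
    have i14 := hs s
    have i15 := hs (u-1)
    have i16 := hs (s-1)
    clear hs
    grind

open Classical in
theorem E_lo {S : SiteS} (h : Base S) {c d : ℕ} (hn : S.n = c + 1 + d) (hc0 : 0 < c) (hc : S.A c)
    (hs : ∀ s, c < s → s < S.n → ¬ S.A s)
    (hU : ∀ u s, S.A u → S.A s → u ≤ s → s < S.n → (S.U u s ↔ s = c ∧ u = 0))
    (hD : ∀ u s, S.A u → S.A s → 0 < s → s < u → u ≤ S.n → (S.D u s ↔ u ≤ c))
    {t : ℕ} (hA : S.A t) (ht : 0 < t) (htc : t < c) :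
    LInv (.V (Nat.count S.A t) 0) (S.child t) := by
  obtain ⟨pos, A0, An, Un, D0, Ds⟩ := h
  refine ⟨t+1, S.n - t, by simp only [SiteS.child]; omega, by omega, ?_, ?_, ?_, ?_⟩
  · rw [count_cg _ S.A (t+1), Nat.count_succ, if_pos hA]
    · simp only [SiteS.child]
      intro s
      intros
      have i1 := hU t s
      have i2 := hU t (s-1)
      have i3 := hD t s
      have i9 := Un t
      have i11 := D0 t
      have i12 := Ds t
      clear hU hD Un D0 Ds
      clear hs
      grind
  · apply count_none
    · simp only [SiteS.child]
      intro s
      intros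
      have i1 := hU t (t+1+s)
      have i2 := hU t (t+1+s-1)
      have i3 := hD t (t+1+s)
      have i9 := Un t
      have i11 := D0 t
      have i12 := Ds t
      clear hU hD Un D0 Ds
      clear hs
      grind
  · simp only [SiteS.child]
    intro u s
    intros
    have i1 := hU u s
    have i2 := hU u (s-1)
    have i3 := hU t (s-1)
    have i4 := hU t (u-1)
    have i5 := hD t u
    have i6 := hD t s
    have i7 := hD u s
    have i8 := hD (u-1) (s-1)
    have i9 := Un t
    have i10 := Un u
    have i11 := D0 t
    have i12 := Ds t
    clear hU hD Un D0 Ds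
    have i13 := hs u
    have i14 := hs s
    have i15 := hs (u-1)
    have i16 := hs (s-1)
    clear hs
    grind
  · simp only [SiteS.child]
    intro u s
    intros
    have i1 := hU u s
    have i2 := hU u (s-1)
    have i3 := hU t (s-1)
    have i4 := hU t (u-1)
    have i5 := hD t u
    have i6 := hD t s
    have i7 := hD u s
    have i8 := hD (u-1) (s-1)
    have i9 := Un t
    have i10 := Un u
    have i11 := D0 t
    have i12 := Ds t
    clear hU hD Un D0 Ds
    have i13 := hs u
    have i14 := hs s
    have i15 := hs (u-1)
    have i16 := hs (s-1)
    clear hs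
    grind

open Classical in
theorem E_mid {S : SiteS} (h : Base S) {c d : ℕ} {j : ℕ} (hj : Nat.count S.A c = j + 1) (hn : S.n = c + 1 + d) (hc0 : 0 < c) (hc : S.A c)
    (hs : ∀ s, c < s → s < S.n → ¬ S.A s)
    (hU : ∀ u s, S.A u → S.A s → u ≤ s → s < S.n → (S.U u s ↔ s = c ∧ u = 0))
    (hD : ∀ u s, S.A u → S.A s → 0 < s → s < u → u ≤ S.n → (S.D u s ↔ u ≤ c))
    {t : ℕ} (hA : S.A t) (ht : t = c) :
    LInv (.E j) (S.child t) := by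
  obtain ⟨pos, A0, An, Un, D0, Ds⟩ := h
  refine ⟨c, d+1, by simp only [SiteS.child]; omega, by omega, ?_, ?_, ?_, ?_, ?_⟩
  · rw [← hj]; apply count_cg
    · simp only [SiteS.child]
      intro s
      intros
      have i1 := hU t s
      have i2 := hU t (s-1)
      have i3 := hD t s
      have i9 := Un t
      have i11 := D0 t
      have i12 := Ds t
      clear hU hD Un D0 Ds
      clear hs
      grind
  · simp only [SiteS.child]
    have := Ds t
    clear hU hD Un D0 Ds hs
    grind
  · simp only [SiteS.child]
    intro s
    intros
    have i1 := hU t s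
    have i2 := hU t (s-1)
    have i3 := hD t s
    have i9 := Un t
    have i11 := D0 t
    have i12 := Ds t
    clear hU hD Un D0 Ds
    have i13 := hs (s-1)
    clear hs
    grind
  · simp only [SiteS.child]
    intro u s
    intros
    have i1 := hU u s
    have i2 := hU u (s-1)
    have i3 := hU t (s-1)
    have i4 := hU t (u-1)
    have i5 := hD t u
    have i6 := hD t s
    have i7 := hD u s
    have i8 := hD (u-1) (s-1)
    have i9 := Un t
    have i10 := Un u
    have i11 := D0 t
    have i12 := Ds t
    clear hU hD Un D0 Ds
    have i13 := hs u
    have i14 := hs s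
    have i15 := hs (u-1)
    have i16 := hs (s-1)
    clear hs
    grind
  · simp only [SiteS.child]
    intro u s
    intros
    have i1 := hU u s
    have i2 := hU u (s-1)
    have i3 := hU t (s-1)
    have i4 := hU t (u-1)
    have i5 := hD t u
    have i6 := hD t s
    have i7 := hD u s
    have i8 := hD (u-1) (s-1)
    have i9 := Un t
    have i10 := Un u
    have i11 := D0 t
    have i12 := Ds t
    clear hU hD Un D0 Ds
    have i13 := hs u
    have i14 := hs s
    have i15 := hs (u-1)
    have i16 := hs (s-1)
    clear hs
    grind

theorem count_all (A : ℕ → Prop) [DecidablePred A] (c : ℕ) (h : ∀ t < c, A t) :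
    Nat.count A c = c := by
  induction c with
  | zero => simp
  | succ c ih => rw [Nat.count_succ, ih (fun t ht => h t (by omega)), if_pos (h c (by omega))]

theorem D_0 {S : SiteS} {k : ℕ} (h : Base S) (hI : LInv (.D k) S) :
    LInv (.D (k+1)) (S.child 0) := by
  obtain ⟨hn, hA, hU, hD⟩ := hI
  obtain ⟨pos, A0, An, Un, D0, Ds⟩ := h
  refine ⟨by simp only [SiteS.child]; omega, ?_, ?_, ?_⟩
  · simp only [SiteS.child]
    intro s _
    have i1 := hA s
    have i2 := hA (s-1)
    have i3 := hU 0 (s-1)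
    have i4 := Un 0
    have i5 := D0 0
    clear hA hU hD Un D0 Ds
    grind
  · simp only [SiteS.child]
    intro u s _ _
    have i3 := hU u (s-1)
    have i1 := hU u s
    have i4 := Un 0
    clear hA hU hD Un D0 Ds
    grind
  · simp only [SiteS.child]
    intro u s _ _
    have i3 := hD u s
    have i1 := hD (u-1) (s-1)
    clear hA hU hD Un D0 Ds
    grind

open Classical in
theorem D_mid {S : SiteS} {k : ℕ} (h : Base S) (hI : LInv (.D k) S) {t : ℕ} (ht : t < k) :
    LInv (.E t) (S.child (t+1)) := by
  obtain ⟨hn, hA, hU, hD⟩ := hI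
  obtain ⟨pos, A0, An, Un, D0, Ds⟩ := h
  refine ⟨t+1, k-t, by simp only [SiteS.child]; omega, by omega, ?_, ?_, ?_, ?_, ?_⟩
  · apply count_all
    simp only [SiteS.child]
    intro s _
    have i1 := hA s
    have i2 := hD (t+1) s
    clear hA hU hD Un D0 Ds
    grind
  · simp only [SiteS.child]
    have i1 := hA (t+1)
    have i2 := Ds (t+1)
    clear hA hU hD Un D0 Ds
    grind
  · simp only [SiteS.child]
    intro s _ _
    have i1 := hU (t+1) (s-1)
    clear hA hU hD Un D0 Ds
    grind
  · simp only [SiteS.child]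
    intro u s _ _ _ _
    have i1 := hU u s
    have i2 := hU u (s-1)
    have i3 := hU (t+1) (s-1)
    clear hA hU hD Un D0 Ds
    grind
  · simp only [SiteS.child]
    intro u s _ _ _ _ _
    have i1 := hD u s
    have i3 := hU (t+1) (s-1)
    clear hA hU hD Un D0 Ds
    grind

open Classical in
theorem D_top {S : SiteS} {k : ℕ} (h : Base S) (hI : LInv (.D k) S) :
    LInv (.H k 0) (S.child (k+1)) := by
  obtain ⟨hn, hA, hU, hD⟩ := hI
  obtain ⟨pos, A0, An, Un, D0, Ds⟩ := h
  refine ⟨k+1, 0, by simp only [SiteS.child]; omega, by omega, ?_, ?_, ?_, ?_, ?_⟩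
  · apply count_all
    simp only [SiteS.child]
    intro s _
    have i1 := hA s
    have i2 := hD (k+1) s
    clear hA hU hD Un D0 Ds
    grind
  · simp only [SiteS.child]
    have i1 := hA (k+1)
    have i2 := Ds (k+1)
    clear hA hU hD Un D0 Ds
    grind
  · simp
  · simp only [SiteS.child]
    intro u s _ _ _ _
    have i1 := hU u s
    have i2 := Un u
    clear hA hU hD Un D0 Ds
    grind
  · simp only [SiteS.child]
    intro u s _ _ _ _ _
    have i1 := hD u s
    clear hA hU hD Un D0 Ds
    grind

open Classical in
theorem gcount_eq (m : ℕ) : ∀ (ℓ : Lab) (S : SiteS), Base S → LInv ℓ S →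
    gcount m S = cnt m ℓ := by
  induction m with
  | zero => intro ℓ S _ _; cases ℓ <;> simp [gcount, cnt]
  | succ m ih =>
    intro ℓ S hB hI
    have key : ∀ t ≤ S.n, ∀ ℓ', LInv ℓ' (S.child t) → gcount m (S.child t) = cnt m ℓ' :=
      fun t ht ℓ' h' => ih ℓ' _ (hB.child ht) h'
    rw [gcount]
    cases ℓ with
    | V i l =>
      obtain ⟨c, d, hn, hc0, hi, hl, hU, hD⟩ := hI
      have top := key S.n le_rfl _ (top_child hB (fun s hs h0 h1 => by
        rw [hD S.n s hB.An hs h0 h1 le_rfl]; omega))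
      rw [Finset.sum_range_succ, if_pos hB.An, top, hn, Finset.sum_range_add]
      have e1 : (∑ t ∈ Finset.range c, if S.A t then gcount m (S.child t) else 0) =
          ∑ t ∈ Finset.range c, if S.A t then (fun i => cnt m (.V i l)) (Nat.count S.A t) else 0 := by
        refine Finset.sum_congr rfl fun t ht => ?_
        rw [Finset.mem_range] at ht
        split_ifs with hA
        · exact key t (by omega) _ (V_lo hB hn hl hU hD hA ht)
        · rfl
      have e2 : (∑ t ∈ Finset.range d, if S.A (c+t) then gcount m (S.child (c+t)) else 0) =
          ∑ t ∈ Finset.range d, if S.A (c+t) then cnt m (.V 0 1) else 0 := by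
        refine Finset.sum_congr rfl fun t ht => ?_
        rw [Finset.mem_range] at ht
        split_ifs with hA
        · exact key _ (by omega) _ (V_hi hB hn hc0 hU hD hA (by omega) (by omega))
        · rfl
      rw [e1.trans (sum_rank S.A (fun i => cnt m (.V i l)) c), e2, hi, sum_const (fun t => S.A (c+t)), hl, cnt]
    | E j =>
      obtain ⟨c, d, hn, hc0, hj, hc, hs, hU, hD⟩ := hI
      have top := key S.n le_rfl _ (top_child hB (fun s hs h0 h1 => by
        rw [hD S.n s hB.An hs h0 h1 le_rfl]; omega))
      rw [Finset.sum_range_succ, if_pos hB.An, top, hn, Finset.sum_range_add,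
        Finset.sum_range_succ, if_pos hc,
        key c (by omega) _ (E_mid hB hj hn hc0 hc hs hU hD hc rfl)]
      have e2 : (∑ t ∈ Finset.range d, if S.A (c+1+t) then gcount m (S.child (c+1+t)) else 0) = 0 := by
        refine Finset.sum_eq_zero fun t ht => ?_
        rw [Finset.mem_range] at ht
        rw [if_neg (hs _ (by omega) (by omega))]
      have e1 : (∑ t ∈ Finset.range c, if S.A t then gcount m (S.child t) else 0) =
          ∑ t ∈ Finset.range c, if S.A t then
            (fun i => if i = 0 then cnt m (.V 0 1) else cnt m (.V i 0)) (Nat.count S.A t) else 0 := by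
        refine Finset.sum_congr rfl fun t ht => ?_
        rw [Finset.mem_range] at ht
        split_ifs with hA
        · rcases Nat.eq_zero_or_pos t with h0 | h0
          · rw [key t (by omega) _ (E_0 hB hn hc0 hc hs hU hD hA h0)]
            simp [h0]
          · rw [key t (by omega) _ (E_lo hB hn hc0 hc hs hU hD hA h0 ht)]
            have : Nat.count S.A t ≠ 0 := by
              obtain ⟨t', rfl⟩ : ∃ t', t = 1 + t' := ⟨t-1, by omega⟩
              rw [Nat.count_add, Nat.count_succ, if_pos hB.A0]
              omega
            simp [this]
        · rfl
      rw [e1.trans (sum_rank S.A (fun i => if i = 0 then cnt m (.V 0 1) else cnt m (.V i 0)) c), e2, hj, Finset.sum_range_succ', cnt]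
      simp
      ring
    | H k l =>
      obtain ⟨c, d, hn, hc0, hk, hc, hl, hU, hD⟩ := hI
      have top := key S.n le_rfl _ (top_child hB (fun s hs h0 h1 => by
        rw [hD S.n s hB.An hs h0 h1 le_rfl]; omega))
      rw [Finset.sum_range_succ, if_pos hB.An, top, hn, Finset.sum_range_add,
        Finset.sum_range_succ, if_pos hc,
        key c (by omega) _ (H_mid hB hn hc0 hk hl hU hD hc rfl)]
      have e1 : (∑ t ∈ Finset.range c, if S.A t then gcount m (S.child t) else 0) =
          ∑ t ∈ Finset.range c, if S.A t then (fun i => cnt m (.V i (l+1))) (Nat.count S.A t) else 0 := by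
        refine Finset.sum_congr rfl fun t ht => ?_
        rw [Finset.mem_range] at ht
        split_ifs with hA
        · exact key t (by omega) _ (H_lo hB hn hc hl hU hD hA ht)
        · rfl
      have e2 : (∑ t ∈ Finset.range d, if S.A (c+1+t) then gcount m (S.child (c+1+t)) else 0) =
          ∑ t ∈ Finset.range d, if S.A (c+1+t) then cnt m (.V 0 1) else 0 := by
        refine Finset.sum_congr rfl fun t ht => ?_
        rw [Finset.mem_range] at ht
        split_ifs with hA
        · exact key _ (by omega) _ (H_hi hB hn hc0 hU hD hA (by omega) (by omega))
        · rfl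
      rw [e1.trans (sum_rank S.A (fun i => cnt m (.V i (l+1))) c), e2, hk, sum_const (fun t => S.A (c+1+t)), hl, cnt]
    | D k =>
      have hn := hI.1
      have hA := hI.2.1
      rw [hn, Finset.sum_range_succ, if_pos (hA _ (by omega)), Finset.sum_range_succ',
        if_pos (hA _ (by omega)), key 0 (by omega) _ (D_0 hB hI),
        key (k+1) (by omega) _ (D_top hB hI), cnt]
      have e1 : (∑ t ∈ Finset.range k, if S.A (t+1) then gcount m (S.child (t+1)) else 0) =
          ∑ t ∈ Finset.range k, cnt m (.E t) := by
        refine Finset.sum_congr rfl fun t ht => ?_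
        rw [Finset.mem_range] at ht
        rw [if_pos (hA _ (by omega)), key (t+1) (by omega) _ (D_mid hB hI ht)]
      rw [e1]; ring
def strA (n : ℕ) (w : ℕ → ℕ) (s : ℕ) : Prop :=
  (∀ i j k, i < j → j < s → s ≤ k → k < n → ¬ (w k < w i ∧ w i < w j)) ∧
  (∀ i j k, i < s → s ≤ j → j < k → k < n →
    ¬ (w i < w j ∧ w j < w k) ∧ ¬ (w j < w k ∧ w k < w i))

def strU (n : ℕ) (w : ℕ → ℕ) (u s : ℕ) : Prop :=
  (∀ i j, i < u → s ≤ j → j < n → w i < w j) ∧ (∀ i j, s ≤ i → i < j → j < n → w j < w i)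

def strD (w : ℕ → ℕ) (u s : ℕ) : Prop :=
  ∀ i j, i < s → s ≤ j → j < u → w j < w i

def str (n : ℕ) (w : ℕ → ℕ) : SiteS where
  n := n
  A := strA n w
  U := strU n w
  D := strD w

def AvW (n : ℕ) (w : ℕ → ℕ) : Prop :=
  ∀ i j k l, i < j → j < k → k < l → l < n →
    ¬ (w k < w l ∧ w l < w i ∧ w i < w j) ∧ ¬ (w i < w k ∧ w k < w l ∧ w l < w j) ∧
    ¬ (w l < w i ∧ w i < w j ∧ w j < w k)

def gins (t n : ℕ) (w : ℕ → ℕ) (i : ℕ) : ℕ := if i < t then w i else if i = t then n else w (i-1)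

def ee (t i : ℕ) : ℕ := if i < t then i else i + 1

theorem gins_ee (t n : ℕ) (w : ℕ → ℕ) (i : ℕ) : gins t n w (ee t i) = w i := by
  unfold gins ee; split_ifs <;> first | rfl | omega

theorem gins_t (t n : ℕ) (w : ℕ → ℕ) : gins t n w t = n := by
  simp [gins]

theorem ee_cases (t i : ℕ) : i = t ∨ ∃ j, i = ee t j := by
  unfold ee
  rcases lt_trichotomy i t with h | h | h
  · exact Or.inr ⟨i, by simp [h]⟩
  · exact Or.inl h
  · exact Or.inr ⟨i-1, by rw [if_neg (by omega)]; omega⟩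

structure IsW (n : ℕ) (w : ℕ → ℕ) : Prop where
  bd : ∀ i < n, w i < n
  inj : ∀ i j, i < n → j < n → w i = w j → i = j

theorem ee_lt (t i j : ℕ) : ee t i < ee t j ↔ i < j := by
  unfold ee; split_ifs <;> omega

theorem ee_lt_t (t i : ℕ) : ee t i < t ↔ i < t := by
  unfold ee; split_ifs <;> omega

theorem t_lt_ee (t i : ℕ) : t < ee t i ↔ t ≤ i := by
  unfold ee; split_ifs <;> omega

theorem ee_lo (t i s : ℕ) (h : s ≤ t) : ee t i < s ↔ i < s := by
  unfold ee; split_ifs <;> omega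

theorem ee_hi (t i s : ℕ) (h : t < s) : ee t i < s ↔ i < s - 1 := by
  unfold ee; split_ifs <;> omega

theorem lo_ee (t i s : ℕ) (h : s ≤ t) : s ≤ ee t i ↔ s ≤ i := by
  unfold ee; split_ifs <;> omega

theorem hi_ee (t i s : ℕ) (h : t < s) : s ≤ ee t i ↔ s - 1 ≤ i := by
  unfold ee; split_ifs <;> omega

theorem all_ee (t : ℕ) (P : ℕ → Prop) : (∀ i, P i) ↔ P t ∧ ∀ i, P (ee t i) := by
  constructor
  · intro h; exact ⟨h _, fun i => h _⟩
  · rintro ⟨h1, h2⟩ i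
    rcases ee_cases t i with rfl | ⟨j, rfl⟩
    · exact h1
    · exact h2 j

theorem D_ins {n t : ℕ} {w : ℕ → ℕ} (hw : IsW n w) (ht : t ≤ n) (u s : ℕ) (hs : s ≤ u)
    (hu : u ≤ n + 1) :
    strD (gins t n w) u s ↔ ((str n w).child t).D u s := by
  obtain ⟨bd, inj⟩ := hw
  simp only [SiteS.child, str, strD]
  by_cases h1 : u ≤ t
  · simp only [h1, if_true]
    constructor
    · intro h i j a b c
      have := h i j a b c
      simpa [gins, show i < t by omega, show j < t by omega] using this
    · intro h i j a b c
      have := h i j a b c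
      simpa [gins, show i < t by omega, show j < t by omega] using this
  · simp only [h1, if_false]
    by_cases h2 : t < s
    · simp only [h2, if_true]
      constructor
      · intro h i j a b c
        have := h (ee t i) (ee t j) ((ee_hi _ _ _ h2).2 a) ((hi_ee _ _ _ h2).2 b)
          ((ee_hi _ _ _ (by omega)).2 c)
        simpa only [gins_ee] using this
      · intro h i j a b c
        rcases ee_cases t j with rfl | ⟨j, rfl⟩
        · omega
        rcases ee_cases t i with rfl | ⟨i, rfl⟩
        · rw [gins_t, gins_ee]
          apply bd; have := (ee_hi _ j u (by omega)).1 c; omega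
        · rw [gins_ee, gins_ee]
          exact h i j ((ee_hi _ _ _ h2).1 a) ((hi_ee _ _ _ h2).1 b) ((ee_hi _ _ _ (by omega)).1 c)
    · simp only [h2, if_false]
      constructor
      · intro h
        by_contra h0
        have := h 0 t (by omega) (by omega) (by omega)
        rw [gins_t] at this
        simp only [gins, show 0 < t by omega, if_true] at this
        have := bd 0 (by omega)
        omega
      · intro h i j a
        omega

theorem U_ins {n t : ℕ} {w : ℕ → ℕ} (hw : IsW n w) (ht : t ≤ n) (u s : ℕ) (hs : u ≤ s)
    (hu : s ≤ n + 1) :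
    strU (n+1) (gins t n w) u s ↔ ((str n w).child t).U u s := by
  obtain ⟨bd, inj⟩ := hw
  simp only [SiteS.child, str]
  by_cases h1 : u ≤ t
  · simp only [h1, if_true]
    by_cases h2 : s < t
    · simp only [h2, if_true, iff_false]
      intro h
      have := h.2 s t le_rfl h2 (by omega)
      rw [gins_t] at this
      simp only [gins, h2, if_true] at this
      have := bd s (by omega)
      omega
    · simp only [h2, if_false]
      have key : ∀ r, (∀ j, s ≤ ee t j ↔ r ≤ j) →
          (strU (n+1) (gins t n w) u s ↔ strU n w u r) := by
        intro r hr
        constructor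
        · rintro ⟨ha, hb⟩
          refine ⟨fun i j a b c => ?_, fun i j a b c => ?_⟩
          · have := ha (ee t i) (ee t j) ((ee_lo _ _ _ h1).2 a) ((hr _).2 b)
              ((ee_hi _ _ _ (by omega)).2 (by omega))
            simpa only [gins_ee] using this
          · have := hb (ee t i) (ee t j) ((hr _).2 a) ((ee_lt _ _ _).2 b)
              ((ee_hi _ _ _ (by omega)).2 (by omega))
            simpa only [gins_ee] using this
        · rintro ⟨ha, hb⟩
          refine ⟨fun i j a b c => ?_, fun i j a b c => ?_⟩
          · rcases ee_cases t i with rfl | ⟨i, rfl⟩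
            · omega
            have a' := (ee_lo _ _ _ h1).1 a
            rcases ee_cases t j with rfl | ⟨j, rfl⟩
            · rw [gins_t, gins_ee]
              apply bd; omega
            rw [gins_ee, gins_ee]
            have := (ee_hi _ _ _ (by omega)).1 c
            exact ha i j a' ((hr _).1 b) (by omega)
          · rcases ee_cases t j with rfl | ⟨j, rfl⟩
            · omega
            have := (ee_hi _ _ _ (by omega)).1 c
            rcases ee_cases t i with rfl | ⟨i, rfl⟩
            · rw [gins_t, gins_ee]
              apply bd; omega
            rw [gins_ee, gins_ee]
            exact hb i j ((hr _).1 a) ((ee_lt _ _ _).1 b) (by omega)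
      by_cases h3 : s = t
      · simp only [h3, if_true]
        rw [← h3] at key ⊢
        exact key s (fun j => lo_ee _ _ _ le_rfl)
      · simp only [h3, if_false]
        exact key (s-1) (fun j => hi_ee _ _ _ (by omega))
  · simp only [h1, if_false]
    constructor
    · intro h
      by_contra h0
      have := h.1 t s (by omega) le_rfl (by omega)
      rw [gins_t] at this
      simp only [gins, show ¬ s < t by omega, show ¬ s = t by omega, if_false] at this
      have := bd (s-1) (by omega)
      omega
    · intro h
      exact ⟨fun i j => by omega, fun i j => by omega⟩

theorem A_ins {n t : ℕ} {w : ℕ → ℕ} (hw : IsW n w) (ht : t ≤ n) (s : ℕ) 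
    (hu : s ≤ n + 1) :
    strA (n+1) (gins t n w) s ↔ ((str n w).child t).A s := by
  obtain ⟨bd, inj⟩ := hw
  have hn : ∀ i, ee t i < n + 1 ↔ i < n := fun i => by rw [ee_hi _ _ _ (by omega)]; simp
  have key : ∀ r, r ≤ n → (∀ j, ee t j < s ↔ j < r) → (strA (n+1) (gins t n w) s ↔ strA n w r ∧
      (s ≤ t → strD w t r) ∧ (t < s → strU n w t r)) := by
    intro r hrn hr
    have hr' : ∀ j, s ≤ ee t j ↔ r ≤ j := fun j => by rw [← not_lt, hr, not_lt]
    constructor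
    · rintro ⟨ha, hb⟩
      refine ⟨⟨fun i j k a b c d => ?_, fun i j k a b c d => ?_⟩, fun hst i j a b c => ?_,
        fun hst => ⟨fun i j a b c => ?_, fun i j a b c => ?_⟩⟩
      · have := ha (ee t i) (ee t j) (ee t k) ((ee_lt _ _ _).2 a) ((hr _).2 b) ((hr' _).2 c)
          ((hn _).2 d)
        simpa only [gins_ee] using this
      · have := hb (ee t i) (ee t j) (ee t k) ((hr _).2 a) ((hr' _).2 b) ((ee_lt _ _ _).2 c) 
          ((hn _).2 d)
        simpa only [gins_ee] using this
      · have := (hb (ee t i) (ee t j) t ((hr _).2 a) ((hr' _).2 b) ((ee_lt_t _ _).2 c) 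
          (by omega)).1
        simp only [gins_ee, gins_t] at this
        have h1 := bd j (by omega)
        have h2 := inj i j (by omega) (by omega)
        omega
      · have := (ha (ee t i) t (ee t j) ((ee_lt_t _ _).2 a) hst ((hr' _).2 b) ((hn _).2 c))
        simp only [gins_ee, gins_t] at this
        have h3 := (hr i).1 (by have := (ee_lt_t t i).2 a; omega)
        have h1 := bd i (by omega)
        have h2 := inj i j (by omega) (by omega)
        omega
      · have := (hb t (ee t i) (ee t j) hst ((hr' _).2 a) ((ee_lt _ _ _).2 b) ((hn _).2 c)).2
        simp only [gins_ee, gins_t] at this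
        have h1 := bd j (by omega)
        have h2 := inj i j (by omega) (by omega)
        omega
    · rintro ⟨⟨ha, hb⟩, hD, hU⟩
      refine ⟨fun i j k a b c d => ?_, fun i j k a b c d => ?_⟩
      · rcases ee_cases t i with rfl | ⟨i, rfl⟩
        · rcases ee_cases i j with rfl | ⟨j, rfl⟩
          · omega
          rw [gins_t, gins_ee]
          have := bd j (by have := (hn j).1 (by omega); omega)
          omega
        rcases ee_cases t k with rfl | ⟨k, rfl⟩
        · rw [gins_t, gins_ee]
          have := bd i (by have := (hn i).1 (by omega); omega)
          omega
        have d' := (hn _).1 d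
        have c' := (hr' _).1 c
        rcases ee_cases t j with rfl | ⟨j, rfl⟩
        · rw [gins_t, gins_ee, gins_ee]
          have := (hU b).1 i k ((ee_lt_t _ _).1 a) c' d'
          omega
        rw [gins_ee, gins_ee, gins_ee]
        exact ha i j k ((ee_lt _ _ _).1 a) ((hr _).1 b) c' d'
      · rcases ee_cases t j with rfl | ⟨j, rfl⟩
        · rcases ee_cases j k with rfl | ⟨k, rfl⟩
          · omega
          rw [gins_t, gins_ee]
          have := bd k ((hn k).1 d)
          omega
        have b' := (hr' _).1 b
        rcases ee_cases t k with rfl | ⟨k, rfl⟩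
        · rcases ee_cases k i with rfl | ⟨i, rfl⟩
          · omega
          rw [gins_t, gins_ee, gins_ee]
          have := hD (by omega) i j ((hr _).1 a) b' ((ee_lt_t _ _).1 c)
          have := bd i (by have := (hn i).1 (by omega); omega)
          omega
        have d' := (hn _).1 d
        have c' := (ee_lt _ _ _).1 c
        rcases ee_cases t i with rfl | ⟨i, rfl⟩
        · rw [gins_t, gins_ee, gins_ee]
          have := (hU a).2 j k b' c' d'
          have := bd j (by omega)
          omega
        rw [gins_ee, gins_ee, gins_ee]
        exact hb i j k ((hr _).1 a) b' c' d'
  simp only [SiteS.child, str]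
  by_cases h : s ≤ t
  · rw [key s (by omega) (fun j => ee_lo _ _ _ h)]
    simp only [h, if_true, forall_const, show ¬ t < s by omega, false_imp_iff, and_true]
  · rw [key (s-1) (by omega) (fun j => ee_hi _ _ _ (by omega))]
    simp only [h, if_false, forall_const, show t < s by omega, false_imp_iff, true_and]

theorem Av_ins {n t : ℕ} {w : ℕ → ℕ} (hw : IsW n w) (ht : t ≤ n) :
    AvW (n+1) (gins t n w) ↔ AvW n w ∧ strA n w t := by
  obtain ⟨bd, inj⟩ := hw
  have hn : ∀ i, ee t i < n + 1 ↔ i < n := fun i => by rw [ee_hi _ _ _ (by omega)]; simp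
  constructor
  · intro h
    refine ⟨fun i j k l a b c d => ?_, fun i j k a b c d => ?_, fun i j k a b c d => ?_⟩
    · have := h _ _ _ _ ((ee_lt t _ _).2 a) ((ee_lt _ _ _).2 b) ((ee_lt _ _ _).2 c) ((hn _).2 d)
      simpa only [gins_ee] using this
    · have := (h _ _ _ _ ((ee_lt t _ _).2 a) ((ee_lt_t _ _).2 b) ((t_lt_ee _ _).2 c)
        ((hn _).2 d)).2.2
      simp only [gins_ee, gins_t] at this
      have := bd j (by omega)
      omega
    · have := (h _ _ _ _ ((ee_lt_t t _).2 a) ((t_lt_ee _ _).2 b) ((ee_lt _ _ _).2 c) 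
        ((hn _).2 d))
      simp only [gins_ee, gins_t] at this
      have := bd i (by omega)
      have := bd k (by omega)
      omega
  · rintro ⟨h, ha, hb⟩ i j k l a b c d
    have bd' : ∀ i, ee t i < n + 1 → w i < n := fun i hi => bd i ((hn i).1 hi)
    rcases ee_cases t i with rfl | ⟨i, rfl⟩
    · rcases ee_cases i j with rfl | ⟨j, rfl⟩
      · omega
      rcases ee_cases i k with rfl | ⟨k, rfl⟩
      · omega
      rcases ee_cases i l with rfl | ⟨l, rfl⟩
      · omega
      simp only [gins_ee, gins_t]
      have := bd' j (by omega)
      have := bd' k (by omega)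
      have := bd' l (by omega)
      omega
    have b1 := bd' i (by omega)
    rcases ee_cases t j with rfl | ⟨j, rfl⟩
    · rcases ee_cases j k with rfl | ⟨k, rfl⟩
      · omega
      rcases ee_cases j l with rfl | ⟨l, rfl⟩
      · omega
      simp only [gins_ee, gins_t]
      have := bd' k (by omega)
      have := bd' l (by omega)
      have := hb i k l ((ee_lt_t _ _).1 a) ((t_lt_ee _ _).1 b) ((ee_lt _ _ _).1 c) ((hn _).1 d)
      omega
    have b2 := bd' j (by omega)
    rcases ee_cases t k with rfl | ⟨k, rfl⟩
    · rcases ee_cases k l with rfl | ⟨l, rfl⟩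
      · omega
      simp only [gins_ee, gins_t]
      have := bd' l (by omega)
      have := ha i j l ((ee_lt _ _ _).1 a) ((ee_lt_t _ _).1 b) ((t_lt_ee _ _).1 c) ((hn _).1 d)
      omega
    have b3 := bd' k (by omega)
    rcases ee_cases t l with rfl | ⟨l, rfl⟩
    · simp only [gins_ee, gins_t]
      omega
    simp only [gins_ee]
    exact h i j k l ((ee_lt _ _ _).1 a) ((ee_lt _ _ _).1 b) ((ee_lt _ _ _).1 c) ((hn _).1 d)

structure Agr (S S' : SiteS) : Prop where
  n : S.n = S'.n
  A : ∀ s ≤ S.n, S.A s ↔ S'.A s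
  U : ∀ u s, u ≤ s → s ≤ S.n → (S.U u s ↔ S'.U u s)
  D : ∀ u s, s ≤ u → u ≤ S.n → (S.D u s ↔ S'.D u s)

theorem Agr.child {S S' : SiteS} (h : Agr S S') {t : ℕ} (ht : t ≤ S.n) :
    Agr (S.child t) (S'.child t) := by
  obtain ⟨hn, hA, hU, hD⟩ := h
  constructor
  · simp [SiteS.child, hn]
  · intro s hs
    simp only [SiteS.child] at hs ⊢
    split_ifs with h1
    · rw [hA _ (by omega), hD _ _ h1 ht]
    · rw [hA _ (by omega), hU _ _ (by omega) (by omega)]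
  · intro u s h1 hs
    simp only [SiteS.child] at hs ⊢
    rw [hn]
    split_ifs with h2 h3 h4
    · rfl
    · exact hU _ _ (by omega) (by omega)
    · exact hU _ _ (by omega) (by omega)
    · rfl
  · intro u s h1 hs
    simp only [SiteS.child] at hs ⊢
    split_ifs with h2 h3
    · exact hD _ _ (by omega) (by omega)
    · exact hD _ _ (by omega) (by omega)
    · rfl

theorem gcount_agr (m : ℕ) : ∀ {S S' : SiteS}, Agr S S' → gcount m S = gcount m S' := by
  classical
  induction m with
  | zero => intros; rfl
  | succ m ih =>
    intro S S' h
    simp only [gcount]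
    rw [← h.n]
    apply Finset.sum_congr rfl
    intro t ht
    have ht' : t ≤ S.n := by simp at ht; omega
    rw [ih (h.child ht')]
    exact if_congr (h.A t ht') rfl rfl

theorem str_ins {n t : ℕ} {w : ℕ → ℕ} (hw : IsW n w) (ht : t ≤ n) :
    Agr (str (n+1) (gins t n w)) ((str n w).child t) where
  n := rfl
  A := fun s hs => A_ins hw ht s hs
  U := fun u s h hs => U_ins hw ht u s h hs
  D := fun u s h hs => D_ins hw ht u s h hs
def word {n : ℕ} (π : Equiv.Perm (Fin n)) (i : ℕ) : ℕ := if h : i < n then (π ⟨i, h⟩).val else 0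

theorem word_val {n : ℕ} (π : Equiv.Perm (Fin n)) (i : Fin n) : word π i.val = (π i).val := by
  simp [word]

theorem word_isW {n : ℕ} (π : Equiv.Perm (Fin n)) : IsW n (word π) := by
  constructor
  · intro i hi; simp [word, hi]
  · intro i j hi hj h
    simp only [word, hi, hj, dif_pos] at h
    have := π.injective (Fin.ext h)
    simpa using this

def pins {n : ℕ} (t : Fin (n+1)) (π : Equiv.Perm (Fin n)) : Equiv.Perm (Fin (n+1)) :=
  (finSuccEquiv' t).trans ((Equiv.optionCongr π).trans (finSuccEquiv' (Fin.last n)).symm)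

theorem pins_t {n : ℕ} (t : Fin (n+1)) (π : Equiv.Perm (Fin n)) : pins t π t = Fin.last n := by
  simp [pins]

theorem pins_sa {n : ℕ} (t : Fin (n+1)) (π : Equiv.Perm (Fin n)) (i : Fin n) :
    pins t π (t.succAbove i) = (π i).castSucc := by
  simp [pins]

theorem word_pins {n : ℕ} (t : Fin (n+1)) (π : Equiv.Perm (Fin n)) :
    word (pins t π) = gins t.val n (word π) := by
  funext i
  by_cases h : i < n + 1
  · rw [show i = (⟨i, h⟩ : Fin (n+1)).val from rfl, word_val]
    generalize (⟨i, h⟩ : Fin (n+1)) = j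
    rcases Fin.eq_self_or_eq_succAbove t j with rfl | ⟨j, rfl⟩
    · rw [pins_t, gins_t]; simp
    · rw [pins_sa]
      have : (t.succAbove j).val = ee t.val j.val := by
        unfold ee Fin.succAbove
        simp only [Fin.lt_def]
        split_ifs <;> simp_all
      rw [this, gins_ee, word_val]; simp
  · have := t.2
    simp only [gins, word, h, show ¬ i < t.val by omega, show ¬ i = t.val by omega,
      show ¬ i - 1 < n by omega, if_false, dif_neg, not_false_eq_true]

theorem pins_bij (n : ℕ) : Function.Bijective
    (fun p : Fin (n+1) × Equiv.Perm (Fin n) => pins p.1 p.2) := by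
  rw [Fintype.bijective_iff_injective_and_card]
  constructor
  · rintro ⟨t, π⟩ ⟨t', π'⟩ h
    simp only at h
    have h1 : t = t' := by
      apply (pins t' π').injective
      rw [pins_t, ← h, pins_t]
    subst h1
    have : π = π' := by
      ext i
      have := pins_sa t π i
      rw [h, pins_sa] at this
      have := Fin.castSucc_injective _ this
      rw [this]
    rw [this]
  · simp [Fintype.card_perm, Nat.factorial_succ]

open Classical in
noncomputable def NN (n m : ℕ) : ℕ :=
  ∑ π : Equiv.Perm (Fin n), if AvW n (word π) then gcount m (str n (word π)) else 0

theorem NN_succ (n m : ℕ) : NN (n+1) m = NN n (m+1) := by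
  classical
  unfold NN
  rw [← (pins_bij n).sum_comp
    (fun π => if AvW (n+1) (word π) then gcount m (str (n+1) (word π)) else 0)]
  rw [Fintype.sum_prod_type, Finset.sum_comm]
  apply Finset.sum_congr rfl
  intro π _
  have hw := word_isW π
  by_cases hA : AvW n (word π)
  · rw [if_pos hA]
    simp only [gcount]
    rw [show (str n (word π)).n = n from rfl, ← Fin.sum_univ_eq_sum_range
      (fun t => if (str n (word π)).A t then gcount m ((str n (word π)).child t) else 0)]
    apply Finset.sum_congr rfl
    intro t _
    have ht : t.val ≤ n := by omega
    rw [word_pins, gcount_agr m (str_ins hw ht)]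
    exact if_congr ((Av_ins hw ht).trans (by simp [hA, str])) rfl rfl
  · rw [if_neg hA]
    apply Finset.sum_eq_zero
    intro t _
    have ht : t.val ≤ n := by omega
    rw [word_pins, if_neg]
    rw [Av_ins hw ht]
    tauto

theorem NN_add (m : ℕ) : ∀ n, NN (n+m) 0 = NN n m := by
  induction m with
  | zero => intro n; rfl
  | succ m ih => intro n; rw [← NN_succ, ← ih, show n + (m+1) = n + 1 + m by omega]

theorem contains_iff {n : ℕ} (π : Equiv.Perm (Fin n)) (σ : Fin 4 → Fin 4) :
    ContainsPattern π σ ↔ ∃ i j k l : Fin n, i < j ∧ j < k ∧ k < l ∧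
      ∀ a b : Fin 4, σ a < σ b ↔ π (![i,j,k,l] a) < π (![i,j,k,l] b) := by
  constructor
  · rintro ⟨f, hf⟩
    refine ⟨f 0, f 1, f 2, f 3, by simp, by simp, by simp, ?_⟩
    have : (![f 0, f 1, f 2, f 3] : Fin 4 → Fin n) = f := by
      funext a; fin_cases a <;> rfl
    rw [this]; exact hf
  · rintro ⟨i, j, k, l, h1, h2, h3, h⟩
    refine ⟨OrderEmbedding.ofStrictMono ![i,j,k,l] ?_, h⟩
    rw [Fin.strictMono_iff_lt_succ]
    intro a
    fin_cases a
    · exact h1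
    · exact h2
    · exact h3

abbrev TT : Set (Fin 4 → Fin 4) := {![2,3,0,1], ![0,3,1,2], ![1,2,3,0]}

theorem avoid_iff {n : ℕ} (π : Equiv.Perm (Fin n)) :
    (∀ σ ∈ TT, ¬ ContainsPattern π σ) ↔ AvW n (word π) := by
  have key : ∀ i j k l : Fin n, 
    ((∀ a b : Fin 4, (![2,3,0,1] : Fin 4 → Fin 4) a < (![2,3,0,1] : Fin 4 → Fin 4) b ↔
      π (![i,j,k,l] a) < π (![i,j,k,l] b)) ↔ π k < π l ∧ π l < π i ∧ π i < π j) ∧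
    ((∀ a b : Fin 4, (![0,3,1,2] : Fin 4 → Fin 4) a < (![0,3,1,2] : Fin 4 → Fin 4) b ↔
      π (![i,j,k,l] a) < π (![i,j,k,l] b)) ↔ π i < π k ∧ π k < π l ∧ π l < π j) ∧
    ((∀ a b : Fin 4, (![1,2,3,0] : Fin 4 → Fin 4) a < (![1,2,3,0] : Fin 4 → Fin 4) b ↔
      π (![i,j,k,l] a) < π (![i,j,k,l] b)) ↔ π l < π i ∧ π i < π j ∧ π j < π k) := by
    intro i j k l
    refine ⟨⟨fun h => ⟨(h 2 3).1 (by decide), (h 3 0).1 (by decide), (h 0 1).1 (by decide)⟩, ?_⟩,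
      ⟨fun h => ⟨(h 0 2).1 (by decide), (h 2 3).1 (by decide), (h 3 1).1 (by decide)⟩, ?_⟩,
      ⟨fun h => ⟨(h 3 0).1 (by decide), (h 0 1).1 (by decide), (h 1 2).1 (by decide)⟩, ?_⟩⟩
    all_goals
      rintro ⟨h1, h2, h3⟩ a b
      simp only [Fin.lt_def] at h1 h2 h3
      fin_cases a <;> fin_cases b <;> simp [-Fin.val_fin_lt, Fin.lt_def] <;> omega
  have e1 : (∀ σ ∈ TT, ¬ ContainsPattern π σ) ↔ ∀ i j k l : Fin n, i < j → j < k → k < l →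
      ¬ (π k < π l ∧ π l < π i ∧ π i < π j) ∧ ¬ (π i < π k ∧ π k < π l ∧ π l < π j) ∧
      ¬ (π l < π i ∧ π i < π j ∧ π j < π k) := by
    simp only [TT, Set.mem_insert_iff, Set.mem_singleton_iff, forall_eq_or_imp, forall_eq,
      contains_iff]
    constructor
    · rintro ⟨h1, h2, h3⟩ i j k l a b c
      exact ⟨fun h => h1 ⟨i,j,k,l,a,b,c,(key i j k l).1.2 h⟩,
        fun h => h2 ⟨i,j,k,l,a,b,c,(key i j k l).2.1.2 h⟩,
        fun h => h3 ⟨i,j,k,l,a,b,c,(key i j k l).2.2.2 h⟩⟩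
    · intro h
      refine ⟨?_, ?_, ?_⟩
      · rintro ⟨i,j,k,l,a,b,c,h'⟩
        exact (h i j k l a b c).1 ((key i j k l).1.1 h')
      · rintro ⟨i,j,k,l,a,b,c,h'⟩
        exact (h i j k l a b c).2.1 ((key i j k l).2.1.1 h')
      · rintro ⟨i,j,k,l,a,b,c,h'⟩
        exact (h i j k l a b c).2.2 ((key i j k l).2.2.1 h')
  rw [e1]
  constructor
  · intro h i j k l a b c d
    have := h ⟨i, by omega⟩ ⟨j, by omega⟩ ⟨k, by omega⟩ ⟨l, d⟩ a b c
    simpa only [word, show i < n by omega, show j < n by omega, show k < n by omega, d, dif_pos,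
      Fin.lt_def] using this
  · intro h i j k l a b c
    have := h i j k l a b c l.2
    simpa only [word_val, ← Fin.lt_def] using this

theorem count_NN (n : ℕ) : avoiderCount TT n = NN n 0 := by
  classical
  unfold avoiderCount NN
  simp only [avoid_iff, gcount]
  rw [Nat.card_eq_fintype_card, Fintype.card_subtype, Finset.card_filter]

theorem count_zero : avoiderCount TT 0 = 1 := by
  rw [count_NN]
  unfold NN
  simp [gcount, AvW]

theorem count_succ (m : ℕ) : avoiderCount TT (m+1) = cnt m (.D 0) := by
  rw [count_NN, add_comm, NN_add]
  unfold NN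
  rw [Fintype.sum_unique, if_pos (show AvW 1 _ from fun i j k l => by omega)]
  apply gcount_eq
  · constructor
    · exact Nat.one_pos
    · exact ⟨fun i j k => by omega, fun i j k => by omega⟩
    · exact ⟨fun i j k => by simp only [str]; omega, fun i j k => by simp only [str]; omega⟩
    · intro u hu
      exact ⟨fun i j => by simp only [str]; omega, fun i j => by simp only [str]; omega⟩
    · intro u hu i j; omega
    · intro u hu i j; omega
  · refine ⟨rfl, ?_, ?_, ?_⟩
    · intro s hs
      exact ⟨fun i j k => by omega, fun i j k => by omega⟩
    · intro u s h1 h2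
      have : s < 1 := h2
      have : u = 0 := by omega
      subst this
      refine ⟨fun _ => rfl, fun _ => ⟨fun i j => by omega, fun i j => by omega⟩⟩
    · intro u s h1 h2 i j
      have : u ≤ 1 := h2
      omega
noncomputable def GG (ℓ : Lab) : PowerSeries ℚ := PowerSeries.mk fun m => (cnt m ℓ : ℚ)

theorem mk_step (f : ℕ → ℚ) (g : PowerSeries ℚ) (h0 : f 0 = 1)
    (h : ∀ m, f (m+1) = PowerSeries.coeff m g) : PowerSeries.mk f = 1 + X * g := by
  ext m
  cases m with
  | zero => simp [h0]
  | succ m => simp [h, PowerSeries.coeff_succ_X_mul, PowerSeries.coeff_one]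

theorem GV (i l : ℕ) : GG (.V i l) = 1 + X * (∑ i' ∈ Finset.range (i+1), GG (.V i' l) +
    l • GG (.V 0 1) + GG (.H 0 0)) := by
  apply mk_step
  · simp [cnt]
  · intro m; simp [cnt, GG, -nsmul_eq_mul]; exact (nsmul_eq_mul _ _).symm

theorem GE (j : ℕ) : GG (.E j) = 1 + X * (GG (.V 0 1) + ∑ i ∈ Finset.range j, GG (.V (i+1) 0) +
    GG (.E j) + GG (.H 0 0)) := by
  apply mk_step
  · simp [cnt]
  · intro m; simp [cnt, GG]

theorem GH (k l : ℕ) : GG (.H k l) = 1 + X * (∑ i ∈ Finset.range (k+1), GG (.V i (l+1)) +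
    GG (.H k (l+1)) + l • GG (.V 0 1) + GG (.H 0 0)) := by
  apply mk_step
  · simp [cnt]
  · intro m; simp [cnt, GG, -nsmul_eq_mul]; exact (nsmul_eq_mul _ _).symm

theorem GD (k : ℕ) : GG (.D k) = 1 + X * (GG (.D (k+1)) + ∑ j ∈ Finset.range k, GG (.E j) +
    GG (.H k 0)) := by
  apply mk_step
  · simp [cnt]
  · intro m; simp [cnt, GG]

theorem uniq_seq (f g w : ℕ → PowerSeries ℚ) (hf : ∀ k, f k = w k + X * f (k+1))
    (hg : ∀ k, g k = w k + X * g (k+1)) (k : ℕ) : f k = g k := by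
  have key : ∀ m k, PowerSeries.coeff m (f k) = PowerSeries.coeff m (g k) := by
    intro m
    induction m with
    | zero => intro k; rw [hf, hg]; simp
    | succ m ih => intro k; rw [hf, hg]; simp [PowerSeries.coeff_succ_X_mul, ih]
  ext m
  exact key m k

theorem geo (q : PowerSeries ℚ) (hq : (1 - X) * q = 1) (k : ℕ) :
    X * ∑ i ∈ Finset.range k, q^(i+1) = q^k - 1 := by
  induction k with
  | zero => simp
  | succ k ih => rw [Finset.sum_range_succ, mul_add, ih]; linear_combination (-q^k) * hq

theorem V_form (q : PowerSeries ℚ) (hq : (1 - X) * q = 1) (i l : ℕ) :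
    GG (.V i l) = (1 + X * ((l : PowerSeries ℚ) * GG (.V 0 1) + GG (.H 0 0))) * q^(i+1) := by
  induction i with
  | zero =>
    have := GV 0 l
    simp only [zero_add, Finset.sum_range_one, nsmul_eq_mul] at this
    linear_combination q * this - GG (.V 0 l) * hq
  | succ i ih =>
    have h1 := GV (i+1) l
    have h2 := GV i l
    rw [Finset.sum_range_succ] at h1
    have h3 : GG (.V (i+1) l) = q * GG (.V i l) := by
      linear_combination q * (h1 - h2) - GG (.V (i+1) l) * hq
    rw [h3, ih]; ring

theorem V_sum (q : PowerSeries ℚ) (hq : (1 - X) * q = 1) (k l : ℕ) :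
    X * ∑ i ∈ Finset.range k, GG (.V i l) =
      (1 + X * ((l : PowerSeries ℚ) * GG (.V 0 1) + GG (.H 0 0))) * (q^k - 1) := by
  simp only [V_form q hq _ l]
  rw [← Finset.mul_sum, ← geo q hq]; ring

theorem H_form (q : PowerSeries ℚ) (hq : (1 - X) * q = 1) (k l : ℕ) :
    GG (.H k l) = q * ((1 + X * GG (.H 0 0) + X * GG (.V 0 1)) * q^(k+1) - X * GG (.V 0 1)
      + X^2 * GG (.V 0 1) * q^(k+2)) + X * GG (.V 0 1) * q^(k+2) * (l : PowerSeries ℚ) := by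
  refine uniq_seq (fun l => GG (.H k l)) (fun l => q * ((1 + X * GG (.H 0 0) +
    X * GG (.V 0 1)) * q^(k+1) - X * GG (.V 0 1)
      + X^2 * GG (.V 0 1) * q^(k+2)) + X * GG (.V 0 1) * q^(k+2) * (l : PowerSeries ℚ))
    (fun l => 1 + X * (l : PowerSeries ℚ) * GG (.V 0 1) + X * GG (.H 0 0) +
      (1 + X * (((l : PowerSeries ℚ) + 1) * GG (.V 0 1) + GG (.H 0 0))) * (q^(k+1) - 1)) ?_ ?_ l
  · intro l
    have h1 := GH k l
    have h2 := V_sum q hq (k+1) (l+1)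
    rw [nsmul_eq_mul] at h1
    push_cast at h2
    linear_combination h1 + h2
  · intro l
    push_cast
    linear_combination ((1 + X * GG (.H 0 0) + X * GG (.V 0 1)) * q^(k+1) - X * GG (.V 0 1)
      + X^2 * GG (.V 0 1) * q^(k+2) + X * GG (.V 0 1) * q^(k+1) * (l : PowerSeries ℚ)) * hq

theorem E_form (q : PowerSeries ℚ) (hq : (1 - X) * q = 1) (j : ℕ) :
    GG (.E j) = q * (1 + X * GG (.V 0 1) + X * GG (.H 0 0) +
      (1 + X * GG (.H 0 0)) * (q^(j+1) - q)) := by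
  have h1 := GE j
  have h2 : X * ∑ i ∈ Finset.range j, GG (.V (i+1) 0) =
      (1 + X * GG (.H 0 0)) * (q^(j+1) - q) := by
    simp only [V_form q hq _ 0]
    have := geo q hq j
    have h3 : ∀ i, (1 + X * (((0:ℕ) : PowerSeries ℚ) * GG (.V 0 1) + GG (.H 0 0))) * q^(i+1+1) =
      ((1 + X * GG (.H 0 0)) * q) * q^(i+1) := by intro i; push_cast; ring
    simp only [h3]
    rw [← Finset.mul_sum]
    linear_combination (1 + X * GG (.H 0 0)) * q * this
  linear_combination q * h1 + q * h2 - GG (.E j) * hq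

theorem D_form (q p : PowerSeries ℚ) (hq : (1 - X) * q = 1) (hp : (1 - 2*X) * p = 1) (k : ℕ) :
    GG (.D k) = q * (1 - q * (1 + X * GG (.H 0 0)) - X^2 * q * GG (.V 0 1) +
        X * (X * q^2 * (1 + X * GG (.V 0 1) + X * GG (.H 0 0) - (1 + X * GG (.H 0 0)) * q))) +
      (X * q^2 * (1 + X * GG (.V 0 1) + X * GG (.H 0 0) - (1 + X * GG (.H 0 0)) * q)) * (k : PowerSeries ℚ) +
      p * (1 + X * GG (.H 0 0) + X * ((1 + X * GG (.H 0 0) + X * GG (.V 0 1)) * q +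
        X^2 * GG (.V 0 1) * q^2)) * q^k := by
  generalize hy : GG (.V 0 1) = y
  generalize hh : GG (.H 0 0) = h
  refine uniq_seq (fun k => GG (.D k)) (fun k => q * (1 - q * (1 + X * h) - X^2 * q * y +
        X * (X * q^2 * (1 + X * y + X * h - (1 + X * h) * q))) +
      (X * q^2 * (1 + X * y + X * h - (1 + X * h) * q)) * (k : PowerSeries ℚ) +
      p * (1 + X * h + X * ((1 + X * h + X * y) * q + X^2 * y * q^2)) * q^k)
    (fun k => 1 + q * (X * (k : PowerSeries ℚ) * (1 + X * y + X * h - (1 + X * h) * q) + (1 + X * h) * (q^k - 1)) +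
      X * (q * ((1 + X * h + X * y) * q^(k+1) - X * y + X^2 * y * q^(k+2)))) ?_ ?_ k
  · intro k
    have h1 := GD k
    have h2 : X * ∑ j ∈ Finset.range k, GG (.E j) =
        q * (X * (k : PowerSeries ℚ) * (1 + X * y + X * h - (1 + X * h) * q) + (1 + X * h) * (q^k - 1)) := by
      simp only [E_form q hq, hy, hh]
      have h3 : ∀ j, q * (1 + X * y + X * h + (1 + X * h) * (q^(j+1) - q)) =
          q * (1 + X * y + X * h - (1 + X * h) * q) + (q * (1 + X * h)) * q^(j+1) := by
        intro j; ring
      simp only [h3]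
      rw [Finset.sum_add_distrib, Finset.sum_const, Finset.card_range,
        nsmul_eq_mul, ← Finset.mul_sum]
      linear_combination (q * (1 + X * h)) * geo q hq k
    have h4 := H_form q hq k 0
    rw [hy, hh] at h4
    push_cast at h4
    linear_combination h1 + h2 + X * h4
  · intro k
    push_cast
    have e : 1 - X * q = (1 - 2*X) * q := by linear_combination (-1) * hq
    have e' : p * (1 - X * q) = q := by rw [e]; linear_combination q * hp
    linear_combination
      (1 - q * (1 + X * h) - X^2 * q * y +
        X * (X * q^2 * (1 + X * y + X * h - (1 + X * h) * q)) +
        X * q * (1 + X * y + X * h - (1 + X * h) * q) * (k : PowerSeries ℚ)) * hq +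
      (1 + X * h + X * ((1 + X * h + X * y) * q + X^2 * y * q^2)) * q^k * e'

theorem field_aux {L : Type*} [Field L] (x a b c q p y h d : L)
    (hA : a ≠ 0) (hB : b ≠ 0) (hK : c ≠ 0) (ea : a = 1 - x) (eb : b = 1 - 2*x)
    (ec : c = a^3*b - x * (a*b + a*x - a^2*x + x^2))
    (hq : a * q = 1) (hp : b * p = 1) (hy : b * y = 1 + x * h)
    (hh : h = q * ((1 + x * h + x * y) * q - x * y + x^2 * y * q^2))
    (hd : d = q * (1 - q * (1 + x * h) - x^2 * q * y +
        x * (x * q^2 * (1 + x * y + x * h - (1 + x * h) * q))) +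
      p * (1 + x * h + x * ((1 + x * h + x * y) * q + x^2 * y * q^2))) :
    (1 - 2*x) * (1 - 6*x + 12*x^2 - 11*x^3 + 3*x^4) * (1 + x * d) =
      1 - 7*x + 18*x^2 - 21*x^3 + 11*x^4 := by
  have hq' : q = 1 / a := by rw [eq_div_iff hA]; linear_combination hq
  have hp' : p = 1 / b := by rw [eq_div_iff hB]; linear_combination hp
  have hy' : y = (1 + x*h) / b := by rw [eq_div_iff hB]; linear_combination hy
  have hh' : h = (a*b + a*x - a^2*x + x^2) / c := by
    rw [eq_div_iff hK, ec]
    rw [hq', hy'] at hh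
    field_simp at hh
    linear_combination hh
  have h1 : 1 + x * h = a^3 * b / c := by
    rw [hh', eq_div_iff hK, add_mul, mul_assoc, div_mul_cancel₀ _ hK, ec]; ring
  have h2 : y = a^3 / c := by
    rw [hy', h1]; field_simp
  have hd2 : d = q * (1 - q * (1 + x * h) - x^2 * q * y +
        x * (x * q^2 * ((1 + x * h) + x * y - (1 + x * h) * q))) +
      p * ((1 + x * h) + x * (((1 + x * h) + x * y) * q + x^2 * y * q^2)) := by
    rw [hd]; ring
  rw [h1, h2, hq', hp'] at hd2
  rw [hd2]
  clear hd hd2 h2 hy' h1 hh' hh hy hq hp hq' hp'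
  field_simp
  rw [ec, ea, eb]
  ring

theorem field_id {L : Type*} [Field L] (x q p y h d : L)
    (hA : 1 - x ≠ 0) (hB : 1 - 2*x ≠ 0)
    (hK : (1-x)^3*(1-2*x) - x * ((1-x)*(1-2*x) + (1-x)*x - (1-x)^2*x + x^2) ≠ 0)
    (hq : (1 - x) * q = 1) (hp : (1 - 2*x) * p = 1) (hy : (1 - 2*x) * y = 1 + x * h)
    (hh : h = q * ((1 + x * h + x * y) * q - x * y + x^2 * y * q^2))
    (hd : d = q * (1 - q * (1 + x * h) - x^2 * q * y +
        x * (x * q^2 * (1 + x * y + x * h - (1 + x * h) * q))) +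
      p * (1 + x * h + x * ((1 + x * h + x * y) * q + x^2 * y * q^2))) :
    (1 - 2*x) * (1 - 6*x + 12*x^2 - 11*x^3 + 3*x^4) * (1 + x * d) =
      1 - 7*x + 18*x^2 - 21*x^3 + 11*x^4 :=
  field_aux x _ _ _ q p y h d hA hB hK rfl rfl rfl hq hp hy hh hd
theorem statement_8 :
    ((1 : PowerSeries ℚ) - 2*X) * (1 - 6*X + 12*X^2 - 11*X^3 + 3*X^4) * avoiderGF ({![2,3,0,1], ![0,3,1,2], ![1,2,3,0]} : Set (Fin 4 → Fin 4)) =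
      1 - 7*X + 18*X^2 - 21*X^3 + 11*X^4 := by
  have hF : avoiderGF TT = 1 + X * GG (.D 0) := by
    apply mk_step
    · simp [count_zero]
    · intro m; simp [count_succ, GG]
  have hne : ∀ f : PowerSeries ℚ, PowerSeries.constantCoeff f = 1 → f ≠ 0 := by
    rintro f hf rfl
    simp at hf
  have hA : (1 - X : PowerSeries ℚ) ≠ 0 := hne _ (by simp)
  have hB : (1 - 2 * X : PowerSeries ℚ) ≠ 0 := hne _ (by simp)
  have hK : ((1-X)^3*(1-2*X) - X * ((1-X)*(1-2*X) + (1-X)*X - (1-X)^2*X + X^2) :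
    PowerSeries ℚ) ≠ 0 := hne _ (by simp)
  obtain ⟨q, hq⟩ : ∃ q : PowerSeries ℚ, (1 - X) * q = 1 :=
    ⟨(1 - X)⁻¹, PowerSeries.mul_inv_cancel _ (by simp)⟩
  obtain ⟨p, hp⟩ : ∃ p : PowerSeries ℚ, (1 - 2*X) * p = 1 :=
    ⟨(1 - 2*X)⁻¹, PowerSeries.mul_inv_cancel _ (by simp)⟩
  have hd := D_form q p hq hp 0
  have hh := H_form q hq 0 0
  have hy : (1 - 2*X) * GG (.V 0 1) = 1 + X * GG (.H 0 0) := by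
    have := GV 0 1
    simp only [zero_add, Finset.sum_range_one, one_smul] at this
    linear_combination this
  simp only [Nat.cast_zero, mul_zero, add_zero, pow_zero, mul_one, zero_add, pow_one] at hd hh
  rw [show ({![2,3,0,1], ![0,3,1,2], ![1,2,3,0]} : Set (Fin 4 → Fin 4)) = TT from rfl, hF]
  generalize GG (.D 0) = d at *
  generalize GG (.V 0 1) = y at *
  generalize GG (.H 0 0) = h at *
  let φ := algebraMap (PowerSeries ℚ) (FractionRing (PowerSeries ℚ))
  have inj : Function.Injective φ := IsFractionRing.injective _ _
  have nz : ∀ f, f ≠ 0 → φ f ≠ 0 := fun f hf h0 => hf (inj (by rw [h0, map_zero]))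
  apply inj
  have hA' := nz _ hA
  have hB' := nz _ hB
  have hK' := nz _ hK
  have hq' := congrArg φ hq
  have hp' := congrArg φ hp
  have hy' := congrArg φ hy
  have hh' := congrArg φ hh
  have hd' := congrArg φ hd
  simp only [map_sub, map_mul, map_add, map_one, map_pow, map_ofNat] at hA' hB' hK' hq' hp' hy' hh' hd' ⊢
  exact field_id _ _ _ _ _ _ hA' hB' hK' hq' hp' hy' hh' hd'
end
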